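/- arXiv:1101.5224 — 3 statements merged into one kernel-verified Lean document; each statement's English description precedes it below -/
import Mathlib

section
/- Let n ≥ 2, m ≥ 1, R > 0, and let B_R(0) be the open ball of radius R centered at the origin in ℝⁿ. Let u be smooth on the closure of B_R(0) with ∫_{B_R(0)} u dx = 0 and ∂(Δ^j u)/∂n = 0 on ∂B_R(0) for all j = 0, 1, …, m−1. Then ∫_{B_R(0)} |Δ^m u|² dx ≥ μ₁(B_R(0))^{2m} · ∫_{B_R(0)} |u|² dx, and equality holds if and only if u satisfies Δu = −μ₁(B_R(0))·u in B_R(0). -/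
open MeasureTheory Set Metric

noncomputable section

/-- The Laplacian of `f` (sum of second partial derivatives), with all derivatives
taken within the set `S`. -/
def lapWithin {n : ℕ} (S : Set (EuclideanSpace ℝ (Fin n)))
    (f : EuclideanSpace ℝ (Fin n) → ℝ) (x : EuclideanSpace ℝ (Fin n)) : ℝ :=
  ∑ i : Fin n, fderivWithin ℝ
    (fun y => fderivWithin ℝ f S y (EuclideanSpace.single i 1)) S x (EuclideanSpace.single i 1)

/-- `μ` is a Neumann eigenvalue of the Laplacian on the ball `B_R(0) ⊂ ℝⁿ`: there is a nonzero
function `u`, smooth on the closed ball, with `Δu = −μ·u` in the open ball and vanishing outward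
normal (i.e. radial) derivative on the boundary sphere. -/
def IsLapNeumannEigenvalueBall (n : ℕ) (R μ : ℝ) : Prop :=
  ∃ u : EuclideanSpace ℝ (Fin n) → ℝ,
    ContDiffOn ℝ (⊤ : ℕ∞) u (closedBall 0 R) ∧
    (∃ x ∈ closedBall (0 : EuclideanSpace ℝ (Fin n)) R, u x ≠ 0) ∧
    (∀ x ∈ ball (0 : EuclideanSpace ℝ (Fin n)) R,
      lapWithin (closedBall 0 R) u x = -μ * u x) ∧
    (∀ x : EuclideanSpace ℝ (Fin n), ‖x‖ = R →
      fderivWithin ℝ u (closedBall 0 R) x (‖x‖⁻¹ • x) = 0)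

/-- `Υ` is a Neumann eigenvalue of the bi-harmonic operator `Δ²` on the ball `B_R(0) ⊂ ℝⁿ`:
there is a nonzero function `u`, smooth on the closed ball, with `Δ²u = Υ·u` in the open ball and
`∂u/∂n = ∂(Δu)/∂n = 0` on the boundary sphere. -/
def IsBiLapNeumannEigenvalueBall (n : ℕ) (R Υ : ℝ) : Prop :=
  ∃ u : EuclideanSpace ℝ (Fin n) → ℝ,
    ContDiffOn ℝ (⊤ : ℕ∞) u (closedBall 0 R) ∧
    (∃ x ∈ closedBall (0 : EuclideanSpace ℝ (Fin n)) R, u x ≠ 0) ∧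
    (∀ x ∈ ball (0 : EuclideanSpace ℝ (Fin n)) R,
      lapWithin (closedBall 0 R) (lapWithin (closedBall 0 R) u) x = Υ * u x) ∧
    (∀ x : EuclideanSpace ℝ (Fin n), ‖x‖ = R →
      fderivWithin ℝ u (closedBall 0 R) x (‖x‖⁻¹ • x) = 0) ∧
    (∀ x : EuclideanSpace ℝ (Fin n), ‖x‖ = R →
      fderivWithin ℝ (lapWithin (closedBall 0 R) u) (closedBall 0 R) x (‖x‖⁻¹ • x) = 0)

/-- `Υ` is a Neumann eigenvalue of the even-multi-Laplacian `Δ^(2m)` on the ball `B_R(0) ⊂ ℝⁿ`: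
there is a nonzero function `u`, smooth on the closed ball, with `Δ^(2m)u = Υ·u` in the open ball
and `∂(Δʲu)/∂n = 0` on the boundary sphere for every `j = 0, 1, …, 2m−1`. -/
def IsPolyLapNeumannEigenvalueBall (n m : ℕ) (R Υ : ℝ) : Prop :=
  ∃ u : EuclideanSpace ℝ (Fin n) → ℝ,
    ContDiffOn ℝ (⊤ : ℕ∞) u (closedBall 0 R) ∧
    (∃ x ∈ closedBall (0 : EuclideanSpace ℝ (Fin n)) R, u x ≠ 0) ∧
    (∀ x ∈ ball (0 : EuclideanSpace ℝ (Fin n)) R,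
      (lapWithin (closedBall 0 R))^[2 * m] u x = Υ * u x) ∧
    (∀ j < 2 * m, ∀ x : EuclideanSpace ℝ (Fin n), ‖x‖ = R →
      fderivWithin ℝ ((lapWithin (closedBall 0 R))^[j] u) (closedBall 0 R) x (‖x‖⁻¹ • x) = 0)

/-!
Green's identity on mean-zero Neumann functions gives
`∫ (Δu)² - μ² ∫ u² = ∫ (Δu + μu)² + 2μ ∫ (|∇u|² - μu²)`, so a single step of the theorem, equality
case included, is the Poincaré inequality `∫ |∇u|² ≥ μ₁ ∫ u²`; applying it to `u, Δu, …, Δᵐ⁻¹u`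
gives the bound for every `m`.

The Poincaré inequality has to come from `μ₁` being the least *classical* eigenvalue, without
spectral theory. Let `F(z)` be the Bessel series for which every dipole `⟪a, x⟫ F(μ|x|²)` solves
`Δψ = -μψ`. Its radial derivative does not vanish before the sphere when `μ ≤ μ₁`, since a zero
would produce a smaller Neumann eigenvalue; hence the dipole is a positive supersolution on the half
ball, and Picone's identity gives `∫ |∇w|² ≥ μ ∫ w²` for every `w` vanishing on a hyperplane through
the centre. Reflecting in hyperplanes then shows that symmetrizing `u` does not increase
`∫ (|∇u|² - μu²)`, which reduces the inequality to radial functions. A radial mean-zero `v` is the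
divergence of a field `G(|x|) x` vanishing on the sphere, and the hyperplane inequality applied to
the coordinates `G xᵢ` of that field yields the inequality for `v` by duality.
-/

open Filter Topology
open scoped Gradient Laplacian RealInnerProductSpace

section GradientCalculus

variable {E : Type*} [NormedAddCommGroup E] [InnerProductSpace ℝ E] [CompleteSpace E]
  {f g : E → ℝ} {f' g' x : E}

lemma norm_gradient (f : E → ℝ) (x : E) : ‖∇ f x‖ = ‖fderiv ℝ f x‖ := by
  simp only [gradient, LinearIsometryEquiv.norm_map]

lemma hasGradientAt_mul (hf : HasGradientAt f f' x) (hg : HasGradientAt g g' x) :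
    HasGradientAt (fun y => f y * g y) (f x • g' + g x • f') x := by
  rw [hasGradientAt_iff_hasFDerivAt, map_add, map_smul, map_smul]
  exact hf.hasFDerivAt.mul hg.hasFDerivAt

lemma hasGradientAt_sub (hf : HasGradientAt f f' x) (hg : HasGradientAt g g' x) :
    HasGradientAt (fun y => f y - g y) (f' - g') x := by
  rw [hasGradientAt_iff_hasFDerivAt, map_sub]
  exact hf.hasFDerivAt.sub hg.hasFDerivAt

lemma hasGradientAt_inner (a x : E) : HasGradientAt (fun y => ⟪a, y⟫) a x :=
  hasGradientAt_iff_hasFDerivAt.2 (innerSL ℝ a).hasFDerivAt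

lemma hasGradientAt_norm_sq (x : E) : HasGradientAt (fun y => ‖y‖ ^ 2) ((2 : ℝ) • x) x := by
  rw [hasGradientAt_iff_hasFDerivAt, map_smul, ofNat_smul_eq_nsmul]
  exact (hasStrictFDerivAt_norm_sq x).hasFDerivAt

lemma hasGradientAt_comp {φ : ℝ → ℝ} {φ' : ℝ} (hφ : HasDerivAt φ φ' (f x))
    (hf : HasGradientAt f f' x) : HasGradientAt (fun y => φ (f y)) (φ' • f') x := by
  rw [hasGradientAt_iff_hasFDerivAt, map_smul]
  exact hφ.comp_hasFDerivAt x hf.hasFDerivAt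

lemma contDiffOn_gradient {n : WithTop ℕ∞} {U : Set E} (hU : IsOpen U)
    (hf : ContDiffOn ℝ (n + 1) f U) : ContDiffOn ℝ n (∇ f) U :=
  (InnerProductSpace.toDual ℝ E).symm.contDiff.comp_contDiffOn
    (((contDiffOn_succ_iff_fderiv_of_isOpen hU).1 hf).2.2)

end GradientCalculus

section Divergence

variable {E : Type*} [NormedAddCommGroup E] [InnerProductSpace ℝ E] {V W : E → E} {x : E}

/-- The divergence of a vector field, as the trace of its derivative. -/
def divergence (V : E → E) (x : E) : ℝ :=
  LinearMap.trace ℝ E (fderiv ℝ V x)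

lemma divergence_eq_sum {ι : Type*} [Fintype ι] (b : OrthonormalBasis ι ℝ E) (V : E → E) (x : E) :
    divergence V x = ∑ i, ⟪b i, fderiv ℝ V x (b i)⟫ :=
  LinearMap.trace_eq_sum_inner _ b

lemma divergence_congr (h : V =ᶠ[𝓝 x] W) : divergence V x = divergence W x := by
  rw [divergence, divergence, h.fderiv_eq]

lemma divergence_const (a x : E) : divergence (fun _ : E => a) x = 0 := by
  simp only [divergence, fderiv_fun_const, Pi.zero_apply, ContinuousLinearMap.toLinearMap_zero,
    map_zero]

lemma divergence_neg (V : E → E) (x : E) : divergence (fun y => -V y) x = -divergence V x := by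
  simp only [divergence, fderiv_fun_neg, ContinuousLinearMap.toLinearMap_neg, map_neg]

lemma divergence_add (hV : DifferentiableAt ℝ V x) (hW : DifferentiableAt ℝ W x) :
    divergence (fun y => V y + W y) x = divergence V x + divergence W x := by
  simp only [divergence, fderiv_fun_add hV hW, ContinuousLinearMap.toLinearMap_add, map_add]

variable [FiniteDimensional ℝ E]

lemma divergence_id (x : E) : divergence (fun y : E => y) x = Module.finrank ℝ E := by
  rw [divergence, fderiv_fun_id]
  exact LinearMap.trace_id ℝ E

lemma divergence_gradient (f : E → ℝ) (x : E) : divergence (∇ f) x = Δ f x := by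
  have hfderiv : fderiv ℝ (∇ f) x =
      (InnerProductSpace.toDual ℝ E).symm.toContinuousLinearEquiv.toContinuousLinearMap.comp
        (fderiv ℝ (fderiv ℝ f) x) :=
    (InnerProductSpace.toDual ℝ E).symm.toContinuousLinearEquiv.comp_fderiv
  rw [divergence_eq_sum (stdOrthonormalBasis ℝ E),
    InnerProductSpace.laplacian_eq_iteratedFDeriv_stdOrthonormalBasis]
  refine Finset.sum_congr rfl fun i _ => ?_
  rw [hfderiv, iteratedFDeriv_two_apply, real_inner_comm]
  exact InnerProductSpace.toDual_symm_apply

lemma divergence_smul {f : E → ℝ} {f' : E} (hf : HasGradientAt f f' x)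
    (hW : DifferentiableAt ℝ W x) :
    divergence (fun y => f y • W y) x = f x * divergence W x + ⟪f', W x⟫ := by
  have b := stdOrthonormalBasis ℝ E
  simp only [divergence_eq_sum b, (hf.hasFDerivAt.fun_smul hW.hasFDerivAt).fderiv, add_apply,
    smul_apply, ContinuousLinearMap.smulRight_apply, InnerProductSpace.toDual_apply_apply,
    inner_add_right, real_inner_smul_right, Finset.sum_add_distrib, Finset.mul_sum]
  rw [← b.sum_inner_mul_inner f' (W x)]

variable [MeasurableSpace E] [BorelSpace E]

lemma integrable_divergence (hV : ContDiff ℝ 1 V) (hsupp : HasCompactSupport V) :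
    Integrable (divergence V) := by
  simp_rw [funext (divergence_eq_sum (stdOrthonormalBasis ℝ E) V)]
  refine integrable_finsetSum _ fun i _ => Integrable.const_inner _ ?_
  exact ((hV.continuous_fderiv one_ne_zero).clm_apply continuous_const
    ).integrable_of_hasCompactSupport (hsupp.fderiv_apply (𝕜 := ℝ) _)

lemma integral_fderiv_eq_zero {f : E → ℝ} (hf : ContDiff ℝ 1 f) (hsupp : HasCompactSupport f)
    (v : E) : ∫ x, fderiv ℝ f x v = 0 := by
  have hf' : Integrable fun x => fderiv ℝ f x v :=
    ((hf.continuous_fderiv one_ne_zero).clm_apply continuous_const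
      ).integrable_of_hasCompactSupport (hsupp.fderiv_apply (𝕜 := ℝ) v)
  have hparts := integral_mul_fderiv_eq_neg_fderiv_mul_of_integrable
    (μ := (volume : Measure E)) (f := fun _ => (1 : ℝ)) (g := f) (v := v)
    (by simp) (by simpa using hf')
    (by simpa using hf.continuous.integrable_of_hasCompactSupport hsupp)
    (fun x _ => by fun_prop) (fun x _ => hf.differentiable one_ne_zero x)
  simpa using hparts

lemma integral_divergence_eq_zero (hV : ContDiff ℝ 1 V) (hsupp : HasCompactSupport V) :
    ∫ x, divergence V x = 0 := by
  have b := stdOrthonormalBasis ℝ E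
  have hpartial : ∀ i, (fun x => ⟪b i, fderiv ℝ V x (b i)⟫) =
      fun x => fderiv ℝ (fun y => ⟪b i, V y⟫) x (b i) := fun i => funext fun x => by
    have := ((innerSL ℝ (b i)).hasFDerivAt.comp x
      (hV.differentiable one_ne_zero x).hasFDerivAt).fderiv
    exact (congrArg (· (b i)) this).symm
  have hcomp : ∀ i, ContDiff ℝ 1 fun y => ⟪b i, V y⟫ := fun i => contDiff_const.inner ℝ hV
  have hsupp' : ∀ i, HasCompactSupport fun y => ⟪b i, V y⟫ := fun i =>
    hsupp.comp_left (g := fun y => ⟪b i, y⟫) (inner_zero_right _)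
  simp_rw [divergence_eq_sum b]
  rw [integral_finsetSum]
  · refine Finset.sum_eq_zero fun i _ => ?_
    rw [hpartial]
    exact integral_fderiv_eq_zero (hcomp i) (hsupp' i) _
  · intro i _
    rw [hpartial]
    exact (((hcomp i).continuous_fderiv one_ne_zero).clm_apply continuous_const
      ).integrable_of_hasCompactSupport ((hsupp' i).fderiv_apply (𝕜 := ℝ) _)

end Divergence

section Cutoff

lemma deriv_smoothTransition_of_nonpos {t : ℝ} (ht : t ≤ 0) :
    deriv Real.smoothTransition t = 0 := by
  refine IsLocalMin.deriv_eq_zero (Eventually.of_forall fun s => ?_)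
  rw [Real.smoothTransition.zero_of_nonpos ht]
  exact Real.smoothTransition.nonneg s

lemma deriv_smoothTransition_of_one_le {t : ℝ} (ht : 1 ≤ t) :
    deriv Real.smoothTransition t = 0 := by
  refine IsLocalMax.deriv_eq_zero (Eventually.of_forall fun s => ?_)
  rw [Real.smoothTransition.one_of_one_le ht]
  exact Real.smoothTransition.le_one s

/-- A `C¹` approximation of the indicator function of `(0, ∞)`: it vanishes on `(-∞, 1 / k]` and
equals `1` on `[2 / k, ∞)`. -/
def layerCutoff (k : ℕ) (s : ℝ) : ℝ :=
  Real.smoothTransition (k * s - 1)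

variable {k : ℕ} {s : ℝ}

lemma contDiff_layerCutoff (k : ℕ) : ContDiff ℝ 1 (layerCutoff k) :=
  Real.smoothTransition.contDiff.comp (by fun_prop)

lemma layerCutoff_nonneg (k : ℕ) (s : ℝ) : 0 ≤ layerCutoff k s :=
  Real.smoothTransition.nonneg _

lemma norm_layerCutoff_le_one (k : ℕ) (s : ℝ) : ‖layerCutoff k s‖ ≤ 1 := by
  rw [Real.norm_of_nonneg (layerCutoff_nonneg k s)]
  exact Real.smoothTransition.le_one _

lemma layerCutoff_eq_zero (hs : k * s ≤ 1) : layerCutoff k s = 0 :=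
  Real.smoothTransition.zero_of_nonpos (by linarith)

lemma deriv_layerCutoff (k : ℕ) (s : ℝ) :
    deriv (layerCutoff k) s = k * deriv Real.smoothTransition (k * s - 1) := by
  have hinner : HasDerivAt (fun s : ℝ => k * s - 1) k s := by
    simpa using ((hasDerivAt_id s).const_mul (k : ℝ)).sub_const 1
  have houter : HasDerivAt Real.smoothTransition _ (k * s - 1) :=
    (Real.smoothTransition.contDiff.differentiable one_ne_zero _).hasDerivAt
  rw [mul_comm]
  exact (houter.comp s hinner).deriv

lemma deriv_layerCutoff_nonneg (k : ℕ) (s : ℝ) : 0 ≤ deriv (layerCutoff k) s := by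
  rw [deriv_layerCutoff]
  exact mul_nonneg k.cast_nonneg Real.smoothTransition.monotone.deriv_nonneg

lemma exists_norm_mul_deriv_layerCutoff_le :
    ∃ M, ∀ (k : ℕ) (s : ℝ), ‖s * deriv (layerCutoff k) s‖ ≤ M := by
  have hcont : Continuous (deriv Real.smoothTransition) :=
    (Real.smoothTransition.contDiff (n := 1)).continuous_deriv le_rfl
  have hsupp : HasCompactSupport fun t : ℝ => (t + 1) * deriv Real.smoothTransition t := by
    refine HasCompactSupport.intro (isCompact_Icc (a := 0) (b := 1)) fun t ht => ?_
    rcases le_total t 0 with h0 | h0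
    · rw [deriv_smoothTransition_of_nonpos h0, mul_zero]
    · have h1 : 1 ≤ t := le_of_not_ge fun h1 => ht ⟨h0, h1⟩
      rw [deriv_smoothTransition_of_one_le h1, mul_zero]
  obtain ⟨M, hM⟩ := hsupp.exists_bound_of_continuous
    ((continuous_id.add continuous_const).mul hcont)
  refine ⟨M, fun k s => ?_⟩
  rw [deriv_layerCutoff]
  simpa only [sub_add_cancel, mul_left_comm, mul_assoc] using hM (k * s - 1)

lemma eventually_layerCutoff_eq_one (hs : 0 < s) : ∀ᶠ k in atTop, layerCutoff k s = 1 := by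
  filter_upwards [eventually_ge_atTop ⌈2 / s⌉₊] with k hk
  have hks : 2 ≤ k * s := (div_le_iff₀ hs).1 (Nat.ceil_le.1 hk)
  exact Real.smoothTransition.one_of_one_le (by linarith)

lemma eventually_deriv_layerCutoff_eq_zero (hs : 0 < s) :
    ∀ᶠ k in atTop, deriv (layerCutoff k) s = 0 := by
  filter_upwards [eventually_ge_atTop ⌈2 / s⌉₊] with k hk
  have hks : 2 ≤ k * s := (div_le_iff₀ hs).1 (Nat.ceil_le.1 hk)
  rw [deriv_layerCutoff, deriv_smoothTransition_of_one_le (by linarith), mul_zero]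

end Cutoff

section SuperlevelDivergence

variable {E : Type*} [NormedAddCommGroup E] {d : E → ℝ} {W : E → E}

lemma tsupport_comp_smul_subset [NormedSpace ℝ E] {θ : ℝ → ℝ} {ε : ℝ} (hθ : ∀ s ≤ ε, θ s = 0)
    (hd : Continuous d) (W : E → E) : tsupport (fun x => θ (d x) • W x) ⊆ {x | ε ≤ d x} := by
  refine closure_minimal (fun x hx => ?_) (isClosed_le continuous_const hd)
  by_contra hlt
  exact hx (by simp only [hθ _ (not_le.1 hlt).le, zero_smul])

variable [InnerProductSpace ℝ E] [FiniteDimensional ℝ E] [MeasurableSpace E] [BorelSpace E]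

lemma integral_superlevel_comp_divergence_eq_zero {θ : ℝ → ℝ} {ε : ℝ} (hε : 0 < ε)
    (hθ : ContDiff ℝ 1 θ) (hθε : ∀ s ≤ ε, θ s = 0) (hd : ContDiff ℝ 1 d)
    (hbdd : Bornology.IsBounded {x | 0 < d x}) (hW : ContDiffOn ℝ 1 W {x | 0 < d x}) :
    IntegrableOn (fun x => θ (d x) * divergence W x + deriv θ (d x) * ⟪∇ d x, W x⟫)
      {x | 0 < d x} ∧
    ∫ x in {x | 0 < d x}, (θ (d x) * divergence W x + deriv θ (d x) * ⟪∇ d x, W x⟫) = 0 := by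
  have hopen : IsOpen {x | 0 < d x} := isOpen_lt continuous_const hd.continuous
  have htsupp := tsupport_comp_smul_subset hθε hd.continuous W
  have hsub : tsupport (fun x => θ (d x) • W x) ⊆ {x | 0 < d x} :=
    htsupp.trans fun x hx => hε.trans_le hx
  have hsupp : HasCompactSupport fun x => θ (d x) • W x :=
    isCompact_of_isClosed_isBounded (isClosed_tsupport _) (hbdd.subset hsub)
  have hsmooth : ContDiff ℝ 1 fun x => θ (d x) • W x :=
    contMDiff_iff_contDiff.1 <| contMDiff_of_tsupport fun x hx => contMDiffAt_iff_contDiffAt.2 <|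
      (hθ.comp hd).contDiffAt.smul (hW.contDiffAt (hopen.mem_nhds (hsub hx)))
  have hdiv : EqOn (divergence fun x => θ (d x) • W x)
      (fun x => θ (d x) * divergence W x + deriv θ (d x) * ⟪∇ d x, W x⟫) {x | 0 < d x} := by
    intro x hx
    have hgrad := hasGradientAt_comp (hθ.differentiable one_ne_zero (d x)).hasDerivAt
      (hd.differentiable one_ne_zero x).hasGradientAt
    rw [divergence_smul hgrad
      ((hW.contDiffAt (hopen.mem_nhds hx)).differentiableAt one_ne_zero), real_inner_smul_left]
  have hzero : ∀ x ∉ {x | 0 < d x}, divergence (fun x => θ (d x) • W x) x = 0 := by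
    intro x hx
    have hlocal : (fun x => θ (d x) • W x) =ᶠ[𝓝 x] fun _ => 0 :=
      notMem_tsupport_iff_eventuallyEq.1 fun h => hx (hsub h)
    rw [divergence_congr hlocal, divergence_const]
  refine ⟨(integrable_divergence hsmooth hsupp).integrableOn.congr_fun hdiv hopen.measurableSet,
    ?_⟩
  rw [← setIntegral_congr_fun hopen.measurableSet hdiv,
    setIntegral_eq_integral_of_forall_compl_eq_zero hzero]
  exact integral_divergence_eq_zero hsmooth hsupp

lemma setIntegral_superlevel_layerCutoff_nonneg {h : E → ℝ} {C : ℝ} {k : ℕ} (hk : 0 < k)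
    (hd : ContDiff ℝ 1 d) (hbdd : Bornology.IsBounded {x | 0 < d x})
    (hW : ContDiffOn ℝ 1 W {x | 0 < d x}) (hint : IntegrableOn h {x | 0 < d x})
    (hdiv : ∀ x, 0 < d x → divergence W x ≤ h x)
    (hflux : ∀ x, 0 < d x → ⟪∇ d x, W x⟫ ≤ C * d x) :
    0 ≤ ∫ x in {x | 0 < d x},
      (layerCutoff k (d x) * h x + C * (d x * deriv (layerCutoff k) (d x))) := by
  have hk' : (0 : ℝ) < k := Nat.cast_pos.2 hk
  have hcont := hd.continuous
  have hcutoff := contDiff_layerCutoff k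
  have hlayer : Continuous fun x => C * (d x * deriv (layerCutoff k) (d x)) :=
    continuous_const.mul (hcont.mul ((hcutoff.continuous_deriv le_rfl).comp hcont))
  obtain ⟨hint_k, hzero⟩ := integral_superlevel_comp_divergence_eq_zero (ε := 1 / (k : ℝ))
    (by positivity) hcutoff (fun s hs => layerCutoff_eq_zero ((le_div_iff₀' hk').1 hs)) hd hbdd hW
  refine hzero.ge.trans (setIntegral_mono_on hint_k (.add ?_ ?_)
    (isOpen_lt continuous_const hcont).measurableSet fun x hx => ?_)
  · exact hint.bdd_mul (hcutoff.continuous.comp hcont).aestronglyMeasurable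
      (Eventually.of_forall fun x => norm_layerCutoff_le_one k (d x))
  · exact (hlayer.continuousOn.integrableOn_compact hbdd.isCompact_closure).mono_set subset_closure
  · have := mul_le_mul_of_nonneg_left (hdiv x hx) (layerCutoff_nonneg k (d x))
    have := mul_le_mul_of_nonneg_left (hflux x hx) (deriv_layerCutoff_nonneg k (d x))
    linarith

/-- The idea is that the flux of `W` through the level sets `{d = ε}`, whose inner normal points
along `∇ d`, is at most of order `ε`. -/
theorem setIntegral_superlevel_nonneg_of_divergence_le {h : E → ℝ} {C : ℝ}
    (hd : ContDiff ℝ 1 d) (hbdd : Bornology.IsBounded {x | 0 < d x})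
    (hW : ContDiffOn ℝ 1 W {x | 0 < d x}) (hint : IntegrableOn h {x | 0 < d x})
    (hdiv : ∀ x, 0 < d x → divergence W x ≤ h x)
    (hflux : ∀ x, 0 < d x → ⟪∇ d x, W x⟫ ≤ C * d x) :
    0 ≤ ∫ x in {x | 0 < d x}, h x := by
  obtain ⟨M, hM⟩ := exists_norm_mul_deriv_layerCutoff_le
  have hcutoff : ∀ k, Continuous fun x => layerCutoff k (d x) := fun k =>
    (contDiff_layerCutoff k).continuous.comp hd.continuous
  have hlayer : ∀ k, Continuous fun x => C * (d x * deriv (layerCutoff k) (d x)) := fun k =>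
    continuous_const.mul (hd.continuous.mul
      (((contDiff_layerCutoff k).continuous_deriv le_rfl).comp hd.continuous))
  have hbound : ∀ k x, ‖layerCutoff k (d x) * h x + C * (d x * deriv (layerCutoff k) (d x))‖ ≤
      ‖h x‖ + ‖C‖ * M := by
    refine fun k x => (norm_add_le _ _).trans (add_le_add ?_ ?_)
    · rw [norm_mul]
      exact mul_le_of_le_one_left (norm_nonneg _) (norm_layerCutoff_le_one k (d x))
    · rw [norm_mul C]
      exact mul_le_mul_of_nonneg_left (hM k (d x)) (norm_nonneg C)
  have hlim : Tendsto (fun k => ∫ x in {x | 0 < d x},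
      (layerCutoff k (d x) * h x + C * (d x * deriv (layerCutoff k) (d x)))) atTop
      (𝓝 (∫ x in {x | 0 < d x}, h x)) := by
    refine tendsto_integral_of_dominated_convergence (fun x => ‖h x‖ + ‖C‖ * M)
      (fun k => ((hcutoff k).aestronglyMeasurable.mul hint.aestronglyMeasurable).add
        (hlayer k).aestronglyMeasurable)
      (hint.norm.add (integrableOn_const hbdd.measure_lt_top.ne))
      (fun k => Eventually.of_forall (hbound k)) ?_
    filter_upwards [ae_restrict_mem (isOpen_lt continuous_const hd.continuous).measurableSet]
      with x hx
    refine tendsto_const_nhds.congr' ?_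
    filter_upwards [eventually_layerCutoff_eq_one hx, eventually_deriv_layerCutoff_eq_zero hx]
      with k hone hzero
    simp only [hone, hzero, one_mul, mul_zero, add_zero]
  refine ge_of_tendsto hlim ((eventually_gt_atTop 0).mono fun k hk => ?_)
  exact setIntegral_superlevel_layerCutoff_nonneg hk hd hbdd hW hint hdiv hflux

end SuperlevelDivergence

section BoundedContOn

variable {X F : Type*} [TopologicalSpace X] [NormedAddCommGroup F] {f g : X → F} {s : Set X}

/-- Bounded continuous functions on a set. -/
def BoundedContOn (f : X → F) (s : Set X) : Prop :=
  ContinuousOn f s ∧ ∃ C, ∀ x ∈ s, ‖f x‖ ≤ C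

namespace BoundedContOn

lemma continuousOn (hf : BoundedContOn f s) : ContinuousOn f s :=
  hf.1

lemma exists_bound (hf : BoundedContOn f s) : ∃ C, 0 ≤ C ∧ ∀ x ∈ s, ‖f x‖ ≤ C := by
  obtain ⟨C, hC⟩ := hf.2
  exact ⟨max C 0, le_max_right _ _, fun x hx => (hC x hx).trans (le_max_left _ _)⟩

lemma congr (hf : BoundedContOn f s) (h : EqOn g f s) : BoundedContOn g s :=
  ⟨hf.1.congr h, hf.2.imp fun _ hC x hx => h hx ▸ hC x hx⟩

lemma mono {t : Set X} (hf : BoundedContOn f s) (h : t ⊆ s) : BoundedContOn f t :=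
  ⟨hf.1.mono h, hf.2.imp fun _ hC x hx => hC x (h hx)⟩

lemma comp {Y : Type*} [TopologicalSpace Y] {φ : Y → X} {t : Set Y} (hf : BoundedContOn f s)
    (hφ : ContinuousOn φ t) (hmaps : MapsTo φ t s) : BoundedContOn (fun y => f (φ y)) t :=
  ⟨hf.1.comp hφ hmaps, hf.2.imp fun _ hC _ hy => hC _ (hmaps hy)⟩

lemma const (c : F) : BoundedContOn (fun _ : X => c) s :=
  ⟨continuousOn_const, ‖c‖, fun _ _ => le_rfl⟩

lemma add (hf : BoundedContOn f s) (hg : BoundedContOn g s) :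
    BoundedContOn (fun x => f x + g x) s := by
  obtain ⟨A, hA⟩ := hf.2
  obtain ⟨B, hB⟩ := hg.2
  exact ⟨hf.1.add hg.1, A + B, fun x hx => norm_add_le_of_le (hA x hx) (hB x hx)⟩

lemma sub (hf : BoundedContOn f s) (hg : BoundedContOn g s) :
    BoundedContOn (fun x => f x - g x) s := by
  obtain ⟨A, hA⟩ := hf.2
  obtain ⟨B, hB⟩ := hg.2
  exact ⟨hf.1.sub hg.1, A + B, fun x hx => norm_sub_le_of_le (hA x hx) (hB x hx)⟩

lemma smul [NormedSpace ℝ F] {a : X → ℝ} (ha : BoundedContOn a s) (hf : BoundedContOn f s) :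
    BoundedContOn (fun x => a x • f x) s := by
  obtain ⟨A, -, hA⟩ := ha.exists_bound
  obtain ⟨B, -, hB⟩ := hf.exists_bound
  refine ⟨ha.1.smul hf.1, A * B, fun x hx => ?_⟩
  rw [norm_smul]
  exact mul_le_mul (hA x hx) (hB x hx) (norm_nonneg _) ((norm_nonneg _).trans (hA x hx))

lemma mul {a b : X → ℝ} (ha : BoundedContOn a s) (hb : BoundedContOn b s) :
    BoundedContOn (fun x => a x * b x) s :=
  ha.smul hb

lemma sq {a : X → ℝ} (ha : BoundedContOn a s) : BoundedContOn (fun x => a x ^ 2) s := by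
  simpa only [pow_two] using ha.mul ha

lemma norm (hf : BoundedContOn f s) : BoundedContOn (fun x => ‖f x‖) s :=
  ⟨hf.1.norm, by simpa only [norm_norm] using hf.2⟩

lemma inner [InnerProductSpace ℝ F] (hf : BoundedContOn f s) (hg : BoundedContOn g s) :
    BoundedContOn (fun x => ⟪f x, g x⟫) s := by
  obtain ⟨A, -, hA⟩ := hf.exists_bound
  obtain ⟨B, -, hB⟩ := hg.exists_bound
  exact ⟨hf.1.inner hg.1, A * B, fun x hx => (norm_inner_le_norm _ _).trans
    (mul_le_mul (hA x hx) (hB x hx) (norm_nonneg _) ((norm_nonneg _).trans (hA x hx)))⟩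

lemma integrableOn [MeasurableSpace X] [OpensMeasurableSpace X] [SecondCountableTopologyEither X F]
    {μ : Measure X} (hf : BoundedContOn f s) (hs : MeasurableSet s) (hμ : μ s ≠ ⊤) :
    IntegrableOn f s μ := by
  obtain ⟨C, hC⟩ := hf.2
  exact IntegrableOn.of_bound hμ.lt_top (hf.1.aestronglyMeasurable hs) C
    ((ae_restrict_mem hs).mono hC)

end BoundedContOn

lemma boundedContOn_of_isCompact {K : Set X} (hK : IsCompact K) (hf : ContinuousOn f K) :
    BoundedContOn f K :=
  ⟨hf, hK.exists_bound_of_continuousOn hf⟩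

lemma boundedContOn_id {s : Set F} (hs : Bornology.IsBounded s) : BoundedContOn (fun x => x) s :=
  ⟨continuousOn_id, hs.exists_norm_le⟩

end BoundedContOn

section BoundedC1On

variable {E : Type*} [NormedAddCommGroup E] [InnerProductSpace ℝ E] [CompleteSpace E]
  {u v : E → ℝ} {U : Set E}

/-- Functions that are `C¹` and bounded together with their gradient on a set. On a ball these form
the class of test functions for the Neumann problem. -/
structure BoundedC1On (u : E → ℝ) (U : Set E) : Prop where
  differentiableAt : ∀ x ∈ U, DifferentiableAt ℝ u x
  boundedContOn : BoundedContOn u U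
  boundedContOn_gradient : BoundedContOn (∇ u) U

namespace BoundedC1On

lemma of_hasGradientAt {u' : E → E} (hgrad : ∀ x ∈ U, HasGradientAt u (u' x) x)
    (hu : BoundedContOn u U) (hu' : BoundedContOn u' U) : BoundedC1On u U :=
  ⟨fun x hx => (hgrad x hx).differentiableAt, hu, hu'.congr fun x hx => (hgrad x hx).gradient⟩

lemma hasGradientAt (hu : BoundedC1On u U) {x : E} (hx : x ∈ U) : HasGradientAt u (∇ u x) x :=
  (hu.differentiableAt x hx).hasGradientAt

lemma contDiffOn (hu : BoundedC1On u U) (hU : IsOpen U) : ContDiffOn ℝ 1 u U := by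
  rw [← zero_add (1 : WithTop ℕ∞), contDiffOn_succ_iff_fderiv_of_isOpen hU]
  refine ⟨fun x hx => (hu.differentiableAt x hx).differentiableWithinAt, by simp, ?_⟩
  rw [contDiffOn_zero]
  exact (InnerProductSpace.toDual ℝ E).continuous.comp_continuousOn
    hu.boundedContOn_gradient.continuousOn |>.congr fun x _ => toDual_gradient.symm

lemma sub (hu : BoundedC1On u U) (hv : BoundedC1On v U) :
    BoundedC1On (fun x => u x - v x) U :=
  of_hasGradientAt (fun _ hx => hasGradientAt_sub (hu.hasGradientAt hx) (hv.hasGradientAt hx))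
    (hu.boundedContOn.sub hv.boundedContOn)
    (hu.boundedContOn_gradient.sub hv.boundedContOn_gradient)

lemma mul (hu : BoundedC1On u U) (hv : BoundedC1On v U) :
    BoundedC1On (fun x => u x * v x) U :=
  of_hasGradientAt (fun _ hx => hasGradientAt_mul (hu.hasGradientAt hx) (hv.hasGradientAt hx))
    (hu.boundedContOn.mul hv.boundedContOn)
    ((hu.boundedContOn.smul hv.boundedContOn_gradient).add
      (hv.boundedContOn.smul hu.boundedContOn_gradient))

lemma exists_lipschitzOnWith (hu : BoundedC1On u U) (hU : Convex ℝ U) :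
    ∃ K, LipschitzOnWith K u U := by
  obtain ⟨C, hC⟩ := hu.boundedContOn_gradient.2
  refine ⟨C.toNNReal,
    hU.lipschitzOnWith_of_nnnorm_fderiv_le hu.differentiableAt fun x hx => ?_⟩
  rw [← norm_toNNReal, ← norm_gradient]
  exact Real.toNNReal_le_toNNReal (hC x hx)

end BoundedC1On

lemma boundedC1On_const (c : ℝ) : BoundedC1On (fun _ : E => c) U :=
  .of_hasGradientAt (fun x _ => hasGradientAt_const x c) (.const c) (.const 0)

lemma boundedC1On_inner (a : E) (hU : Bornology.IsBounded U) :
    BoundedC1On (fun x => ⟪a, x⟫) U :=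
  .of_hasGradientAt (fun x _ => hasGradientAt_inner a x) ((BoundedContOn.const a).inner
    (boundedContOn_id hU)) (.const a)

/-- The integrand of the Dirichlet form of `-Δ - μ`. -/
def neumannDensity (μ : ℝ) (u v : E → ℝ) (x : E) : ℝ :=
  ⟪∇ u x, ∇ v x⟫ - μ * (u x * v x)

lemma neumannDensity_self (μ : ℝ) (u : E → ℝ) (x : E) :
    neumannDensity μ u u x = ‖∇ u x‖ ^ 2 - μ * u x ^ 2 := by
  rw [neumannDensity, real_inner_self_eq_norm_sq, ← sq]

lemma neumannDensity_sub_self (μ : ℝ) {x : E} (hu : DifferentiableAt ℝ u x)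
    (hv : DifferentiableAt ℝ v x) :
    neumannDensity μ (fun y => u y - v y) (fun y => u y - v y) x =
      neumannDensity μ u u x - 2 * neumannDensity μ u v x + neumannDensity μ v v x := by
  simp only [neumannDensity, (hasGradientAt_sub hu.hasGradientAt hv.hasGradientAt).gradient,
    inner_sub_left, inner_sub_right, real_inner_comm (∇ v x) (∇ u x)]
  ring

lemma BoundedC1On.neumannDensity (μ : ℝ) (hu : BoundedC1On u U) (hv : BoundedC1On v U) :
    BoundedContOn (neumannDensity μ u v) U :=
  (hu.boundedContOn_gradient.inner hv.boundedContOn_gradient).sub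
    ((BoundedContOn.const μ).mul (hu.boundedContOn.mul hv.boundedContOn))

end BoundedC1On

section NeumannForm

variable {E : Type*} [NormedAddCommGroup E] [InnerProductSpace ℝ E] [FiniteDimensional ℝ E]
  [MeasurableSpace E] [BorelSpace E] {u v : E → ℝ} {U : Set E}

/-- The Dirichlet form of `-Δ - μ` on `U`. It is nonnegative on the mean-zero functions if and only
if `μ` is at most the first nonzero Neumann eigenvalue of `U`. -/
def neumannForm (μ : ℝ) (U : Set E) (u v : E → ℝ) : ℝ :=
  ∫ x in U, neumannDensity μ u v x

lemma neumannForm_comm (μ : ℝ) (U : Set E) (u v : E → ℝ) :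
    neumannForm μ U u v = neumannForm μ U v u := by
  simp only [neumannForm, neumannDensity, real_inner_comm, mul_comm]

lemma neumannForm_sub_self (μ : ℝ) (hU : MeasurableSet U) (hfin : volume U ≠ ⊤)
    (hu : BoundedC1On u U) (hv : BoundedC1On v U) :
    neumannForm μ U (fun x => u x - v x) (fun x => u x - v x) =
      neumannForm μ U u u - 2 * neumannForm μ U u v + neumannForm μ U v v := by
  have huu := (hu.neumannDensity μ hu).integrableOn (μ := volume) hU hfin
  have huv := (hu.neumannDensity μ hv).integrableOn (μ := volume) hU hfin
  have hvv := (hv.neumannDensity μ hv).integrableOn (μ := volume) hU hfin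
  simp only [neumannForm]
  rw [setIntegral_congr_fun hU fun x hx =>
      neumannDensity_sub_self μ (hu.differentiableAt x hx) (hv.differentiableAt x hx),
    ← integral_const_mul, ← integral_sub huu (huv.const_mul 2)]
  exact integral_add (huu.sub (huv.const_mul 2)) hvv

end NeumannForm

section Averages

open Function

variable {T X F : Type*} [TopologicalSpace T] [TopologicalSpace X] [NormedAddCommGroup F]
  {k : T → X → F} {s : Set X}

namespace BoundedContOn

lemma slice_left (hk : BoundedContOn (uncurry k) (univ ×ˢ s)) (t : T) : BoundedContOn (k t) s :=
  hk.comp (φ := fun x => (t, x)) (by fun_prop) fun _ hx => ⟨mem_univ t, hx⟩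

lemma slice_right (hk : BoundedContOn (uncurry k) (univ ×ˢ s)) {x : X} (hx : x ∈ s) :
    BoundedContOn (fun t => k t x) univ :=
  hk.comp (φ := fun t => (t, x)) (by fun_prop) fun t _ => ⟨mem_univ t, hx⟩

variable [MeasurableSpace T] [OpensMeasurableSpace T] [SecondCountableTopology F] {ν : Measure T}
  [IsFiniteMeasure ν]

lemma integrable_slice_right (hk : BoundedContOn (uncurry k) (univ ×ˢ s)) {x : X} (hx : x ∈ s) :
    Integrable (fun t => k t x) ν :=
  integrableOn_univ.1 ((hk.slice_right hx).integrableOn .univ (measure_ne_top ν _))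

lemma integrable_prod [MeasurableSpace X] [OpensMeasurableSpace X]
    [SecondCountableTopology X] {μ : Measure X} [SFinite μ]
    (hk : BoundedContOn (uncurry k) (univ ×ˢ s)) (hs : MeasurableSet s) (hμ : μ s ≠ ⊤) :
    Integrable (uncurry k) (ν.prod (μ.restrict s)) := by
  have hprod : ν.prod (μ.restrict s) = (ν.prod μ).restrict (univ ×ˢ s) := by
    rw [← Measure.prod_restrict, Measure.restrict_univ]
  rw [hprod]
  refine hk.integrableOn (MeasurableSet.univ.prod hs) ?_
  rw [Measure.prod_prod]
  exact ENNReal.mul_ne_top (measure_ne_top ν _) hμ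

variable [NormedSpace ℝ F]

lemma integral_right [FirstCountableTopology X] (hk : BoundedContOn (uncurry k) (univ ×ˢ s)) :
    BoundedContOn (fun x => ∫ t, k t x ∂ν) s := by
  obtain ⟨C, hC⟩ := hk.2
  refine ⟨continuousOn_of_dominated (bound := fun _ => C)
    (fun x hx => (hk.integrable_slice_right hx).aestronglyMeasurable)
    (fun x hx => ae_of_all _ fun t => hC (t, x) ⟨mem_univ t, hx⟩) (integrable_const C)
    (ae_of_all _ fun t => (hk.slice_left t).continuousOn), C * ν.real univ, fun x hx => ?_⟩
  exact norm_integral_le_of_norm_le_const (ae_of_all _ fun t => hC (t, x) ⟨mem_univ t, hx⟩)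

end BoundedContOn

variable {E : Type*} [NormedAddCommGroup E] [InnerProductSpace ℝ E] {f : T → E → ℝ} {U : Set E}

/-- Families of functions to which `BoundedC1On` applies uniformly and jointly continuously in the
parameter, so that they may be averaged over the parameter. -/
structure BoundedC1Family [CompleteSpace E] (f : T → E → ℝ) (U : Set E) : Prop where
  differentiableAt : ∀ t, ∀ x ∈ U, DifferentiableAt ℝ (f t) x
  boundedContOn : BoundedContOn (uncurry f) (univ ×ˢ U)
  boundedContOn_gradient : BoundedContOn (uncurry fun t => ∇ (f t)) (univ ×ˢ U)

variable [FiniteDimensional ℝ E]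

lemma boundedC1Family_mul_comp {ω : T → ℝ} (hω : BoundedContOn ω univ) {L : T → E →L[ℝ] E}
    (hL : Continuous L) (hLU : ∀ t, MapsTo (L t) U U) (hLbdd : ∃ C, ∀ t, ‖L t‖ ≤ C) {u : E → ℝ}
    (hu : BoundedC1On u U) : BoundedC1Family (fun t x => ω t * u (L t x)) U := by
  have hgrad : ∀ t, ∀ x ∈ U, HasGradientAt (fun y => ω t * u (L t y))
      (ω t • ContinuousLinearMap.adjoint (L t) (∇ u (L t x))) x := by
    intro t x hx
    rw [hasGradientAt_iff_hasFDerivAt, map_smul]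
    have hdual : InnerProductSpace.toDual ℝ E (ContinuousLinearMap.adjoint (L t) (∇ u (L t x))) =
        (InnerProductSpace.toDual ℝ E (∇ u (L t x))).comp (L t) :=
      ContinuousLinearMap.ext fun y => ContinuousLinearMap.adjoint_inner_left (L t) y _
    rw [hdual]
    exact ((hu.hasGradientAt (hLU t hx)).hasFDerivAt.comp x (L t).hasFDerivAt).const_mul (ω t)
  have hcont : ContinuousOn (fun p : T × E => L p.1 p.2) (univ ×ˢ U) := by fun_prop
  have hmaps : MapsTo (fun p : T × E => L p.1 p.2) (univ ×ˢ U) U := fun p hp => hLU p.1 hp.2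
  have hω' : BoundedContOn (fun p : T × E => ω p.1) (univ ×ˢ U) :=
    hω.comp continuousOn_fst fun p _ => mem_univ p.1
  refine ⟨fun t x hx => (hgrad t x hx).differentiableAt,
    hω'.mul (hu.boundedContOn.comp hcont hmaps),
    (hω'.smul ?_).congr fun p hp => (hgrad p.1 p.2 hp.2).gradient⟩
  have hgradu := hu.boundedContOn_gradient.comp hcont hmaps
  obtain ⟨A, hA⟩ := hLbdd
  obtain ⟨B, -, hB⟩ := hgradu.exists_bound
  refine ⟨((ContinuousLinearMap.adjoint.continuous.comp hL).comp_continuousOn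
    continuousOn_fst).clm_apply hgradu.continuousOn, A * B, fun p hp => ?_⟩
  calc ‖ContinuousLinearMap.adjoint (L p.1) (∇ u (L p.1 p.2))‖
      ≤ ‖ContinuousLinearMap.adjoint (L p.1)‖ * ‖∇ u (L p.1 p.2)‖ :=
        ContinuousLinearMap.le_opNorm _ _
    _ ≤ A * B := by
        rw [LinearIsometryEquiv.norm_map]
        exact mul_le_mul (hA p.1) (hB p hp) (norm_nonneg _) ((norm_nonneg _).trans (hA p.1))

namespace BoundedC1Family

lemma boundedContOn_neumannDensity (hf : BoundedC1Family f U) {w : E → ℝ} (hw : BoundedC1On w U)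
    (μ : ℝ) : BoundedContOn (uncurry fun t => neumannDensity μ w (f t)) (univ ×ˢ U) := by
  have hsnd : ContinuousOn (Prod.snd : T × E → E) (univ ×ˢ U) := continuousOn_snd
  have hmaps : MapsTo (Prod.snd : T × E → E) (univ ×ˢ U) U := fun p hp => hp.2
  exact ((hw.boundedContOn_gradient.comp hsnd hmaps).inner hf.boundedContOn_gradient).sub
    ((BoundedContOn.const μ).mul ((hw.boundedContOn.comp hsnd hmaps).mul hf.boundedContOn))

variable [MeasurableSpace T] [OpensMeasurableSpace T] {ν : Measure T} [IsFiniteMeasure ν]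

lemma hasGradientAt_integral (hf : BoundedC1Family f U) (hU : IsOpen U) {x : E} (hx : x ∈ U) :
    HasGradientAt (fun x => ∫ t, f t x ∂ν) (∫ t, ∇ (f t) x ∂ν) x := by
  obtain ⟨C, hC⟩ := hf.boundedContOn_gradient.2
  have hfderiv : (fun t => fderiv ℝ (f t) x) =
      fun t => InnerProductSpace.toDual ℝ E (∇ (f t) x) := by
    simp only [toDual_gradient]
  have hint := hf.boundedContOn_gradient.integrable_slice_right (ν := ν) hx
  have key := hasFDerivAt_integral_of_dominated_of_fderiv_le (μ := ν) (F := fun x t => f t x)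
    (F' := fun x t => fderiv ℝ (f t) x) (bound := fun _ => C) (hU.mem_nhds hx) ?_
    (hf.boundedContOn.integrable_slice_right hx) ?_ ?_ (integrable_const C)
    (ae_of_all _ fun t y hy => (hf.differentiableAt t y hy).hasFDerivAt)
  · have hdual := (InnerProductSpace.toDual ℝ E).toContinuousLinearEquiv.integral_comp_comm
      (μ := ν) fun t => ∇ (f t) x
    rw [hasGradientAt_iff_hasFDerivAt]
    rw [hfderiv] at key
    exact hdual ▸ key
  · filter_upwards [hU.mem_nhds hx] with y hy
    exact (hf.boundedContOn.integrable_slice_right hy).aestronglyMeasurable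
  · rw [hfderiv]
    exact (InnerProductSpace.toDual ℝ E).continuous.comp_aestronglyMeasurable
      hint.aestronglyMeasurable
  · refine ae_of_all _ fun t y hy => ?_
    rw [← norm_gradient]
    exact hC (t, y) ⟨mem_univ t, hy⟩

lemma integral (hf : BoundedC1Family f U) (hU : IsOpen U) :
    BoundedC1On (fun x => ∫ t, f t x ∂ν) U :=
  .of_hasGradientAt (fun _ hx => hf.hasGradientAt_integral hU hx) hf.boundedContOn.integral_right
    hf.boundedContOn_gradient.integral_right

variable [MeasurableSpace E] [BorelSpace E]

lemma integrable_neumannForm_right (hf : BoundedC1Family f U) (hU : IsOpen U)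
    (hfin : volume U ≠ ⊤) {w : E → ℝ} (hw : BoundedC1On w U) (μ : ℝ) :
    Integrable (fun t => neumannForm μ U w (f t)) ν :=
  ((hf.boundedContOn_neumannDensity hw μ).integrable_prod hU.measurableSet hfin).integral_prod_left

lemma neumannForm_integral_right (hf : BoundedC1Family f U) (hU : IsOpen U)
    (hfin : volume U ≠ ⊤) {w : E → ℝ} (hw : BoundedC1On w U) (μ : ℝ) :
    neumannForm μ U w (fun x => ∫ t, f t x ∂ν) = ∫ t, neumannForm μ U w (f t) ∂ν := by
  have hswap := integral_integral_swap (μ := ν)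
    ((hf.boundedContOn_neumannDensity hw μ).integrable_prod hU.measurableSet hfin)
  refine .trans (setIntegral_congr_fun hU.measurableSet fun x hx => ?_) hswap.symm
  have hgrad := hf.boundedContOn_gradient.integrable_slice_right (ν := ν) hx
  have hval := hf.boundedContOn.integrable_slice_right (ν := ν) hx
  simp only [neumannDensity, (hf.hasGradientAt_integral hU hx).gradient]
  rw [← integral_inner hgrad, ← integral_const_mul, ← integral_const_mul]
  exact (integral_sub (hgrad.const_inner _) ((hval.const_mul _).const_mul _)).symm

end BoundedC1Family

end Averages

section IsometryInvariance

variable {E : Type*} [NormedAddCommGroup E] [InnerProductSpace ℝ E] {u : E → ℝ} {R : ℝ}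

lemma mapsTo_ball_linearIsometryEquiv (g : E ≃ₗᵢ[ℝ] E) : MapsTo g (ball 0 R) (ball 0 R) :=
  fun x hx => by simpa using hx

variable [CompleteSpace E]

lemma hasGradientAt_comp_linearIsometryEquiv (g : E ≃ₗᵢ[ℝ] E) {x u' : E}
    (hu : HasGradientAt u u' (g x)) : HasGradientAt (fun y => u (g y)) (g.symm u') x := by
  have hdual : InnerProductSpace.toDual ℝ E (g.symm u') =
      (InnerProductSpace.toDual ℝ E u').comp (g : E →L[ℝ] E) :=
    ContinuousLinearMap.ext fun y => by simp [← g.inner_map_map (g.symm u')]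
  rw [hasGradientAt_iff_hasFDerivAt, hdual]
  exact hu.hasFDerivAt.comp x (g : E ≃L[ℝ] E).hasFDerivAt

lemma BoundedC1On.comp_linearIsometryEquiv (hu : BoundedC1On u (ball 0 R)) (g : E ≃ₗᵢ[ℝ] E) :
    BoundedC1On (fun x => u (g x)) (ball 0 R) := by
  have hmaps := mapsTo_ball_linearIsometryEquiv (R := R) g
  have hgrad := hu.boundedContOn_gradient.comp g.continuous.continuousOn hmaps
  refine .of_hasGradientAt
    (fun x hx => hasGradientAt_comp_linearIsometryEquiv g (hu.hasGradientAt (hmaps hx)))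
    (hu.boundedContOn.comp g.continuous.continuousOn hmaps)
    ⟨g.symm.continuous.comp_continuousOn hgrad.continuousOn, ?_⟩
  simpa only [g.symm.norm_map] using hgrad.2

end IsometryInvariance

section Symmetrization

variable {E : Type*} [NormedAddCommGroup E] [InnerProductSpace ℝ E] {u v : E → ℝ} {S : Set E}
  {μ R : ℝ}

lemma neumannForm_comp_linearIsometryEquiv [FiniteDimensional ℝ E] [MeasurableSpace E]
    [BorelSpace E] (μ : ℝ) (hu : BoundedC1On u (ball 0 R)) (hv : BoundedC1On v (ball 0 R))
    (g : E ≃ₗᵢ[ℝ] E) :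
    neumannForm μ (ball 0 R) (fun x => u (g x)) (fun x => v (g x)) =
      neumannForm μ (ball 0 R) u v := by
  have hball : g ⁻¹' ball 0 R = ball 0 R := by ext x; simp
  have hcov := g.measurePreserving.setIntegral_preimage_emb g.toHomeomorph.measurableEmbedding
    (neumannDensity μ u v) (ball 0 R)
  rw [hball] at hcov
  refine .trans (setIntegral_congr_fun measurableSet_ball fun x hx => ?_) hcov
  have hgx := mapsTo_ball_linearIsometryEquiv g hx
  simp only [neumannDensity,
    (hasGradientAt_comp_linearIsometryEquiv g (hu.hasGradientAt hgx)).gradient,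
    (hasGradientAt_comp_linearIsometryEquiv g (hv.hasGradientAt hgx)).gradient,
    g.symm.inner_map_map]

/-- Functions that depend only on the norm. -/
def IsRadial (u : E → ℝ) : Prop :=
  ∀ x y, ‖x‖ = ‖y‖ → u x = u y

/-- Invariance under the linear isometries that fix every point of `S`. -/
def IsFixerInvariant (S : Set E) (u : E → ℝ) : Prop :=
  ∀ g : E ≃ₗᵢ[ℝ] E, (∀ y ∈ S, g y = y) → ∀ x, u (g x) = u x

lemma IsFixerInvariant.isRadial (hu : IsFixerInvariant ∅ u) : IsRadial u := by
  intro x y hxy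
  rw [← Submodule.reflection_sub hxy]
  exact (hu _ (by simp) x).symm

lemma isFixerInvariant_range_basis {ι : Type*} (b : Module.Basis ι ℝ E) (u : E → ℝ) :
    IsFixerInvariant (range b) u := by
  intro g hg x
  have hid : g = .refl ℝ E := b.ext_linearIsometryEquiv fun i => hg (b i) (mem_range_self i)
  rw [hid, LinearIsometryEquiv.coe_refl, id]

lemma IsFixerInvariant.exists_reflection {e : E} (hu : IsFixerInvariant (insert e S) u)
    (g : E ≃ₗᵢ[ℝ] E) (hg : ∀ y ∈ S, g y = y) :
    ∃ a : E, ∀ x, u (g x) = u ((ℝ ∙ a)ᗮ.reflection x) := by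
  set σ := (ℝ ∙ (e - g.symm e))ᗮ.reflection
  have he : σ e = g.symm e := Submodule.reflection_sub (by simp)
  have hfix : ∀ y ∈ insert e S, (σ.trans g) y = y := by
    rintro y (rfl | hy)
    · rw [LinearIsometryEquiv.trans_apply, he, g.apply_symm_apply]
    · have horth : ⟪e - g.symm e, y⟫ = 0 := by
        rw [inner_sub_left, ← g.inner_map_map (g.symm e), g.apply_symm_apply, hg y hy, sub_self]
      rw [LinearIsometryEquiv.trans_apply, Submodule.reflection_mem_subspace_eq_self
        (Submodule.mem_orthogonal_singleton_iff_inner_right.2 horth), hg y hy]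
  refine ⟨e - g.symm e, fun x => ?_⟩
  rw [← hu (σ.trans g) hfix (σ x), LinearIsometryEquiv.trans_apply, Submodule.reflection_reflection]

/-- Nonnegativity of the Dirichlet form of `-Δ - μ` on the functions that vanish on the trace on `U`
of some hyperplane through the origin. -/
def HyperplaneNonneg [FiniteDimensional ℝ E] [MeasurableSpace E] [BorelSpace E] (μ : ℝ)
    (U : Set E) : Prop :=
  ∀ a : E, a ≠ 0 → ∀ w : E → ℝ, BoundedC1On w U → (∀ x ∈ U, ⟪a, x⟫ = 0 → w x = 0) →
    0 ≤ neumannForm μ U w w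

variable [FiniteDimensional ℝ E]

/-- The linear isometries of `E` that fix every point of `S`, as a topological group. -/
abbrev isometryFixer (S : Set E) : Subgroup (unitary (E →L[ℝ] E)) :=
  fixingSubgroup (unitary (E →L[ℝ] E)) S

instance compactSpace_unitary : CompactSpace (unitary (E →L[ℝ] E)) := by
  refine isCompact_iff_compactSpace.1 (Metric.isCompact_of_isClosed_isBounded isClosed_unitary
    (isBounded_iff_forall_norm_le.2 ⟨1, fun g hg => ?_⟩))
  refine g.opNorm_le_bound zero_le_one fun x => ?_
  rw [one_mul, ContinuousLinearMap.norm_map_of_mem_unitary hg]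

instance compactSpace_isometryFixer (S : Set E) : CompactSpace (isometryFixer S) := by
  have hclosed : IsClosed (isometryFixer S : Set (unitary (E →L[ℝ] E))) := by
    have hinter : (isometryFixer S : Set (unitary (E →L[ℝ] E))) =
        ⋂ y ∈ S, {g : unitary (E →L[ℝ] E) | (g : E →L[ℝ] E) y = y} := by
      ext g
      simp only [SetLike.mem_coe, mem_fixingSubgroup_iff, mem_iInter, mem_ofPred_eq]
      rfl
    rw [hinter]
    exact isClosed_biInter fun y _ => isClosed_eq (by fun_prop) continuous_const
  exact isCompact_iff_compactSpace.1 hclosed.isCompact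

namespace isometryFixer

/-- The normalised Haar measure of the group of isometries fixing `S`. -/
def haarProb (S : Set E) : Measure (isometryFixer S) :=
  Measure.haarMeasure ⊤

instance (S : Set E) : IsProbabilityMeasure (haarProb S) :=
  ⟨Measure.haarMeasure_self (G := isometryFixer S) (K₀ := ⊤)⟩

instance (S : Set E) : (haarProb S).IsMulLeftInvariant :=
  inferInstanceAs (Measure.haarMeasure ⊤).IsMulLeftInvariant

/-- The average of `u` over the isometries fixing `S`. -/
def average (S : Set E) (u : E → ℝ) (x : E) : ℝ :=
  ∫ g : isometryFixer S, u (g⁻¹ • x) ∂haarProb S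

lemma linearIsometryEquiv_apply_eq (g : isometryFixer S) :
    ∀ y ∈ S, Unitary.linearIsometryEquiv g.1 y = y :=
  (mem_fixingSubgroup_iff _).1 g.2

lemma isFixerInvariant_average (S : Set E) (u : E → ℝ) : IsFixerInvariant S (average S u) := by
  intro g hg x
  let h : isometryFixer S :=
    ⟨Unitary.linearIsometryEquiv.symm g, (mem_fixingSubgroup_iff _).2 hg⟩
  have hshift : ∀ t : isometryFixer S, u (t⁻¹ • g x) = u ((h⁻¹ * t)⁻¹ • x) := fun t => by
    rw [mul_inv_rev, inv_inv, mul_smul]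
    rfl
  simp only [average, hshift]
  exact integral_mul_left_eq_self (fun t : isometryFixer S => u (t⁻¹ • x)) h⁻¹

lemma boundedC1Family (S : Set E) (hu : BoundedC1On u (ball 0 R)) :
    BoundedC1Family (fun (g : isometryFixer S) x => u (g⁻¹ • x)) (ball 0 R) := by
  have hL : Continuous fun g : isometryFixer S => ((g⁻¹).1 : E →L[ℝ] E) := by fun_prop
  have hfamily := boundedC1Family_mul_comp (.const 1) hL
    (fun g => mapsTo_ball_linearIsometryEquiv (Unitary.linearIsometryEquiv (g⁻¹).1))
    (isCompact_univ.exists_bound_of_continuousOn hL.continuousOn |>.imp fun C hC g =>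
      hC g (mem_univ g)) hu
  simp only [one_mul] at hfamily
  exact hfamily

lemma boundedC1On_average (S : Set E) (hu : BoundedC1On u (ball 0 R)) :
    BoundedC1On (average S u) (ball 0 R) :=
  (boundedC1Family S hu).integral isOpen_ball

variable [MeasurableSpace E] [BorelSpace E]

lemma neumannForm_average_right (μ : ℝ) (S : Set E) {w : E → ℝ} (hw : BoundedC1On w (ball 0 R))
    (hu : BoundedC1On u (ball 0 R)) : neumannForm μ (ball 0 R) w (average S u) =
      ∫ g, neumannForm μ (ball 0 R) w (fun x => u (g⁻¹ • x)) ∂haarProb S :=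
  (boundedC1Family S hu).neumannForm_integral_right isOpen_ball measure_ball_lt_top.ne hw μ

lemma neumannForm_average_of_isFixerInvariant (μ : ℝ) {w : E → ℝ} (hS : IsFixerInvariant S w)
    (hw : BoundedC1On w (ball 0 R)) (hu : BoundedC1On u (ball 0 R)) :
    neumannForm μ (ball 0 R) w (average S u) = neumannForm μ (ball 0 R) w u := by
  have hconst : ∀ g : isometryFixer S, neumannForm μ (ball 0 R) w (fun x => u (g⁻¹ • x)) =
      neumannForm μ (ball 0 R) w u := by
    intro g
    rw [← neumannForm_comp_linearIsometryEquiv μ hw hu (Unitary.linearIsometryEquiv (g⁻¹).1)]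
    congr 1
    exact funext fun x => (hS _ (linearIsometryEquiv_apply_eq g⁻¹) x).symm
  simp only [neumannForm_average_right μ S hw hu, hconst, integral_const, probReal_univ, one_smul]

lemma setIntegral_average (S : Set E) (hu : BoundedC1On u (ball 0 R)) :
    ∫ x in ball 0 R, average S u x = ∫ x in ball 0 R, u x := by
  have h := neumannForm_average_of_isFixerInvariant (-1) (S := S) (w := fun _ => 1)
    (fun _ _ _ => rfl) (boundedC1On_const 1) hu
  simpa [neumannForm, neumannDensity, (hasGradientAt_const _ (1 : ℝ)).gradient] using h

end isometryFixer

variable [MeasurableSpace E] [BorelSpace E]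

namespace HyperplaneNonneg

lemma neumannForm_reflection_le (h : HyperplaneNonneg μ (ball (0 : E) R))
    (hu : BoundedC1On u (ball 0 R)) (a : E) :
    neumannForm μ (ball 0 R) u (fun x => u ((ℝ ∙ a)ᗮ.reflection x)) ≤
      neumannForm μ (ball 0 R) u u := by
  set σ := (ℝ ∙ a)ᗮ.reflection
  have hσ : ∀ x, ⟪a, x⟫ = 0 → σ x = x := fun x hx => Submodule.reflection_mem_subspace_eq_self
    (Submodule.mem_orthogonal_singleton_iff_inner_right.2 hx)
  rcases eq_or_ne a 0 with rfl | ha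
  · simp only [hσ _ (inner_zero_left _), le_refl]
  have hodd := h a ha _ (hu.sub (hu.comp_linearIsometryEquiv σ)) fun x _ hx => by
    rw [hσ x hx, sub_self]
  rw [neumannForm_sub_self μ measurableSet_ball measure_ball_lt_top.ne hu
    (hu.comp_linearIsometryEquiv σ), neumannForm_comp_linearIsometryEquiv μ hu hu σ] at hodd
  linarith

lemma neumannForm_average_self_le (h : HyperplaneNonneg μ (ball (0 : E) R))
    (hu : BoundedC1On u (ball 0 R)) {e : E} (hS : IsFixerInvariant (insert e S) u) :
    neumannForm μ (ball 0 R) (isometryFixer.average S u) (isometryFixer.average S u) ≤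
      neumannForm μ (ball 0 R) u u := by
  rw [isometryFixer.neumannForm_average_of_isFixerInvariant μ
      (isometryFixer.isFixerInvariant_average S u) (isometryFixer.boundedC1On_average S hu) hu,
    neumannForm_comm, isometryFixer.neumannForm_average_right μ S hu hu]
  calc _ ≤ ∫ _ : isometryFixer S, neumannForm μ (ball 0 R) u u ∂isometryFixer.haarProb S := by
        refine integral_mono ((isometryFixer.boundedC1Family S hu).integrable_neumannForm_right
          isOpen_ball measure_ball_lt_top.ne hu μ) (integrable_const _) fun g => ?_
        obtain ⟨a, ha⟩ := hS.exists_reflection _ (isometryFixer.linearIsometryEquiv_apply_eq g⁻¹)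
        exact (congrArg (neumannForm μ _ u) (funext ha)).trans_le
          (h.neumannForm_reflection_le hu a)
    _ = _ := by rw [integral_const, probReal_univ, one_smul]

lemma exists_isRadial_of_isFixerInvariant (h : HyperplaneNonneg μ (ball (0 : E) R)) {S : Set E}
    (hS : S.Finite) (hu : BoundedC1On u (ball 0 R)) (hinv : IsFixerInvariant S u) :
    ∃ v : E → ℝ, BoundedC1On v (ball 0 R) ∧ IsRadial v ∧
      (∫ x in ball 0 R, v x) = ∫ x in ball 0 R, u x ∧
      neumannForm μ (ball 0 R) v v ≤ neumannForm μ (ball 0 R) u u := by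
  induction S, hS using Set.Finite.induction_on generalizing u with
  | empty => exact ⟨u, hu, hinv.isRadial, rfl, le_rfl⟩
  | @insert e S _ _ ih =>
    obtain ⟨v, hv, hrad, hmean, hle⟩ := ih (isometryFixer.boundedC1On_average S hu)
      (isometryFixer.isFixerInvariant_average S u)
    exact ⟨v, hv, hrad, hmean.trans (isometryFixer.setIntegral_average S hu),
      hle.trans (h.neumannForm_average_self_le hu hinv)⟩

lemma exists_isRadial (h : HyperplaneNonneg μ (ball (0 : E) R)) (hu : BoundedC1On u (ball 0 R)) :
    ∃ v : E → ℝ, BoundedC1On v (ball 0 R) ∧ IsRadial v ∧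
      (∫ x in ball 0 R, v x) = ∫ x in ball 0 R, u x ∧
      neumannForm μ (ball 0 R) v v ≤ neumannForm μ (ball 0 R) u u :=
  h.exists_isRadial_of_isFixerInvariant (finite_range _) hu
    (isFixerInvariant_range_basis (stdOrthonormalBasis ℝ E).toBasis u)

end HyperplaneNonneg

end Symmetrization

section Picone

lemma sphere_weight_pos_iff {E : Type*} [SeminormedAddCommGroup E] {R : ℝ} {ψ : E → ℝ} {x : E}
    (hR : 0 < R) :
    0 < (R ^ 2 - ‖x‖ ^ 2) * (ψ x * ψ x) ↔ x ∈ ball 0 R ∧ ψ x ≠ 0 := by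
  rw [← sq, mem_ball_zero_iff]
  constructor
  · intro h
    have hψ0 : ψ x ≠ 0 := fun h0 => by simp [h0] at h
    have hs := pos_of_mul_pos_left h (sq_nonneg (ψ x))
    exact ⟨lt_of_pow_lt_pow_left₀ 2 hR.le (by linarith), hψ0⟩
  · rintro ⟨hx, hψ0⟩
    exact mul_pos (sub_pos.2 (by gcongr)) (by positivity)

variable {E : Type*} [NormedAddCommGroup E] [InnerProductSpace ℝ E] [FiniteDimensional ℝ E]
  {μ R : ℝ} {ψ w : E → ℝ}

-- The difference of the two sides is `‖∇ w x - w x • (ψ x)⁻¹ • ∇ ψ x‖ ^ 2`.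
lemma divergence_sq_div_smul_gradient_le {x : E} (hψ : DifferentiableAt ℝ ψ x)
    (hψ' : DifferentiableAt ℝ (∇ ψ) x) (hψ0 : ψ x ≠ 0) (heigen : Δ ψ x = -μ * ψ x)
    (hw : DifferentiableAt ℝ w x) :
    divergence (fun y => (w y * w y * (ψ y)⁻¹) • ∇ ψ y) x ≤ neumannDensity μ w w x := by
  have hgrad := hasGradientAt_mul (hasGradientAt_mul hw.hasGradientAt hw.hasGradientAt)
    (hasGradientAt_comp (hasDerivAt_inv hψ0) hψ.hasGradientAt)
  have hcross : w x * (ψ x)⁻¹ * ⟪∇ w x, ∇ ψ x⟫ * 2 ≤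
      ‖∇ w x‖ ^ 2 + (w x * (ψ x)⁻¹) ^ 2 * ‖∇ ψ x‖ ^ 2 := by
    have hsq := norm_sub_sq_real (∇ w x) ((w x * (ψ x)⁻¹) • ∇ ψ x)
    rw [inner_smul_right, norm_smul, mul_pow, Real.norm_eq_abs, sq_abs] at hsq
    linarith [sq_nonneg ‖∇ w x - (w x * (ψ x)⁻¹) • ∇ ψ x‖]
  calc divergence (fun y => (w y * w y * (ψ y)⁻¹) • ∇ ψ y) x
      = w x * (ψ x)⁻¹ * ⟪∇ w x, ∇ ψ x⟫ * 2 - (w x * (ψ x)⁻¹) ^ 2 * ‖∇ ψ x‖ ^ 2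
          - μ * w x ^ 2 := by
        rw [divergence_smul hgrad hψ', divergence_gradient, heigen]
        simp only [inner_add_left, real_inner_smul_left, real_inner_self_eq_norm_sq]
        field_simp
        ring
    _ ≤ ‖∇ w x‖ ^ 2 - μ * w x ^ 2 := by linarith
    _ = neumannDensity μ w w x := (neumannDensity_self μ w x).symm

lemma inner_gradient_weight_le {x : E} {C M : ℝ} (hψ : DifferentiableAt ℝ ψ x) (hψ0 : ψ x ≠ 0)
    (hx : ‖x‖ ^ 2 ≤ R ^ 2) (hflux : 0 ≤ ψ x * ⟪x, ∇ ψ x⟫) (hM : ‖∇ ψ x‖ ^ 2 ≤ M)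
    (hw : w x ^ 2 ≤ C * ψ x ^ 2) :
    ⟪∇ (fun y => (R ^ 2 - ‖y‖ ^ 2) * (ψ y * ψ y)) x, (w x * w x * (ψ x)⁻¹) • ∇ ψ x⟫ ≤
      2 * C * M * ((R ^ 2 - ‖x‖ ^ 2) * (ψ x * ψ x)) := by
  have hgrad := hasGradientAt_mul
    (hasGradientAt_sub (hasGradientAt_const x (R ^ 2)) (hasGradientAt_norm_sq x))
    (hasGradientAt_mul hψ.hasGradientAt hψ.hasGradientAt)
  have hs : 0 ≤ R ^ 2 - ‖x‖ ^ 2 := sub_nonneg.2 hx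
  rw [hgrad.gradient]
  calc ⟪(R ^ 2 - ‖x‖ ^ 2) • (ψ x • ∇ ψ x + ψ x • ∇ ψ x) + (ψ x * ψ x) • (0 - (2 : ℝ) • x),
        (w x * w x * (ψ x)⁻¹) • ∇ ψ x⟫
      = 2 * (R ^ 2 - ‖x‖ ^ 2) * (w x ^ 2 * ‖∇ ψ x‖ ^ 2)
          - 2 * (w x ^ 2 * (ψ x * ⟪x, ∇ ψ x⟫)) := by
        simp only [zero_sub, inner_add_left, inner_neg_left, real_inner_smul_left,
          real_inner_smul_right, smul_neg, real_inner_self_eq_norm_sq]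
        field_simp
        ring
    _ ≤ 2 * (R ^ 2 - ‖x‖ ^ 2) * (w x ^ 2 * ‖∇ ψ x‖ ^ 2) :=
        sub_le_self _ (by positivity)
    _ ≤ 2 * (R ^ 2 - ‖x‖ ^ 2) * (C * ψ x ^ 2 * M) := by
        gcongr
        exact (sq_nonneg _).trans hw
    _ = 2 * C * M * ((R ^ 2 - ‖x‖ ^ 2) * (ψ x * ψ x)) := by ring

variable [MeasurableSpace E] [BorelSpace E]

lemma neumannForm_self_nonneg_of_subset {U V : Set E} (hU : MeasurableSet U)
    (hV : MeasurableSet V) (hVU : V ⊆ U) (hint : IntegrableOn (neumannDensity μ w w) U)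
    (hw : ∀ x ∈ U \ V, w x = 0) (hpos : 0 ≤ ∫ x in V, neumannDensity μ w w x) :
    0 ≤ neumannForm μ U w w := by
  rw [neumannForm, ← integral_inter_add_sdiff hV hint, inter_eq_self_of_subset_right hVU]
  refine add_nonneg hpos (setIntegral_nonneg (hU.diff hV) fun x hx => ?_)
  rw [neumannDensity_self, hw x hx, zero_pow two_ne_zero, mul_zero, sub_zero]
  positivity

-- Picone's identity: apply the divergence inequality to the field `w ^ 2 * ψ⁻¹ • ∇ ψ` on the part
-- of the ball where `ψ ≠ 0`; the sign condition on `ψ` controls its flux through the sphere.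
theorem neumannForm_self_nonneg_of_eigenfunction {C : ℝ} (hR : 0 < R) (hψ : ContDiff ℝ 2 ψ)
    (heigen : ∀ x ∈ ball 0 R, Δ ψ x = -μ * ψ x)
    (hflux : ∀ x ∈ ball 0 R, 0 ≤ ψ x * ⟪x, ∇ ψ x⟫) (hw : BoundedC1On w (ball 0 R))
    (hwψ : ∀ x ∈ ball 0 R, w x ^ 2 ≤ C * ψ x ^ 2) :
    0 ≤ neumannForm μ (ball 0 R) w w := by
  let d : E → ℝ := fun x => (R ^ 2 - ‖x‖ ^ 2) * (ψ x * ψ x)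
  have hψ1 : ContDiff ℝ 1 ψ := hψ.of_le one_le_two
  have hψ' : ContDiff ℝ 1 (∇ ψ) := contDiffOn_univ.1
    (contDiffOn_gradient isOpen_univ (by rw [one_add_one_eq_two]; exact hψ.contDiffOn))
  have hd : ContDiff ℝ 1 d := (contDiff_const.sub (contDiff_norm_sq ℝ)).mul (hψ1.mul hψ1)
  have hdpos (x : E) : 0 < d x ↔ x ∈ ball 0 R ∧ ψ x ≠ 0 := sphere_weight_pos_iff hR
  have hsub : {x | 0 < d x} ⊆ ball 0 R := fun x hx => ((hdpos x).1 hx).1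
  obtain ⟨M, hM⟩ := (isCompact_closedBall (0 : E) R).exists_bound_of_continuousOn
    (hψ'.continuous.norm.pow 2).continuousOn
  have hint : IntegrableOn (neumannDensity μ w w) (ball 0 R) :=
    (hw.neumannDensity μ hw).integrableOn (μ := volume) measurableSet_ball measure_ball_lt_top.ne
  refine neumannForm_self_nonneg_of_subset measurableSet_ball
    (measurableSet_lt measurable_const hd.continuous.measurable) hsub hint (fun x hx => ?_) ?_
  · have hψx : ψ x = 0 := by_contra fun h => hx.2 ((hdpos x).2 ⟨hx.1, h⟩)
    have hle := hwψ x hx.1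
    rw [hψx, zero_pow two_ne_zero, mul_zero] at hle
    exact sq_eq_zero_iff.1 (hle.antisymm (sq_nonneg _))
  refine setIntegral_superlevel_nonneg_of_divergence_le (C := 2 * C * M)
    (W := fun x => (w x * w x * (ψ x)⁻¹) • ∇ ψ x) hd (isBounded_ball.subset hsub) ?_
    (hint.mono_set hsub) (fun x hx => ?_) fun x hx => ?_
  · have hwd := (hw.contDiffOn isOpen_ball).mono hsub
    exact ((hwd.mul hwd).mul (hψ1.contDiffOn.inv fun x hx => ((hdpos x).1 hx).2)).smul
      hψ'.contDiffOn
  · obtain ⟨hxR, hx0⟩ := (hdpos x).1 hx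
    exact divergence_sq_div_smul_gradient_le (hψ1.differentiable one_ne_zero x)
      (hψ'.differentiable one_ne_zero x) hx0 (heigen x hxR) (hw.differentiableAt x hxR)
  · obtain ⟨hxR, hx0⟩ := (hdpos x).1 hx
    have hxn := mem_ball_zero_iff.1 hxR
    exact inner_gradient_weight_le (hψ1.differentiable one_ne_zero x) hx0 (by gcongr)
      (hflux x hxR) ((le_abs_self _).trans (hM x (ball_subset_closedBall hxR))) (hwψ x hxR)

end Picone

section EntireSeries

open scoped Nat

/-- The real power series with coefficients `c`. -/
def entireSeries (c : ℕ → ℝ) (z : ℝ) : ℝ :=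
  ∑' k, c k * z ^ k

/-- The coefficients of the derivative of the power series with coefficients `c`. -/
def derivCoeff (c : ℕ → ℝ) (k : ℕ) : ℝ :=
  (k + 1) * c (k + 1)

/-- Coefficients bounded by those of the exponential series, so that the power series and all its
derivatives converge everywhere. -/
def FactorialBounded (c : ℕ → ℝ) : Prop :=
  ∀ k, |c k| ≤ 1 / (k ! : ℝ)

lemma entireSeries_zero (c : ℕ → ℝ) : entireSeries c 0 = c 0 := by
  rw [entireSeries, tsum_eq_single 0 fun k hk => by rw [zero_pow hk, mul_zero], pow_zero, mul_one]

variable {c : ℕ → ℝ}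

lemma factorialBounded_derivCoeff (hc : FactorialBounded c) :
    FactorialBounded (derivCoeff c) := fun k => by
  calc |((k : ℝ) + 1) * c (k + 1)| = (k + 1) * |c (k + 1)| := by
        rw [abs_mul, abs_of_nonneg (by positivity : (0 : ℝ) ≤ k + 1)]
    _ ≤ (k + 1) * (1 / ((k + 1)! : ℝ)) := by gcongr; exact hc (k + 1)
    _ = 1 / (k ! : ℝ) := by rw [Nat.factorial_succ]; push_cast; field_simp

namespace FactorialBounded

lemma summable (hc : FactorialBounded c) (z : ℝ) : Summable fun k => c k * z ^ k := by
  refine .of_norm_bounded (Real.summable_pow_div_factorial |z|) fun k => ?_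
  rw [norm_mul, norm_pow, Real.norm_eq_abs, Real.norm_eq_abs, div_eq_inv_mul, ← one_div]
  gcongr
  exact hc k

lemma hasSum_termwise_deriv (hc : FactorialBounded c) (z : ℝ) :
    HasSum (fun k : ℕ => c k * (k * z ^ (k - 1))) (entireSeries (derivCoeff c) z) := by
  rw [← hasSum_nat_add_iff' 1]
  simp only [Finset.sum_range_one, Nat.cast_zero, zero_mul, mul_zero, sub_zero]
  refine ((factorialBounded_derivCoeff hc).summable z).hasSum.congr_fun fun k => ?_
  simp only [derivCoeff, Nat.add_sub_cancel]
  push_cast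
  ring

lemma hasDerivAt (hc : FactorialBounded c) (z : ℝ) :
    HasDerivAt (entireSeries c) (entireSeries (derivCoeff c) z) z := by
  let r := |z| + 1
  have hr0 : 0 < r := by positivity
  have hbound : Summable fun k : ℕ => 1 / (k ! : ℝ) * (k * r ^ (k - 1)) := by
    have hexp : FactorialBounded fun k : ℕ => 1 / (k ! : ℝ) := fun k => by
      rw [abs_of_nonneg (by positivity)]
    exact (hexp.hasSum_termwise_deriv r).summable
  rw [← (hc.hasSum_termwise_deriv z).tsum_eq]
  refine hasDerivAt_tsum_of_isPreconnected hbound (isOpen_ball (x := (0 : ℝ)) (ε := r))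
    (convex_ball _ _).isPreconnected (fun k y _ => (hasDerivAt_pow k y).const_mul (c k))
    (fun k y hy => ?_) (mem_ball_self hr0) (hc.summable 0) (mem_ball_zero_iff.2 (lt_add_one _))
  rw [norm_mul, norm_mul, norm_pow, Real.norm_natCast]
  have hyr := (mem_ball_zero_iff.1 hy).le
  gcongr
  exact hc k

lemma deriv_entireSeries (hc : FactorialBounded c) :
    deriv (entireSeries c) = entireSeries (derivCoeff c) :=
  funext fun z => (hc.hasDerivAt z).deriv

lemma contDiff (hc : FactorialBounded c) : ContDiff ℝ (⊤ : ℕ∞) (entireSeries c) := by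
  refine contDiff_infty.2 fun m => ?_
  induction m generalizing c with
  | zero =>
    exact contDiff_zero.2 (continuous_iff_continuousAt.2 fun z => (hc.hasDerivAt z).continuousAt)
  | succ m ih =>
    rw [Nat.cast_succ, contDiff_succ_iff_deriv, hc.deriv_entireSeries]
    exact ⟨fun z => (hc.hasDerivAt z).differentiableAt, by simp,
      ih (factorialBounded_derivCoeff hc)⟩

end FactorialBounded

end EntireSeries

section BesselSeries

open scoped Nat

/-- The Taylor coefficients at `0` of the solution of `4 z F'' + b F' + F = 0` with `F 0 = 1`. -/
def besselCoeff (b : ℝ) : ℕ → ℝ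
  | 0 => 1
  | k + 1 => -besselCoeff b k / ((k + 1) * (4 * k + b))

/-- The solution of `4 z F'' + b F' + F = 0` with `F 0 = 1`, a rescaled Bessel function:
for `b = 2 n + 4`, the function `x ↦ x i * F (‖x‖ ^ 2)` on `ℝⁿ` satisfies `Δ ψ = -ψ`. -/
def besselSeries (b : ℝ) : ℝ → ℝ :=
  entireSeries (besselCoeff b)

variable {b : ℝ}

lemma factorialBounded_besselCoeff (hb : 1 ≤ b) : FactorialBounded (besselCoeff b) := fun k => by
  induction k with
  | zero => simp [besselCoeff]
  | succ k ih =>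
    have hden : 1 ≤ 4 * (k : ℝ) + b := by linarith [k.cast_nonneg (α := ℝ)]
    calc |besselCoeff b (k + 1)| = |besselCoeff b k| / ((k + 1) * (4 * k + b)) := by
          rw [besselCoeff, abs_div, abs_neg, abs_of_pos (by positivity : 0 < (k + 1) * (4 * k + b))]
      _ ≤ 1 / (k ! : ℝ) / ((k + 1) * 1) := by gcongr
      _ = 1 / ((k + 1)! : ℝ) := by rw [Nat.factorial_succ]; push_cast; field_simp

lemma contDiff_besselSeries (hb : 1 ≤ b) : ContDiff ℝ (⊤ : ℕ∞) (besselSeries b) :=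
  (factorialBounded_besselCoeff hb).contDiff

lemma besselSeries_zero (b : ℝ) : besselSeries b 0 = 1 :=
  entireSeries_zero _

lemma besselSeries_ode (hb : 1 ≤ b) (z : ℝ) :
    4 * z * deriv (deriv (besselSeries b)) z + b * deriv (besselSeries b) z + besselSeries b z
      = 0 := by
  have hc := factorialBounded_besselCoeff hb
  have hc' := factorialBounded_derivCoeff hc
  rw [besselSeries, hc.deriv_entireSeries, hc'.deriv_entireSeries]
  have hsecond : HasSum (fun k : ℕ => derivCoeff (besselCoeff b) k * (k * z ^ k))
      (z * entireSeries (derivCoeff (derivCoeff (besselCoeff b))) z) := by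
    refine ((hc'.hasSum_termwise_deriv z).mul_left z).congr_fun fun k => ?_
    rcases k with _ | k
    · simp
    · rw [Nat.add_sub_cancel, pow_succ]
      ring
  have hfirst := (hc'.summable z).hasSum
  have hsum := ((hsecond.mul_left 4).add (hfirst.mul_left b)).add (hc.summable z).hasSum
  rw [mul_assoc]
  refine hsum.unique (hasSum_zero.congr_fun fun k => ?_)
  have hrec : derivCoeff (besselCoeff b) k * (4 * k + b) = -besselCoeff b k := by
    rw [derivCoeff, besselCoeff]
    field_simp [show 4 * (k : ℝ) + b ≠ 0 by positivity]
  linear_combination z ^ k * hrec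

end BesselSeries

section DipoleMode

variable {E : Type*} [NormedAddCommGroup E] [InnerProductSpace ℝ E] {F : ℝ → ℝ} {l : ℝ}
  {a x : E}

/-- The product of a linear form with a radial function; these are the modes of the Laplacian
belonging to spherical harmonics of degree one. -/
def dipoleMode (F : ℝ → ℝ) (l : ℝ) (a x : E) : ℝ :=
  ⟪a, x⟫ * F (l * ‖x‖ ^ 2)

/-- The profile of the radial derivative of a dipole mode: `⟪x, ∇ ψ x⟫` is `⟪a, x⟫` times its value
at `l * ‖x‖ ^ 2`. -/
def dipoleFlux (F : ℝ → ℝ) (z : ℝ) : ℝ :=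
  F z + 2 * z * deriv F z

lemma contDiff_dipoleMode {k : WithTop ℕ∞} (hF : ContDiff ℝ k F) (l : ℝ) (a : E) :
    ContDiff ℝ k (dipoleMode F l a) :=
  (contDiff_const.inner ℝ contDiff_id).mul
    (hF.comp (contDiff_const.mul (contDiff_norm_sq ℝ)))

section Gradient

variable [CompleteSpace E]

lemma hasGradientAt_comp_mul_norm_sq {F' : ℝ} (hF : HasDerivAt F F' (l * ‖x‖ ^ 2)) :
    HasGradientAt (fun y => F (l * ‖y‖ ^ 2)) ((2 * l * F') • x) x := by
  have hscale : HasDerivAt (fun s => F (l * s)) (F' * (l * 1)) (‖x‖ ^ 2) :=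
    hF.comp _ ((hasDerivAt_id _).const_mul l)
  have hgrad := hasGradientAt_comp (f := fun y : E => ‖y‖ ^ 2) hscale
    (hasGradientAt_norm_sq x)
  rwa [smul_smul, show F' * (l * 1) * 2 = 2 * l * F' by ring] at hgrad

lemma hasGradientAt_dipoleMode {F' : ℝ} (hF : HasDerivAt F F' (l * ‖x‖ ^ 2)) (a : E) :
    HasGradientAt (dipoleMode F l a)
      (F (l * ‖x‖ ^ 2) • a + (2 * l * (⟪a, x⟫ * F')) • x) x := by
  have hgrad := hasGradientAt_mul (hasGradientAt_inner a x) (hasGradientAt_comp_mul_norm_sq hF)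
  rwa [smul_smul, add_comm, show ⟪a, x⟫ * (2 * l * F') = 2 * l * (⟪a, x⟫ * F') by ring] at hgrad

lemma inner_gradient_dipoleMode (hF : DifferentiableAt ℝ F (l * ‖x‖ ^ 2)) (a : E) :
    ⟪x, ∇ (dipoleMode F l a) x⟫ = ⟪a, x⟫ * dipoleFlux F (l * ‖x‖ ^ 2) := by
  rw [(hasGradientAt_dipoleMode hF.hasDerivAt a).gradient, inner_add_right, real_inner_smul_right,
    real_inner_smul_right, real_inner_self_eq_norm_sq, real_inner_comm, dipoleFlux]
  ring

end Gradient

variable [FiniteDimensional ℝ E]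

lemma laplacian_dipoleMode (hF : ContDiff ℝ 2 F) (l : ℝ) (a x : E) :
    Δ (dipoleMode F l a) x = l * ⟪a, x⟫ * (4 * (l * ‖x‖ ^ 2) * deriv (deriv F) (l * ‖x‖ ^ 2) +
      (2 * Module.finrank ℝ E + 4) * deriv F (l * ‖x‖ ^ 2)) := by
  have hF1 (z : ℝ) : HasDerivAt F (deriv F z) z :=
    (hF.differentiable two_ne_zero z).hasDerivAt
  have hF2 : HasDerivAt (deriv F) (deriv (deriv F) (l * ‖x‖ ^ 2)) (l * ‖x‖ ^ 2) :=
    ((hF.iterate_deriv' 1 1).differentiable one_ne_zero _).hasDerivAt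
  have hgrad : ∇ (dipoleMode F l a) = fun y =>
      F (l * ‖y‖ ^ 2) • a + (2 * l * dipoleMode (deriv F) l a y) • y :=
    funext fun y => (hasGradientAt_dipoleMode (hF1 _) a).gradient
  have hradial := hasGradientAt_comp_mul_norm_sq (hF1 (l * ‖x‖ ^ 2))
  have hcoeff := hasGradientAt_comp (hasDerivAt_const_mul (2 * l))
    (hasGradientAt_dipoleMode hF2 a)
  rw [← divergence_gradient, hgrad, divergence_add (hradial.differentiableAt.smul_const a)
      (hcoeff.differentiableAt.fun_smul differentiableAt_fun_id),
    divergence_smul hradial (differentiableAt_const a),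
    divergence_smul (W := fun y => y) hcoeff differentiableAt_id, divergence_const, divergence_id]
  simp only [dipoleMode, inner_add_left, real_inner_smul_left, real_inner_self_eq_norm_sq,
    real_inner_comm a x]
  ring

lemma laplacian_dipoleMode_besselSeries (l : ℝ) (a x : E) :
    Δ (dipoleMode (besselSeries (2 * Module.finrank ℝ E + 4)) l a) x =
      -l * dipoleMode (besselSeries (2 * Module.finrank ℝ E + 4)) l a x := by
  have hb : (1 : ℝ) ≤ 2 * Module.finrank ℝ E + 4 := by
    linarith [(Module.finrank ℝ E).cast_nonneg (α := ℝ)]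
  rw [laplacian_dipoleMode ((contDiff_besselSeries hb).of_le (by norm_cast)), dipoleMode]
  linear_combination (l * ⟪a, x⟫) * besselSeries_ode hb (l * ‖x‖ ^ 2)

end DipoleMode

section DipolePositivity

variable {F : ℝ → ℝ} {T : ℝ}

lemma dipoleFlux_pos (hF : ContDiff ℝ 1 F) (hF0 : 0 < F 0)
    (hne : ∀ z ∈ Ioo 0 T, dipoleFlux F z ≠ 0) : ∀ z ∈ Ico 0 T, 0 < dipoleFlux F z := by
  intro z hz
  have hcont : Continuous (dipoleFlux F) :=
    hF.continuous.add ((continuous_const.mul continuous_id).mul (hF.continuous_deriv le_rfl))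
  have h0 : 0 < dipoleFlux F 0 := by simpa [dipoleFlux] using hF0
  by_contra! hneg
  obtain ⟨y, hy, hy0⟩ := intermediate_value_Icc' hz.1 hcont.continuousOn ⟨hneg, h0.le⟩
  have hypos : 0 < y := hy.1.lt_of_ne fun h => h0.ne' (h ▸ hy0)
  exact hne y ⟨hypos, hy.2.trans_lt hz.2⟩ hy0

-- `r * F (r ^ 2)` has derivative `dipoleFlux F (r ^ 2)`, hence increases from `0`.
lemma pos_of_dipoleFlux_pos (hF : ContDiff ℝ 1 F) (hF0 : 0 < F 0)
    (hpos : ∀ z ∈ Ioo 0 T, 0 < dipoleFlux F z) : ∀ z ∈ Icc 0 T, 0 < F z := by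
  intro z hz
  rcases hz.1.eq_or_lt with rfl | hz0
  · exact hF0
  have hderiv (r : ℝ) : HasDerivAt (fun r => r * F (r ^ 2)) (dipoleFlux F (r ^ 2)) r := by
    have hsq : HasDerivAt (fun r => F (r ^ 2)) (deriv F (r ^ 2) * (2 * r)) r :=
      (hF.differentiable one_ne_zero _).hasDerivAt.comp r (by simpa using hasDerivAt_pow 2 r)
    have hmul := (hasDerivAt_id r).mul hsq
    rwa [id, show 1 * F (r ^ 2) + r * (deriv F (r ^ 2) * (2 * r)) = dipoleFlux F (r ^ 2) by
      rw [dipoleFlux]; ring] at hmul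
  have hmono : StrictMonoOn (fun r => r * F (r ^ 2)) (Icc 0 √z) := by
    refine strictMonoOn_of_deriv_pos (convex_Icc _ _)
      (fun r _ => (hderiv r).continuousAt.continuousWithinAt) fun r hr => ?_
    rw [interior_Icc] at hr
    rw [(hderiv r).deriv]
    exact hpos _ ⟨pow_pos hr.1 2, ((Real.lt_sqrt hr.1.le).1 hr.2).trans_le hz.2⟩
  have hsqrt := Real.sqrt_pos.2 hz0
  have hlt := hmono (left_mem_Icc.2 hsqrt.le) (right_mem_Icc.2 hsqrt.le) hsqrt
  simp only [zero_mul, Real.sq_sqrt hz.1] at hlt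
  exact (pos_iff_pos_of_mul_pos hlt).1 hsqrt

end DipolePositivity

section HyperplaneBound

variable {E : Type*} [NormedAddCommGroup E] [InnerProductSpace ℝ E] [CompleteSpace E]
  {R : ℝ} {w : E → ℝ} {a : E}

lemma BoundedC1On.exists_sq_le_inner_sq (hw : BoundedC1On w (ball 0 R)) (ha : a ≠ 0)
    (hw0 : ∀ x ∈ ball 0 R, ⟪a, x⟫ = 0 → w x = 0) :
    ∃ C, 0 ≤ C ∧ ∀ x ∈ ball 0 R, w x ^ 2 ≤ C * ⟪a, x⟫ ^ 2 := by
  obtain ⟨K, hK⟩ := hw.exists_lipschitzOnWith (convex_ball 0 R)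
  refine ⟨(K / ‖a‖) ^ 2, sq_nonneg _, fun x hx => ?_⟩
  set y := (ℝ ∙ a)ᗮ.starProjection x with hy
  have hyR : y ∈ ball 0 R := mem_ball_zero_iff.2
    (((ℝ ∙ a)ᗮ.norm_starProjection_apply_le x).trans_lt (mem_ball_zero_iff.1 hx))
  have hwy : w y = 0 := hw0 y hyR
    (Submodule.mem_orthogonal_singleton_iff_inner_right.1 (Submodule.starProjection_apply_mem _ x))
  have hdist : dist x y = |⟪a, x⟫| / ‖a‖ := by
    rw [dist_eq_norm, hy, Submodule.starProjection_orthogonal_val, sub_sub_cancel,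
      Submodule.starProjection_singleton, norm_smul, norm_div]
    simp only [Real.norm_eq_abs, RCLike.ofReal_real_eq_id, id_eq, abs_pow, abs_norm]
    field_simp
  have hle := hK.dist_le_mul x hx y hyR
  rw [Real.dist_eq, hwy, sub_zero, hdist] at hle
  calc w x ^ 2 = |w x| ^ 2 := (sq_abs _).symm
    _ ≤ (K * (|⟪a, x⟫| / ‖a‖)) ^ 2 := by gcongr
    _ = (K / ‖a‖) ^ 2 * ⟪a, x⟫ ^ 2 := by rw [← sq_abs ⟪a, x⟫]; ring

end HyperplaneBound

section HyperplaneNonneg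

variable {E : Type*} [NormedAddCommGroup E] [InnerProductSpace ℝ E] [FiniteDimensional ℝ E]
  [MeasurableSpace E] [BorelSpace E] {μ R : ℝ}

theorem hyperplaneNonneg_of_dipoleFlux_ne_zero (hR : 0 < R) (hμ : 0 < μ)
    (hne : ∀ z ∈ Ioo 0 (μ * R ^ 2),
      dipoleFlux (besselSeries (2 * Module.finrank ℝ E + 4)) z ≠ 0) :
    HyperplaneNonneg μ (ball (0 : E) R) := by
  intro a ha w hw hw0
  set F := besselSeries (2 * Module.finrank ℝ E + 4)
  have hF : ContDiff ℝ (⊤ : ℕ∞) F :=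
    contDiff_besselSeries (by linarith [(Module.finrank ℝ E).cast_nonneg (α := ℝ)])
  have hF1 : ContDiff ℝ 1 F := hF.of_le (by norm_cast)
  have hF0 : 0 < F 0 := by rw [show F 0 = 1 from besselSeries_zero _]; exact one_pos
  have hflux := dipoleFlux_pos hF1 hF0 hne
  have hFpos := pos_of_dipoleFlux_pos hF1 hF0 fun z hz => hflux z (Ioo_subset_Ico_self hz)
  obtain ⟨C, hC, hwC⟩ := hw.exists_sq_le_inner_sq ha hw0
  obtain ⟨z₀, hz₀, hmin⟩ := isCompact_Icc.exists_isMinOn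
    (nonempty_Icc.2 (by positivity : 0 ≤ μ * R ^ 2)) hF.continuous.continuousOn
  have hz₀pos := hFpos z₀ hz₀
  have hmem {x : E} (hx : x ∈ ball 0 R) : μ * ‖x‖ ^ 2 ∈ Icc 0 (μ * R ^ 2) :=
    ⟨by positivity, by have := (mem_ball_zero_iff.1 hx).le; gcongr⟩
  refine neumannForm_self_nonneg_of_eigenfunction (C := C / F z₀ ^ 2) hR
    (contDiff_dipoleMode (hF.of_le (by norm_cast)) μ a)
    (fun x _ => laplacian_dipoleMode_besselSeries μ a x) (fun x hx => ?_) hw fun x hx => ?_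
  · have hlt : μ * ‖x‖ ^ 2 < μ * R ^ 2 := by have := mem_ball_zero_iff.1 hx; gcongr
    rw [inner_gradient_dipoleMode (hF1.differentiable one_ne_zero _), dipoleMode]
    calc 0 ≤ ⟪a, x⟫ ^ 2 * (F (μ * ‖x‖ ^ 2) * dipoleFlux F (μ * ‖x‖ ^ 2)) :=
          mul_nonneg (sq_nonneg _)
            (mul_pos (hFpos _ (hmem hx)) (hflux _ ⟨(hmem hx).1, hlt⟩)).le
      _ = ⟪a, x⟫ * F (μ * ‖x‖ ^ 2) * (⟪a, x⟫ * dipoleFlux F (μ * ‖x‖ ^ 2)) := by ring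
  · calc w x ^ 2 ≤ C * ⟪a, x⟫ ^ 2 := hwC x hx
      _ = C / F z₀ ^ 2 * (⟪a, x⟫ * F z₀) ^ 2 := by field_simp
      _ ≤ C / F z₀ ^ 2 * dipoleMode F μ a x ^ 2 := by
        rw [dipoleMode, mul_pow, mul_pow]
        gcongr
        exact hmin (hmem hx)

end HyperplaneNonneg

section EuclideanLaplacian

variable {n : ℕ} {R l : ℝ}

lemma fderivWithin_closedBall_eq_fderiv {E G : Type*} [NormedAddCommGroup E] [NormedSpace ℝ E]
    [NormedAddCommGroup G] [NormedSpace ℝ G] (f : E → G) {x : E} (hx : x ∈ ball 0 R) :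
    fderivWithin ℝ f (closedBall 0 R) x = fderiv ℝ f x :=
  fderivWithin_of_mem_nhds (mem_of_superset (isOpen_ball.mem_nhds hx) ball_subset_closedBall)

lemma uniqueDiffOn_closedBall {E : Type*} [NormedAddCommGroup E] [NormedSpace ℝ E] (hR : 0 < R) :
    UniqueDiffOn ℝ (closedBall (0 : E) R) :=
  uniqueDiffOn_convex (convex_closedBall 0 R)
    ⟨0, ball_subset_interior_closedBall (mem_ball_self hR)⟩

lemma lapWithin_eq_laplacian {S : Set (EuclideanSpace ℝ (Fin n))}
    {f : EuclideanSpace ℝ (Fin n) → ℝ} {x : EuclideanSpace ℝ (Fin n)} (hS : S ∈ 𝓝 x)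
    (hf : ContDiffAt ℝ 2 f x) : lapWithin S f x = Δ f x := by
  have hdiff : DifferentiableAt ℝ (fderiv ℝ f) x :=
    (hf.fderiv_right (m := 1) (by norm_num)).differentiableAt one_ne_zero
  have hinner (v : EuclideanSpace ℝ (Fin n)) :
      (fun y => fderivWithin ℝ f S y v) =ᶠ[𝓝 x] fun y => fderiv ℝ f y v := by
    filter_upwards [eventually_mem_nhds_iff.2 hS] with y hy
    rw [fderivWithin_of_mem_nhds hy]
  rw [InnerProductSpace.laplacian_eq_iteratedFDeriv_orthonormalBasis f
    (EuclideanSpace.basisFun (Fin n) ℝ), lapWithin]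
  refine Finset.sum_congr rfl fun i _ => ?_
  rw [fderivWithin_of_mem_nhds hS, (hinner _).fderiv_eq, iteratedFDeriv_two_apply,
    fderiv_clm_apply hdiff (differentiableAt_const _)]
  simp

lemma isLapNeumannEigenvalueBall_of_dipoleFlux_eq_zero (hn : n ≠ 0) (hR : 0 < R)
    (hflux : dipoleFlux (besselSeries (2 * n + 4)) (l * R ^ 2) = 0) :
    IsLapNeumannEigenvalueBall n R l := by
  have hdim : Module.finrank ℝ (EuclideanSpace ℝ (Fin n)) = n := finrank_euclideanSpace_fin
  set F := besselSeries (2 * n + 4)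
  let a : EuclideanSpace ℝ (Fin n) := EuclideanSpace.single ⟨0, Nat.pos_of_ne_zero hn⟩ 1
  have hF : ContDiff ℝ (⊤ : ℕ∞) F :=
    contDiff_besselSeries (by linarith [n.cast_nonneg (α := ℝ)])
  have hF' : Differentiable ℝ F := hF.differentiable (by simp)
  have hψ := contDiff_dipoleMode hF l a
  refine ⟨dipoleMode F l a, hψ.contDiffOn, ?_, fun x hx => ?_, fun x hx => ?_⟩
  · by_contra! hzero
    have hlocal : dipoleMode F l a =ᶠ[𝓝 0] fun _ => 0 := by
      filter_upwards [ball_mem_nhds _ hR] with x hx using hzero x (ball_subset_closedBall hx)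
    have hgrad := ((hasGradientAt_dipoleMode (hF' _).hasDerivAt a).congr_of_eventuallyEq
      hlocal.symm).unique (hasGradientAt_const (0 : EuclideanSpace ℝ (Fin n)) (0 : ℝ))
    simp [F, besselSeries_zero, a] at hgrad
  · rw [lapWithin_eq_laplacian (closedBall_mem_nhds_of_mem hx)
      (hψ.contDiffAt.of_le (by norm_cast))]
    have heigen := laplacian_dipoleMode_besselSeries l a x
    rwa [hdim] at heigen
  · have hψx := (hψ.differentiable (by simp)) x
    rw [hψx.fderivWithin (uniqueDiffOn_closedBall hR x (mem_closedBall_zero_iff.2 hx.le)), map_smul,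
      ← inner_gradient_left, real_inner_comm, inner_gradient_dipoleMode (hF' _), hx, hflux,
      mul_zero, smul_zero]

theorem hyperplaneNonneg_of_mem_lowerBounds {μ : ℝ} (hn : n ≠ 0) (hR : 0 < R) (hμ : 0 < μ)
    (hlow : μ ∈ lowerBounds {ν : ℝ | 0 < ν ∧ IsLapNeumannEigenvalueBall n R ν}) :
    HyperplaneNonneg μ (ball (0 : EuclideanSpace ℝ (Fin n)) R) := by
  refine hyperplaneNonneg_of_dipoleFlux_ne_zero hR hμ fun z hz hflux => ?_
  rw [finrank_euclideanSpace_fin] at hflux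
  have heigen : IsLapNeumannEigenvalueBall n R (z / R ^ 2) :=
    isLapNeumannEigenvalueBall_of_dipoleFlux_eq_zero hn hR
      (by rwa [div_mul_cancel₀ _ (pow_ne_zero 2 hR.ne')])
  have hle := (le_div_iff₀ (by positivity)).1 (hlow ⟨div_pos hz.1 (by positivity), heigen⟩)
  exact hle.not_gt hz.2

end EuclideanLaplacian

section BallDivergence

variable {E : Type*} [NormedAddCommGroup E] {R : ℝ} {f g : E → ℝ}

/-- Functions on the ball of radius `R` that are `O(R - ‖x‖)` at the boundary sphere. -/
def VanishesAtSphere (R : ℝ) (f : E → ℝ) : Prop :=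
  ∃ K, ∀ x ∈ ball (0 : E) R, |f x| ≤ K * (R - ‖x‖)

lemma VanishesAtSphere.mul (hg : BoundedContOn g (ball 0 R)) (hf : VanishesAtSphere R f) :
    VanishesAtSphere R fun x => g x * f x := by
  obtain ⟨C, hC, hgC⟩ := hg.exists_bound
  obtain ⟨K, hK⟩ := hf
  refine ⟨C * K, fun x hx => ?_⟩
  rw [abs_mul, mul_assoc]
  exact mul_le_mul (hgC x hx) (hK x hx) (abs_nonneg _) hC

variable [InnerProductSpace ℝ E] [FiniteDimensional ℝ E] [MeasurableSpace E] [BorelSpace E]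
  {W : E → E}

lemma BoundedContOn.integrableOn_ball (hf : BoundedContOn f (ball 0 R)) :
    IntegrableOn f (ball 0 R) :=
  hf.integrableOn measurableSet_ball measure_ball_lt_top.ne

lemma integral_divergence_ball_nonneg (hR : 0 < R) (hW : ContDiffOn ℝ 1 W (ball 0 R))
    (hint : IntegrableOn (divergence W) (ball 0 R))
    (hflux : VanishesAtSphere R fun x => ⟪x, W x⟫) :
    0 ≤ ∫ x in ball 0 R, divergence W x := by
  obtain ⟨K, hK⟩ := hflux
  have hK0 : 0 ≤ K := by
    have h0 : |⟪(0 : E), W 0⟫| ≤ K * (R - ‖(0 : E)‖) := hK 0 (mem_ball_self hR)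
    rw [inner_zero_left, abs_zero, norm_zero, sub_zero] at h0
    exact nonneg_of_mul_nonneg_left h0 hR
  have hset : {x : E | 0 < R ^ 2 - ‖x‖ ^ 2} = ball 0 R := by
    ext x
    rw [mem_ofPred_eq, mem_ball_zero_iff, sub_pos, sq_lt_sq₀ (norm_nonneg _) hR.le]
  have key := setIntegral_superlevel_nonneg_of_divergence_le (C := 2 * K / R)
    (contDiff_const.sub (contDiff_norm_sq ℝ)) (by rw [hset]; exact isBounded_ball)
    (by rwa [hset]) (by rwa [hset]) (fun _ _ => le_rfl) fun x hx => ?_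
  · rwa [hset] at key
  have hxR : x ∈ ball 0 R := hset ▸ hx
  have hnorm := mem_ball_zero_iff.1 hxR
  rw [(hasGradientAt_sub (hasGradientAt_const x (R ^ 2)) (hasGradientAt_norm_sq x)).gradient,
    zero_sub, inner_neg_left, real_inner_smul_left]
  calc -(2 * ⟪x, W x⟫) ≤ 2 * |⟪x, W x⟫| := by linarith [neg_abs_le ⟪x, W x⟫]
    _ ≤ 2 * (K * (R - ‖x‖)) := by gcongr; exact hK x hxR
    _ ≤ 2 * (K * (R - ‖x‖)) * ((R + ‖x‖) / R) :=
      le_mul_of_one_le_right (mul_nonneg zero_le_two (mul_nonneg hK0 (sub_pos.2 hnorm).le))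
        ((one_le_div hR).2 (le_add_of_nonneg_right (norm_nonneg x)))
    _ = 2 * K / R * (R ^ 2 - ‖x‖ ^ 2) := by ring

theorem integral_divergence_ball_eq_zero (hR : 0 < R) (hW : ContDiffOn ℝ 1 W (ball 0 R))
    (hint : IntegrableOn (divergence W) (ball 0 R))
    (hflux : VanishesAtSphere R fun x => ⟪x, W x⟫) :
    ∫ x in ball 0 R, divergence W x = 0 := by
  have hneg := integral_divergence_ball_nonneg (W := fun x => -W x) hR hW.neg
    (by simp only [funext (divergence_neg W)]; exact hint.neg)
    (by simpa only [VanishesAtSphere, inner_neg_right, abs_neg] using hflux)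
  simp only [divergence_neg, integral_neg] at hneg
  exact (neg_nonneg.1 hneg).antisymm (integral_divergence_ball_nonneg hR hW hint hflux)

theorem integral_finrank_mul_add_inner_gradient_eq_zero (hR : 0 < R)
    (hf : BoundedC1On f (ball 0 R)) (hf0 : VanishesAtSphere R f) :
    ∫ x in ball 0 R, (Module.finrank ℝ E * f x + ⟪∇ f x, x⟫) = 0 := by
  have hid : BoundedContOn (fun x : E => x) (ball 0 R) := boundedContOn_id isBounded_ball
  have hdiv (x : E) (hx : x ∈ ball 0 R) :
      divergence (fun y => f y • y) x = Module.finrank ℝ E * f x + ⟪∇ f x, x⟫ := by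
    rw [divergence_smul (hf.hasGradientAt hx) differentiableAt_fun_id, divergence_id, mul_comm]
  have hbdd : BoundedContOn (divergence fun y => f y • y) (ball 0 R) :=
    (((BoundedContOn.const _).mul hf.boundedContOn).add
      (hf.boundedContOn_gradient.inner hid)).congr hdiv
  rw [← setIntegral_congr_fun measurableSet_ball hdiv]
  refine integral_divergence_ball_eq_zero hR ((hf.contDiffOn isOpen_ball).smul contDiffOn_id)
    hbdd.integrableOn_ball ?_
  convert hf0.mul (hid.inner hid) using 2 with x
  rw [real_inner_smul_right, mul_comm]

end BallDivergence

section RadialPotential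

variable {E : Type*} [NormedAddCommGroup E] [InnerProductSpace ℝ E] {v : E → ℝ}

/-- The function `G` with `div (G x • x) = v` on a ball around the origin. -/
def radialPotential (v : E → ℝ) (x : E) : ℝ :=
  ∫ t in (0 : ℝ)..1, t ^ (Module.finrank ℝ E - 1) * v (t • x)

lemma isRadial_radialPotential (hv : IsRadial v) : IsRadial (radialPotential v) := by
  intro x y hxy
  have hdil (t : ℝ) : v (t • x) = v (t • y) := hv _ _ (by rw [norm_smul, norm_smul, hxy])
  simp only [radialPotential, hdil]

variable [FiniteDimensional ℝ E] {G : E → ℝ} {R : ℝ} {x : E}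

lemma boundedC1On_radialPotential (hv : BoundedC1On v (ball 0 R)) :
    BoundedC1On (radialPotential v) (ball 0 R) := by
  let k := Module.finrank ℝ E - 1
  have hfam : BoundedC1Family
      (fun (t : unitInterval) x => (t : ℝ) ^ k * v (((t : ℝ) • ContinuousLinearMap.id ℝ E) x))
      (ball 0 R) := by
    refine boundedC1Family_mul_comp (boundedContOn_of_isCompact isCompact_univ (by fun_prop))
      (by fun_prop) (fun t x hx => ?_) ⟨1, fun t => ?_⟩ hv
    · simp only [smul_apply, ContinuousLinearMap.id_apply, mem_ball_zero_iff,
        norm_smul, Real.norm_of_nonneg t.2.1] at hx ⊢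
      exact (mul_le_of_le_one_left (norm_nonneg x) t.2.2).trans_lt hx
    · rw [norm_smul, Real.norm_of_nonneg t.2.1]
      exact mul_le_one₀ t.2.2 (norm_nonneg _) ContinuousLinearMap.norm_id_le
  convert hfam.integral (ν := volume) isOpen_ball using 2 with x
  rw [radialPotential, intervalIntegral.integral_of_le zero_le_one,
    ← integral_Icc_eq_integral_Ioc]
  exact (integral_subtype measurableSet_Icc fun t => t ^ k * v (t • x)).symm

-- Differentiate `r ^ n * G (r • x) = ∫ s in 0..r, s ^ (n - 1) * v (s • x)` at `r = 1`.
lemma finrank_mul_radialPotential_add_inner_gradient [Nontrivial E]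
    (hv : BoundedC1On v (ball 0 R)) (hx : x ∈ ball 0 R) :
    Module.finrank ℝ E * radialPotential v x + ⟪∇ (radialPotential v) x, x⟫ = v x := by
  obtain ⟨k, hk⟩ : ∃ k, Module.finrank ℝ E = k + 1 :=
    Nat.exists_eq_succ_of_ne_zero Module.finrank_pos.ne'
  let φ : ℝ → ℝ := fun s => s ^ k * v (s • x)
  let S : Set ℝ := (fun s : ℝ => s • x) ⁻¹' ball 0 R
  have hS : IsOpen S := isOpen_ball.preimage (by fun_prop)
  have h0 : (0 : E) ∈ ball 0 R := mem_ball_self (pos_of_mem_ball hx)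
  have hIcc : uIcc 0 1 ⊆ S := by
    rw [uIcc_of_le zero_le_one]
    exact fun s hs => ((convex_ball 0 R).starConvex h0).smul_mem hx hs.1 hs.2
  have h1S : (1 : ℝ) ∈ S := hIcc right_mem_uIcc
  have hφ : ContinuousOn φ S := (continuousOn_pow k).mul
    (hv.boundedContOn.continuousOn.comp (by fun_prop) (mapsTo_preimage _ _))
  have hscale (r : ℝ) :
      r ^ (k + 1) * radialPotential v (r • x) = ∫ s in (0 : ℝ)..r, φ s := by
    have hsub := intervalIntegral.mul_integral_comp_mul_left (a := 0) (b := 1) (f := φ) r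
    rw [mul_zero, mul_one] at hsub
    rw [← hsub, radialPotential, hk, pow_succ', mul_assoc, ← intervalIntegral.integral_const_mul]
    simp only [φ, mul_pow, mul_assoc, smul_smul, mul_comm _ r, Nat.add_sub_cancel]
  have hint := intervalIntegral.integral_hasDerivAt_right
    (hφ.mono hIcc).intervalIntegrable (hφ.stronglyMeasurableAtFilter hS 1 h1S)
    (hφ.continuousAt (hS.mem_nhds h1S))
  have hG : HasDerivAt (fun r : ℝ => radialPotential v (r • x))
      ⟪∇ (radialPotential v) x, x⟫ 1 := by
    have hgrad := ((boundedC1On_radialPotential hv).hasGradientAt hx).hasFDerivAt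
    have hline := (hasDerivAt_id (1 : ℝ)).smul_const x
    rw [one_smul] at hline
    exact (hgrad.comp_hasDerivAt_of_eq 1 hline (one_smul ℝ x).symm)
  have hprod := (hasDerivAt_pow (k + 1) (1 : ℝ)).mul hG
  simp only [Pi.mul_def, hscale] at hprod
  simpa [φ, hk] using hprod.unique hint

lemma IsRadial.gradient_mem_span_singleton (hG : IsRadial G) (hd : DifferentiableAt ℝ G x) :
    ∇ G x ∈ ℝ ∙ x := by
  have hσx : (ℝ ∙ x).reflection x = x :=
    Submodule.reflection_mem_subspace_eq_self (Submodule.mem_span_singleton_self x)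
  have hgrad := hasGradientAt_comp_linearIsometryEquiv (u := G) (ℝ ∙ x).reflection
    (x := x) (by rw [hσx]; exact hd.hasGradientAt)
  have hinv : (fun y => G ((ℝ ∙ x).reflection y)) = G :=
    funext fun y => hG _ _ (LinearIsometryEquiv.norm_map _ y)
  rw [hinv, Submodule.reflection_symm] at hgrad
  exact (Submodule.reflection_eq_self_iff _).1 (hgrad.unique hd.hasGradientAt)

lemma IsRadial.norm_sq_mul_norm_gradient_sq (hG : IsRadial G) (hd : DifferentiableAt ℝ G x) :
    ‖x‖ ^ 2 * ‖∇ G x‖ ^ 2 = ⟪∇ G x, x⟫ ^ 2 := by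
  obtain ⟨c, hc⟩ := Submodule.mem_span_singleton.1 (hG.gradient_mem_span_singleton hd)
  rw [← hc, norm_smul, real_inner_smul_left, real_inner_self_eq_norm_sq, mul_pow,
    Real.norm_eq_abs, sq_abs]
  ring

variable [Nontrivial E]

lemma IsRadial.exists_vanishesAtSphere_sub (hG : IsRadial G) (hd : BoundedC1On G (ball 0 R)) :
    ∃ γ, VanishesAtSphere R fun x => G x - γ := by
  obtain ⟨K, hK⟩ := hd.exists_lipschitzOnWith (convex_ball 0 R)
  obtain ⟨g, hg, hgG⟩ := hK.extend_real
  obtain ⟨e, he⟩ := exists_norm_eq E zero_le_one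
  refine ⟨g (R • e), K, fun x hx => ?_⟩
  have hxe : ‖‖x‖ • e‖ = ‖x‖ := by rw [norm_smul, he, mul_one, norm_norm]
  have hx' : ‖x‖ • e ∈ ball 0 R := by rwa [mem_ball_zero_iff, hxe, ← mem_ball_zero_iff]
  have hdist := hg.dist_le_mul (‖x‖ • e) (R • e)
  rwa [dist_eq_norm (‖x‖ • e), ← sub_smul, norm_smul, he, mul_one, Real.norm_eq_abs, abs_sub_comm,
    abs_of_pos (sub_pos.2 (mem_ball_zero_iff.1 hx)), ← hgG hx', hG _ _ hxe, Real.dist_eq] at hdist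

variable [MeasurableSpace E] [BorelSpace E]

theorem IsRadial.vanishesAtSphere_radialPotential (hR : 0 < R) (hrad : IsRadial v)
    (hv : BoundedC1On v (ball 0 R)) (hmean : ∫ x in ball 0 R, v x = 0) :
    VanishesAtSphere R (radialPotential v) := by
  obtain ⟨γ, hγ⟩ := (isRadial_radialPotential hrad).exists_vanishesAtSphere_sub
    (boundedC1On_radialPotential hv)
  have hzero := integral_finrank_mul_add_inner_gradient_eq_zero hR
    ((boundedC1On_radialPotential hv).sub (boundedC1On_const γ)) hγ
  have heuler (x : E) (hx : x ∈ ball 0 R) :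
      Module.finrank ℝ E * (radialPotential v x - γ) +
        ⟪∇ (fun y => radialPotential v y - γ) x, x⟫ = v x - Module.finrank ℝ E * γ := by
    rw [(hasGradientAt_sub ((boundedC1On_radialPotential hv).hasGradientAt hx)
      (hasGradientAt_const x γ)).gradient, sub_zero,
      ← finrank_mul_radialPotential_add_inner_gradient hv hx]
    ring
  rw [setIntegral_congr_fun measurableSet_ball heuler,
    integral_sub hv.boundedContOn.integrableOn_ball
      (BoundedContOn.const _).integrableOn_ball, hmean, zero_sub, neg_eq_zero,
    setIntegral_const, smul_eq_mul] at hzero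
  have hvol : volume.real (ball (0 : E) R) ≠ 0 :=
    (ENNReal.toReal_pos (measure_ball_pos _ _ hR).ne' measure_ball_lt_top.ne).ne'
  have hdim : (Module.finrank ℝ E : ℝ) ≠ 0 := Nat.cast_ne_zero.2 Module.finrank_pos.ne'
  have hγ0 : γ = 0 := by simpa [hvol, hdim] using hzero
  simpa only [hγ0, sub_zero] using hγ

end RadialPotential

section Poincare

variable {E : Type*} [NormedAddCommGroup E] [InnerProductSpace ℝ E] [FiniteDimensional ℝ E]
  {G u v : E → ℝ} {μ R : ℝ}

lemma IsRadial.sum_neumannDensity_inner_mul {ι : Type*} [Fintype ι] (b : OrthonormalBasis ι ℝ E)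
    (μ : ℝ) (hG : IsRadial G) {x : E} (hd : DifferentiableAt ℝ G x) :
    ∑ i, neumannDensity μ (fun y => ⟪b i, y⟫ * G y) (fun y => ⟪b i, y⟫ * G y) x =
      ⟪∇ G x, x⟫ ^ 2 + 2 * (G x * ⟪∇ G x, x⟫) + Module.finrank ℝ E * G x ^ 2 -
        μ * (‖x‖ ^ 2 * G x ^ 2) := by
  have hterm (i : ι) : neumannDensity μ (fun y => ⟪b i, y⟫ * G y) (fun y => ⟪b i, y⟫ * G y) x =
      ⟪b i, x⟫ ^ 2 * (‖∇ G x‖ ^ 2 - μ * G x ^ 2) +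
        ⟪∇ G x, b i⟫ * ⟪b i, x⟫ * (2 * G x) + G x ^ 2 := by
    rw [neumannDensity_self,
      (hasGradientAt_mul (hasGradientAt_inner (b i) x) hd.hasGradientAt).gradient,
      norm_add_sq_real, real_inner_smul_left, real_inner_smul_right, norm_smul, norm_smul,
      b.norm_eq_one, mul_pow, mul_pow, Real.norm_eq_abs, Real.norm_eq_abs, sq_abs, sq_abs]
    ring
  rw [Finset.sum_congr rfl fun i _ => hterm i, Finset.sum_add_distrib, Finset.sum_add_distrib,
    ← Finset.sum_mul, ← Finset.sum_mul, b.sum_sq_inner_right, b.sum_inner_mul_inner,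
    Finset.sum_const, Finset.card_univ, nsmul_eq_mul, ← Module.finrank_eq_card_basis b.toBasis,
    mul_sub, hG.norm_sq_mul_norm_gradient_sq hd]
  ring

-- Equivalent to `0 ≤ ‖∇ v x + (μ * c) • x‖ ^ 2`.
lemma le_neumannDensity_self (μ c : ℝ) (v : E → ℝ) (x : E) :
    μ * (v x ^ 2 - μ * (‖x‖ ^ 2 * c ^ 2)) - 2 * μ * (v x ^ 2 + c * ⟪∇ v x, x⟫) ≤
      neumannDensity μ v v x := by
  have hsq := norm_add_sq_real (∇ v x) ((μ * c) • x)
  rw [real_inner_smul_right, norm_smul, mul_pow, Real.norm_eq_abs, sq_abs] at hsq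
  rw [neumannDensity_self]
  linarith [sq_nonneg ‖∇ v x + (μ * c) • x‖]

variable [MeasurableSpace E] [BorelSpace E]

lemma HyperplaneNonneg.integral_sq_sub_nonneg (h : HyperplaneNonneg μ (ball (0 : E) R))
    (hR : 0 < R) (hG : IsRadial G) (hd : BoundedC1On G (ball 0 R)) (hG0 : VanishesAtSphere R G)
    (hGv : ∀ x ∈ ball 0 R, Module.finrank ℝ E * G x + ⟪∇ G x, x⟫ = v x) :
    0 ≤ ∫ x in ball 0 R, (v x ^ 2 - μ * (‖x‖ ^ 2 * G x ^ 2)) := by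
  let n : ℝ := Module.finrank ℝ E
  have hid : BoundedContOn (fun x : E => x) (ball 0 R) := boundedContOn_id isBounded_ball
  have hv : BoundedContOn v (ball 0 R) := (((BoundedContOn.const n).mul hd.boundedContOn).add
    (hd.boundedContOn_gradient.inner hid)).congr fun x hx => (hGv x hx).symm
  let b := stdOrthonormalBasis ℝ E
  have hcoord (i) : BoundedC1On (fun x => ⟪b i, x⟫ * G x) (ball 0 R) :=
    (boundedC1On_inner (b i) isBounded_ball).mul hd
  have hsum : 0 ≤ ∑ i, neumannForm μ (ball 0 R) (fun x => ⟪b i, x⟫ * G x)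
      fun x => ⟪b i, x⟫ * G x :=
    Finset.sum_nonneg fun i _ => h (b i) (b.orthonormal.ne_zero i) _ (hcoord i)
      fun x _ hx => by rw [hx, zero_mul]
  have hzero : ∫ x in ball 0 R, (n * (G x * G x) + ⟪∇ (fun y => G y * G y) x, x⟫) = 0 :=
    integral_finrank_mul_add_inner_gradient_eq_zero hR (hd.mul hd) (hG0.mul hd.boundedContOn)
  have hpointwise (x : E) (hx : x ∈ ball 0 R) :
      ∑ i, neumannDensity μ (fun y => ⟪b i, y⟫ * G y) (fun y => ⟪b i, y⟫ * G y) x =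
        v x ^ 2 - μ * (‖x‖ ^ 2 * G x ^ 2) -
          (n - 1) * (n * (G x * G x) + ⟪∇ (fun y => G y * G y) x, x⟫) := by
    have hGx := hd.hasGradientAt hx
    rw [hG.sum_neumannDensity_inner_mul b μ hGx.differentiableAt, ← hGv x hx,
      (hasGradientAt_mul hGx hGx).gradient, inner_add_left, real_inner_smul_left]
    ring
  simp only [neumannForm] at hsum
  rw [← integral_finsetSum _ fun i _ =>
      ((hcoord i).neumannDensity μ (hcoord i)).integrableOn_ball,
    setIntegral_congr_fun measurableSet_ball hpointwise, integral_sub ?_ ?_,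
    integral_const_mul, hzero, mul_zero, sub_zero] at hsum
  · exact hsum
  · exact (hv.sq.sub ((BoundedContOn.const μ).mul
      (hid.norm.sq.mul hd.boundedContOn.sq))).integrableOn_ball
  · exact ((BoundedContOn.const _).mul (((BoundedContOn.const n).mul
      (hd.mul hd).boundedContOn).add
        ((hd.mul hd).boundedContOn_gradient.inner hid))).integrableOn_ball

lemma integral_sq_add_mul_inner_gradient_eq_zero (hR : 0 < R) (hd : BoundedC1On G (ball 0 R))
    (hG0 : VanishesAtSphere R G) (hv : BoundedC1On v (ball 0 R))
    (hGv : ∀ x ∈ ball 0 R, Module.finrank ℝ E * G x + ⟪∇ G x, x⟫ = v x) :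
    ∫ x in ball 0 R, (v x ^ 2 + G x * ⟪∇ v x, x⟫) = 0 := by
  rw [← integral_finrank_mul_add_inner_gradient_eq_zero hR (hv.mul hd)
    (hG0.mul hv.boundedContOn)]
  refine setIntegral_congr_fun measurableSet_ball fun x hx => ?_
  rw [(hasGradientAt_mul (hv.hasGradientAt hx) (hd.hasGradientAt hx)).gradient, inner_add_left,
    real_inner_smul_left, real_inner_smul_left, sq]
  nth_rw 2 [← hGv x hx]
  ring

variable [Nontrivial E]

theorem HyperplaneNonneg.neumannForm_nonneg_of_isRadial
    (h : HyperplaneNonneg μ (ball (0 : E) R)) (hR : 0 < R) (hμ : 0 < μ) (hrad : IsRadial v)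
    (hv : BoundedC1On v (ball 0 R)) (hmean : ∫ x in ball 0 R, v x = 0) :
    0 ≤ neumannForm μ (ball 0 R) v v := by
  let G := radialPotential v
  have hG : BoundedC1On G (ball 0 R) := boundedC1On_radialPotential hv
  have hG0 : VanishesAtSphere R G := hrad.vanishesAtSphere_radialPotential hR hv hmean
  have heuler (x : E) (hx : x ∈ ball 0 R) := finrank_mul_radialPotential_add_inner_gradient hv hx
  have hnonneg := h.integral_sq_sub_nonneg hR (isRadial_radialPotential hrad) hG hG0 heuler
  have hzero := integral_sq_add_mul_inner_gradient_eq_zero hR hG hG0 hv heuler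
  have hid : BoundedContOn (fun x : E => x) (ball 0 R) := boundedContOn_id isBounded_ball
  have hA : IntegrableOn (fun x => v x ^ 2 - μ * (‖x‖ ^ 2 * G x ^ 2)) (ball 0 R) :=
    (hv.boundedContOn.sq.sub ((BoundedContOn.const μ).mul
      (hid.norm.sq.mul hG.boundedContOn.sq))).integrableOn_ball
  have hB : IntegrableOn (fun x => v x ^ 2 + G x * ⟪∇ v x, x⟫) (ball 0 R) :=
    (hv.boundedContOn.sq.add
      (hG.boundedContOn.mul (hv.boundedContOn_gradient.inner hid))).integrableOn_ball
  calc 0 ≤ μ * ∫ x in ball 0 R, (v x ^ 2 - μ * (‖x‖ ^ 2 * G x ^ 2)) := by positivity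
    _ = ∫ x in ball 0 R, (μ * (v x ^ 2 - μ * (‖x‖ ^ 2 * G x ^ 2)) -
          2 * μ * (v x ^ 2 + G x * ⟪∇ v x, x⟫)) := by
      rw [integral_sub (hA.const_mul μ) (hB.const_mul _), integral_const_mul, integral_const_mul,
        hzero, mul_zero, sub_zero]
    _ ≤ neumannForm μ (ball 0 R) v v :=
      setIntegral_mono_on ((hA.const_mul μ).sub (hB.const_mul _))
        (hv.neumannDensity μ hv).integrableOn_ball measurableSet_ball
        fun x _ => le_neumannDensity_self μ (G x) v x

theorem HyperplaneNonneg.neumannForm_nonneg (h : HyperplaneNonneg μ (ball (0 : E) R))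
    (hR : 0 < R) (hμ : 0 < μ) (hu : BoundedC1On u (ball 0 R))
    (hmean : ∫ x in ball 0 R, u x = 0) : 0 ≤ neumannForm μ (ball 0 R) u u := by
  obtain ⟨v, hv, hrad, hint, hle⟩ := h.exists_isRadial hu
  exact (h.neumannForm_nonneg_of_isRadial hR hμ hrad hv (hint.trans hmean)).trans hle

end Poincare

section NeumannFunction

variable {E : Type*} [NormedAddCommGroup E] [InnerProductSpace ℝ E] [FiniteDimensional ℝ E]
  {R μ : ℝ} {v : E → ℝ}

/-- Functions on the ball of radius `R` satisfying the Neumann boundary condition, with bounded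
derivatives up to the Laplacian. The condition `∂v/∂n = 0` on the sphere is encoded as the decay
rate of the radial derivative, which does not refer to derivatives at boundary points. -/
structure IsNeumannFunction (R : ℝ) (v : E → ℝ) : Prop where
  boundedC1On : BoundedC1On v (ball 0 R)
  contDiffOn_gradient : ContDiffOn ℝ 1 (∇ v) (ball 0 R)
  boundedContOn_laplacian : BoundedContOn (Δ v) (ball 0 R)
  vanishesAtSphere : VanishesAtSphere R fun x => ⟪x, ∇ v x⟫

namespace IsNeumannFunction

lemma differentiableAt_gradient (hv : IsNeumannFunction R v) {x : E} (hx : x ∈ ball 0 R) :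
    DifferentiableAt ℝ (∇ v) x :=
  (hv.contDiffOn_gradient.differentiableOn one_ne_zero).differentiableAt (isOpen_ball.mem_nhds hx)

variable [MeasurableSpace E] [BorelSpace E]

lemma integral_laplacian_eq_zero (hv : IsNeumannFunction R v) (hR : 0 < R) :
    ∫ x in ball 0 R, Δ v x = 0 := by
  have hdiv : divergence (∇ v) = Δ v := funext (divergence_gradient v)
  rw [← hdiv]
  exact integral_divergence_ball_eq_zero hR hv.contDiffOn_gradient
    (hdiv ▸ hv.boundedContOn_laplacian.integrableOn_ball) hv.vanishesAtSphere

lemma integral_mul_laplacian_add_norm_gradient_sq_eq_zero (hv : IsNeumannFunction R v)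
    (hR : 0 < R) : ∫ x in ball 0 R, (v x * Δ v x + ‖∇ v x‖ ^ 2) = 0 := by
  have hdiv (x : E) (hx : x ∈ ball 0 R) :
      divergence (fun y => v y • ∇ v y) x = v x * Δ v x + ‖∇ v x‖ ^ 2 := by
    rw [divergence_smul (hv.boundedC1On.hasGradientAt hx) (hv.differentiableAt_gradient hx),
      divergence_gradient, real_inner_self_eq_norm_sq]
  have hbdd : BoundedContOn (divergence fun y => v y • ∇ v y) (ball 0 R) :=
    ((hv.boundedC1On.boundedContOn.mul hv.boundedContOn_laplacian).add
      hv.boundedC1On.boundedContOn_gradient.norm.sq).congr hdiv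
  rw [← setIntegral_congr_fun measurableSet_ball hdiv]
  refine integral_divergence_ball_eq_zero hR
    ((hv.boundedC1On.contDiffOn isOpen_ball).smul hv.contDiffOn_gradient)
    hbdd.integrableOn_ball ?_
  simpa only [real_inner_smul_right] using
    hv.vanishesAtSphere.mul hv.boundedC1On.boundedContOn

lemma integral_laplacian_sq (hv : IsNeumannFunction R v) (hR : 0 < R) (μ : ℝ) :
    ∫ x in ball 0 R, Δ v x ^ 2 = (μ ^ 2 * ∫ x in ball 0 R, v x ^ 2) +
      (∫ x in ball 0 R, (Δ v x + μ * v x) ^ 2) + 2 * μ * neumannForm μ (ball 0 R) v v := by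
  have hv₀ := hv.boundedC1On.boundedContOn
  have hsq := hv₀.sq.integrableOn_ball.const_mul (μ ^ 2)
  have hshift := (hv.boundedContOn_laplacian.add
    ((BoundedContOn.const μ).mul hv₀)).sq.integrableOn_ball
  have hform := (hv.boundedC1On.neumannDensity μ hv.boundedC1On).integrableOn_ball.const_mul (2 * μ)
  have hgreen := ((hv₀.mul hv.boundedContOn_laplacian).add
    hv.boundedC1On.boundedContOn_gradient.norm.sq).integrableOn_ball.const_mul (2 * μ)
  have hpointwise (x : E) : Δ v x ^ 2 = μ ^ 2 * v x ^ 2 + (Δ v x + μ * v x) ^ 2 +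
      2 * μ * neumannDensity μ v v x - 2 * μ * (v x * Δ v x + ‖∇ v x‖ ^ 2) := by
    rw [neumannDensity_self]
    ring
  have hsum : IntegrableOn (fun x => μ ^ 2 * v x ^ 2 + (Δ v x + μ * v x) ^ 2 +
      2 * μ * neumannDensity μ v v x) (ball 0 R) := (hsq.add hshift).add hform
  simp only [hpointwise]
  rw [integral_sub hsum hgreen,
    integral_const_mul (2 * μ) fun x => v x * Δ v x + ‖∇ v x‖ ^ 2,
    hv.integral_mul_laplacian_add_norm_gradient_sq_eq_zero hR, mul_zero, sub_zero, neumannForm,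
    ← integral_const_mul, ← integral_const_mul, ← integral_add hsq hshift]
  exact integral_add (hsq.add hshift) hform

lemma sq_mul_integral_sq_le (hv : IsNeumannFunction R v) (hR : 0 < R) (hμ : 0 ≤ μ)
    (hform : 0 ≤ neumannForm μ (ball 0 R) v v) :
    μ ^ 2 * ∫ x in ball 0 R, v x ^ 2 ≤ ∫ x in ball 0 R, Δ v x ^ 2 := by
  rw [hv.integral_laplacian_sq hR μ]
  have hshift : 0 ≤ ∫ x in ball 0 R, (Δ v x + μ * v x) ^ 2 :=
    integral_nonneg fun x => sq_nonneg _
  linarith [mul_nonneg (mul_nonneg zero_le_two hμ) hform]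

lemma laplacian_eq_of_integral_sq_le (hv : IsNeumannFunction R v) (hR : 0 < R) (hμ : 0 ≤ μ)
    (hform : 0 ≤ neumannForm μ (ball 0 R) v v)
    (hle : ∫ x in ball 0 R, Δ v x ^ 2 ≤ μ ^ 2 * ∫ x in ball 0 R, v x ^ 2) :
    EqOn (Δ v) (fun x => -μ * v x) (ball 0 R) := by
  rw [hv.integral_laplacian_sq hR μ] at hle
  have hbdd : BoundedContOn (fun x => (Δ v x + μ * v x) ^ 2) (ball 0 R) :=
    (hv.boundedContOn_laplacian.add
      ((BoundedContOn.const μ).mul hv.boundedC1On.boundedContOn)).sq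
  have hzero : ∫ x in ball 0 R, (Δ v x + μ * v x) ^ 2 = 0 :=
    le_antisymm (by linarith [mul_nonneg (mul_nonneg zero_le_two hμ) hform])
      (integral_nonneg fun x => sq_nonneg _)
  rw [integral_eq_zero_iff_of_nonneg (fun x => sq_nonneg _) hbdd.integrableOn_ball] at hzero
  have heq := Measure.eqOn_open_of_ae_eq hzero isOpen_ball hbdd.continuousOn continuousOn_const
  intro x hx
  linarith [pow_eq_zero_iff two_ne_zero |>.1 (heq hx)]

end IsNeumannFunction

end NeumannFunction

section ClosedBall

variable {E : Type*} [NormedAddCommGroup E] {R : ℝ}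

lemma vanishesAtSphere_of_contDiffOn [NormedSpace ℝ E] [ProperSpace E] {f : E → ℝ} (hR : 0 < R)
    (hf : ContDiffOn ℝ 1 f (closedBall 0 R)) (hf0 : f 0 = 0) (hfR : ∀ x, ‖x‖ = R → f x = 0) :
    VanishesAtSphere R f := by
  obtain ⟨K, hK0, hK⟩ := (boundedContOn_of_isCompact (isCompact_closedBall 0 R)
    (hf.continuousOn_fderivWithin (uniqueDiffOn_closedBall hR) le_rfl)).exists_bound
  refine ⟨K, fun x hx => ?_⟩
  have hxR := mem_ball_zero_iff.1 hx
  rcases eq_or_ne x 0 with rfl | hx0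
  · rw [hf0, abs_zero, norm_zero, sub_zero]
    positivity
  have hnorm : 0 < ‖x‖ := norm_pos_iff.2 hx0
  set y := (R / ‖x‖) • x with hy
  have hyR : ‖y‖ = R := by
    rw [norm_smul, Real.norm_of_nonneg (by positivity), div_mul_cancel₀ _ hnorm.ne']
  have hdist : ‖x - y‖ = R - ‖x‖ := by
    have hxy : y - x = ((R - ‖x‖) / ‖x‖) • x := by
      rw [hy, sub_div, div_self hnorm.ne', sub_smul, one_smul]
    rw [norm_sub_rev, hxy, norm_smul,
      Real.norm_of_nonneg (div_nonneg (sub_nonneg.2 hxR.le) hnorm.le), div_mul_cancel₀ _ hnorm.ne']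
  have hmvt := (convex_closedBall (0 : E) R).norm_image_sub_le_of_norm_fderivWithin_le
    (hf.differentiableOn one_ne_zero) hK (mem_closedBall_zero_iff.2 hyR.le)
    (ball_subset_closedBall hx)
  rwa [hfR y hyR, sub_zero, hdist] at hmvt

variable [InnerProductSpace ℝ E] {v : E → ℝ}

lemma boundedC1On_of_contDiffOn_closedBall [FiniteDimensional ℝ E] (hR : 0 < R)
    (hv : ContDiffOn ℝ 1 v (closedBall 0 R)) : BoundedC1On v (ball 0 R) where
  differentiableAt x hx := (hv.differentiableOn one_ne_zero).differentiableAt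
    (closedBall_mem_nhds_of_mem hx)
  boundedContOn := (boundedContOn_of_isCompact (isCompact_closedBall 0 R) hv.continuousOn).mono
    ball_subset_closedBall
  boundedContOn_gradient := by
    obtain ⟨-, C, hC⟩ := boundedContOn_of_isCompact (isCompact_closedBall 0 R)
      (hv.continuousOn_fderivWithin (uniqueDiffOn_closedBall hR) le_rfl)
    refine ⟨(contDiffOn_gradient (n := 0) isOpen_ball
      (by simpa using hv.mono ball_subset_closedBall)).continuousOn, C, fun x hx => ?_⟩
    rw [norm_gradient, ← fderivWithin_closedBall_eq_fderiv v hx]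
    exact hC x (ball_subset_closedBall hx)

lemma vanishesAtSphere_inner_gradient [FiniteDimensional ℝ E] (hR : 0 < R)
    (hv : ContDiffOn ℝ 2 v (closedBall 0 R))
    (hb : ∀ x, ‖x‖ = R → fderivWithin ℝ v (closedBall 0 R) x (‖x‖⁻¹ • x) = 0) :
    VanishesAtSphere R fun x => ⟪x, ∇ v x⟫ := by
  have hN : ContDiffOn ℝ 1 (fun x => fderivWithin ℝ v (closedBall 0 R) x x) (closedBall 0 R) :=
    (hv.fderivWithin (uniqueDiffOn_closedBall hR) (by norm_num)).clm_apply contDiffOn_id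
  obtain ⟨K, hK⟩ := vanishesAtSphere_of_contDiffOn hR hN (map_zero _) fun x hx => by
    have hbx := hb x hx
    rw [map_smul, hx] at hbx
    exact (smul_eq_zero.1 hbx).resolve_left (inv_ne_zero hR.ne')
  refine ⟨K, fun x hx => ?_⟩
  dsimp only
  rw [real_inner_comm, inner_gradient_left, ← fderivWithin_closedBall_eq_fderiv v hx]
  exact hK x hx

end ClosedBall

section Polyharmonic

variable {n : ℕ} {R μ c : ℝ} {u v : EuclideanSpace ℝ (Fin n) → ℝ}

lemma contDiffOn_lapWithin {S : Set (EuclideanSpace ℝ (Fin n))} (hS : UniqueDiffOn ℝ S)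
    (hv : ContDiffOn ℝ (⊤ : ℕ∞) v S) : ContDiffOn ℝ (⊤ : ℕ∞) (lapWithin S v) S := by
  refine ContDiffOn.sum fun i _ => ?_
  have hpartial : ContDiffOn ℝ (⊤ : ℕ∞)
      (fun y => fderivWithin ℝ v S y (EuclideanSpace.single i 1)) S :=
    (hv.fderivWithin hS le_rfl).clm_apply contDiffOn_const
  exact (hpartial.fderivWithin hS le_rfl).clm_apply contDiffOn_const

lemma contDiffOn_iterate_lapWithin {S : Set (EuclideanSpace ℝ (Fin n))} (hS : UniqueDiffOn ℝ S)
    (hv : ContDiffOn ℝ (⊤ : ℕ∞) v S) (j : ℕ) :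
    ContDiffOn ℝ (⊤ : ℕ∞) ((lapWithin S)^[j] v) S := by
  induction j with
  | zero => exact hv
  | succ j ih => rw [Function.iterate_succ_apply']; exact contDiffOn_lapWithin hS ih

lemma lapWithin_closedBall_eq_laplacian (hv : ContDiffOn ℝ (⊤ : ℕ∞) v (closedBall 0 R)) :
    EqOn (lapWithin (closedBall 0 R) v) (Δ v) (ball 0 R) := fun x hx =>
  have hx' := closedBall_mem_nhds_of_mem hx
  lapWithin_eq_laplacian hx' ((hv.contDiffAt hx').of_le (by norm_cast))

lemma isNeumannFunction_of_contDiffOn (hR : 0 < R)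
    (hv : ContDiffOn ℝ (⊤ : ℕ∞) v (closedBall 0 R))
    (hb : ∀ x, ‖x‖ = R → fderivWithin ℝ v (closedBall 0 R) x (‖x‖⁻¹ • x) = 0) :
    IsNeumannFunction R v where
  boundedC1On := boundedC1On_of_contDiffOn_closedBall hR (hv.of_le (by norm_cast))
  contDiffOn_gradient := contDiffOn_gradient isOpen_ball
    ((hv.mono ball_subset_closedBall).of_le (by norm_cast))
  boundedContOn_laplacian :=
    ((boundedContOn_of_isCompact (isCompact_closedBall 0 R)
      (contDiffOn_lapWithin (uniqueDiffOn_closedBall hR) hv).continuousOn).mono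
        ball_subset_closedBall).congr (lapWithin_closedBall_eq_laplacian hv).symm
  vanishesAtSphere := vanishesAtSphere_inner_gradient hR (hv.of_le (by norm_cast)) hb

lemma iterate_lapWithin_eq_pow_mul (hR : 0 < R) (hu : ContDiffOn ℝ (⊤ : ℕ∞) u (closedBall 0 R))
    (heigen : ∀ x ∈ ball 0 R, lapWithin (closedBall 0 R) u x = c * u x) (j : ℕ) :
    ∀ x ∈ ball 0 R, (lapWithin (closedBall 0 R))^[j] u x = c ^ j * u x := by
  induction j with
  | zero => intro x _; rw [Function.iterate_zero_apply, pow_zero, one_mul]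
  | succ j ih =>
    intro x hx
    have hlocal : (lapWithin (closedBall 0 R))^[j] u =ᶠ[𝓝 x] c ^ j • u :=
      mem_of_superset (isOpen_ball.mem_nhds hx) ih
    have hu2 : ContDiffAt ℝ 2 u x :=
      (hu.contDiffAt (closedBall_mem_nhds_of_mem hx)).of_le (by norm_cast)
    rw [Function.iterate_succ_apply', lapWithin_closedBall_eq_laplacian
        (contDiffOn_iterate_lapWithin (uniqueDiffOn_closedBall hR) hu j) hx,
      (InnerProductSpace.laplacian_congr_nhds hlocal).eq_of_nhds,
      InnerProductSpace.laplacian_smul _ hu2, smul_eq_mul,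
      ← lapWithin_closedBall_eq_laplacian hu hx, heigen x hx]
    ring

lemma ne_zero_of_isLapNeumannEigenvalueBall (hR : 0 < R) (hμ : μ ≠ 0)
    (heigen : IsLapNeumannEigenvalueBall n R μ) : n ≠ 0 := by
  rintro rfl
  obtain ⟨u, -, ⟨x, -, hux⟩, hu, -⟩ := heigen
  have hx : x ∈ ball 0 R := Subsingleton.elim 0 x ▸ mem_ball_self hR
  have hzero : lapWithin (closedBall 0 R) u x = 0 := Finset.sum_empty
  exact mul_ne_zero (neg_ne_zero.2 hμ) hux ((hu x hx).symm.trans hzero)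

/-- The admissible functions of the Rayleigh quotient of order `m`: mean-zero functions, smooth up
to the sphere, with `∂(Δʲu)/∂n = 0` on the sphere for `j < m`. -/
structure IsPolyharmonicNeumann (m : ℕ) (R : ℝ) (u : EuclideanSpace ℝ (Fin n) → ℝ) : Prop where
  contDiffOn : ContDiffOn ℝ (⊤ : ℕ∞) u (closedBall 0 R)
  integral_eq_zero : ∫ x in ball 0 R, u x = 0
  fderivWithin_normal : ∀ j < m, ∀ x, ‖x‖ = R →
    fderivWithin ℝ ((lapWithin (closedBall 0 R))^[j] u) (closedBall 0 R) x (‖x‖⁻¹ • x) = 0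

namespace IsPolyharmonicNeumann

variable {m : ℕ}

lemma isNeumannFunction (hu : IsPolyharmonicNeumann (m + 1) R u) (hR : 0 < R) :
    IsNeumannFunction R u :=
  isNeumannFunction_of_contDiffOn hR hu.contDiffOn (hu.fderivWithin_normal 0 m.succ_pos)

lemma integral_lapWithin_sq (hu : IsPolyharmonicNeumann m R u) :
    ∫ x in ball 0 R, lapWithin (closedBall 0 R) u x ^ 2 = ∫ x in ball 0 R, Δ u x ^ 2 :=
  setIntegral_congr_fun measurableSet_ball fun _ hx =>
    congrArg (· ^ 2) (lapWithin_closedBall_eq_laplacian hu.contDiffOn hx)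

lemma lapWithin_closedBall (hu : IsPolyharmonicNeumann (m + 1) R u) (hR : 0 < R) :
    IsPolyharmonicNeumann m R (lapWithin (closedBall 0 R) u) where
  contDiffOn := contDiffOn_lapWithin (uniqueDiffOn_closedBall hR) hu.contDiffOn
  integral_eq_zero := (setIntegral_congr_fun measurableSet_ball
    (lapWithin_closedBall_eq_laplacian hu.contDiffOn)).trans
      ((hu.isNeumannFunction hR).integral_laplacian_eq_zero hR)
  fderivWithin_normal j hj := hu.fderivWithin_normal (j + 1) (Nat.succ_lt_succ hj)

variable [Nontrivial (EuclideanSpace ℝ (Fin n))]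

theorem pow_mul_integral_sq_le
    (h : HyperplaneNonneg μ (ball (0 : EuclideanSpace ℝ (Fin n)) R)) (hR : 0 < R) (hμ : 0 < μ)
    (hu : IsPolyharmonicNeumann m R u) :
    μ ^ (2 * m) * ∫ x in ball 0 R, u x ^ 2 ≤
      ∫ x in ball 0 R, (lapWithin (closedBall 0 R))^[m] u x ^ 2 := by
  induction m generalizing u with
  | zero => rw [Function.iterate_zero_apply, mul_zero, pow_zero, one_mul]
  | succ m ih =>
    have hN := hu.isNeumannFunction hR
    have hform := h.neumannForm_nonneg hR hμ hN.boundedC1On hu.integral_eq_zero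
    calc μ ^ (2 * (m + 1)) * ∫ x in ball 0 R, u x ^ 2
        = μ ^ (2 * m) * (μ ^ 2 * ∫ x in ball 0 R, u x ^ 2) := by ring
      _ ≤ μ ^ (2 * m) * ∫ x in ball 0 R, Δ u x ^ 2 :=
        mul_le_mul_of_nonneg_left (hN.sq_mul_integral_sq_le hR hμ.le hform) (by positivity)
      _ = μ ^ (2 * m) * ∫ x in ball 0 R, lapWithin (closedBall 0 R) u x ^ 2 := by
        rw [hu.integral_lapWithin_sq]
      _ ≤ ∫ x in ball 0 R, (lapWithin (closedBall 0 R))^[m + 1] u x ^ 2 :=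
        ih (hu.lapWithin_closedBall hR)

theorem lapWithin_eq_of_integral_sq_le
    (h : HyperplaneNonneg μ (ball (0 : EuclideanSpace ℝ (Fin n)) R)) (hR : 0 < R) (hμ : 0 < μ)
    (hu : IsPolyharmonicNeumann (m + 1) R u)
    (hle : ∫ x in ball 0 R, (lapWithin (closedBall 0 R))^[m + 1] u x ^ 2 ≤
      μ ^ (2 * (m + 1)) * ∫ x in ball 0 R, u x ^ 2) :
    ∀ x ∈ ball 0 R, lapWithin (closedBall 0 R) u x = -μ * u x := by
  have hN := hu.isNeumannFunction hR
  have hform := h.neumannForm_nonneg hR hμ hN.boundedC1On hu.integral_eq_zero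
  have hlap : ∫ x in ball 0 R, Δ u x ^ 2 ≤ μ ^ 2 * ∫ x in ball 0 R, u x ^ 2 := by
    refine le_of_mul_le_mul_left ?_ (pow_pos hμ (2 * m))
    calc μ ^ (2 * m) * ∫ x in ball 0 R, Δ u x ^ 2
        = μ ^ (2 * m) * ∫ x in ball 0 R, lapWithin (closedBall 0 R) u x ^ 2 := by
          rw [hu.integral_lapWithin_sq]
      _ ≤ ∫ x in ball 0 R, (lapWithin (closedBall 0 R))^[m + 1] u x ^ 2 :=
        pow_mul_integral_sq_le h hR hμ (hu.lapWithin_closedBall hR)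
      _ ≤ μ ^ (2 * (m + 1)) * ∫ x in ball 0 R, u x ^ 2 := hle
      _ = μ ^ (2 * m) * (μ ^ 2 * ∫ x in ball 0 R, u x ^ 2) := by ring
  exact fun x hx => (lapWithin_closedBall_eq_laplacian hu.contDiffOn hx).trans
    (hN.laplacian_eq_of_integral_sq_le hR hμ.le hform hlap hx)

end IsPolyharmonicNeumann

lemma integral_iterate_lapWithin_sq (hR : 0 < R) (hu : ContDiffOn ℝ (⊤ : ℕ∞) u (closedBall 0 R))
    (heigen : ∀ x ∈ ball 0 R, lapWithin (closedBall 0 R) u x = c * u x) (m : ℕ) :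
    ∫ x in ball 0 R, (lapWithin (closedBall 0 R))^[m] u x ^ 2 =
      c ^ (2 * m) * ∫ x in ball 0 R, u x ^ 2 := by
  rw [← integral_const_mul]
  refine setIntegral_congr_fun measurableSet_ball fun x hx => ?_
  rw [iterate_lapWithin_eq_pow_mul hR hu heigen m x hx, mul_pow, ← pow_mul, mul_comm m]

theorem polyharmonic_rayleigh_bound_ball_general {m : ℕ} (hm : 1 ≤ m) (hR : 0 < R)
    (hμ : IsLeast {ν : ℝ | 0 < ν ∧ IsLapNeumannEigenvalueBall n R ν} μ)
    (hu_smooth : ContDiffOn ℝ (⊤ : ℕ∞) u (closedBall 0 R))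
    (hu_mean : ∫ x in ball 0 R, u x = 0)
    (hu_bd : ∀ j < m, ∀ x : EuclideanSpace ℝ (Fin n), ‖x‖ = R →
      fderivWithin ℝ ((lapWithin (closedBall 0 R))^[j] u) (closedBall 0 R) x (‖x‖⁻¹ • x) = 0) :
    (∫ x in ball 0 R, ((lapWithin (closedBall 0 R))^[m] u x) ^ 2) ≥
      μ ^ (2 * m) * ∫ x in ball 0 R, (u x) ^ 2 ∧
    ((∫ x in ball 0 R, ((lapWithin (closedBall 0 R))^[m] u x) ^ 2) =
        μ ^ (2 * m) * (∫ x in ball 0 R, (u x) ^ 2) ↔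
      ∀ x ∈ ball (0 : EuclideanSpace ℝ (Fin n)) R,
        lapWithin (closedBall 0 R) u x = -μ * u x) := by
  have hμ0 : 0 < μ := hμ.1.1
  have hn : n ≠ 0 := ne_zero_of_isLapNeumannEigenvalueBall hR hμ0.ne' hμ.1.2
  have : Nontrivial (EuclideanSpace ℝ (Fin n)) := Module.nontrivial_of_finrank_pos (R := ℝ)
    (by rw [finrank_euclideanSpace_fin]; exact Nat.pos_of_ne_zero hn)
  have hplane := hyperplaneNonneg_of_mem_lowerBounds hn hR hμ0 hμ.2
  have hu : IsPolyharmonicNeumann m R u := ⟨hu_smooth, hu_mean, hu_bd⟩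
  refine ⟨hu.pow_mul_integral_sq_le hplane hR hμ0, fun heq => ?_, fun heigen => ?_⟩
  · obtain ⟨k, rfl⟩ := Nat.exists_eq_add_of_le' hm
    exact hu.lapWithin_eq_of_integral_sq_le hplane hR hμ0 heq.le
  · rw [integral_iterate_lapWithin_sq hR hu_smooth heigen, (even_two_mul m).neg_pow]

end Polyharmonic

/-- **Rayleigh-quotient lower bound on a ball for `Δᵐ` with Neumann conditions.**
Let `n ≥ 2`, `m ≥ 1`, `R > 0`, and let `u` be smooth on the closed ball `B_R(0) ⊂ ℝⁿ` with
`∫_{B_R(0)} u = 0` and `∂(Δʲu)/∂n = 0` on the boundary sphere for all `j = 0, 1, …, m−1`. Then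
`∫ |Δᵐu|² ≥ μ₁(B_R(0))^(2m) ∫ |u|²`, with equality iff `Δu = −μ₁(B_R(0))·u` in the ball. -/
theorem polyharmonic_rayleigh_bound_ball {n m : ℕ} (hn : 2 ≤ n) (hm : 1 ≤ m)
    (R : ℝ) (hR : 0 < R) (μ₁ : ℝ)
    (hμ : IsLeast {μ : ℝ | 0 < μ ∧ IsLapNeumannEigenvalueBall n R μ} μ₁)
    (u : EuclideanSpace ℝ (Fin n) → ℝ)
    (hu_smooth : ContDiffOn ℝ (⊤ : ℕ∞) u (closedBall 0 R))
    (hu_mean : (∫ x in ball (0 : EuclideanSpace ℝ (Fin n)) R, u x) = 0)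
    (hu_bd : ∀ j < m, ∀ x : EuclideanSpace ℝ (Fin n), ‖x‖ = R →
      fderivWithin ℝ ((lapWithin (closedBall 0 R))^[j] u) (closedBall 0 R) x (‖x‖⁻¹ • x) = 0) :
    (∫ x in ball (0 : EuclideanSpace ℝ (Fin n)) R,
        ((lapWithin (closedBall 0 R))^[m] u x) ^ 2) ≥
      μ₁ ^ (2 * m) * ∫ x in ball (0 : EuclideanSpace ℝ (Fin n)) R, (u x) ^ 2 ∧
    ((∫ x in ball (0 : EuclideanSpace ℝ (Fin n)) R,
        ((lapWithin (closedBall 0 R))^[m] u x) ^ 2) =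
        μ₁ ^ (2 * m) * (∫ x in ball (0 : EuclideanSpace ℝ (Fin n)) R, (u x) ^ 2) ↔
      ∀ x ∈ ball (0 : EuclideanSpace ℝ (Fin n)) R,
        lapWithin (closedBall 0 R) u x = -μ₁ * u x) := by
  exact polyharmonic_rayleigh_bound_ball_general hm hR hμ hu_smooth hu_mean hu_bd
end
end

section
/- Let n ≥ 2, R > 0, μ > 0, k ≥ 1 an integer, and fix i ∈ {1, …, n}. Suppose g : (0, R] → ℝ is smooth and satisfies the ordinary differential equation g''(r) + (n−1)/r · g'(r) + ( μ − (n−1)/r² ) g(r) = 0 on (0, R]. Then the function u(x) = g(|x|)·xᵢ/|x| satisfies Δu = −μ·u on B_R(0) \ {0}, and more generally Δᵏu = (−μ)ᵏ·u on B_R(0) \ {0}. If in addition g'(R) = 0, then the outward radial derivative of Δᵏu vanishes on the sphere |x| = R for every integer k ≥ 0. -/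
open Set Metric

noncomputable section

/-!
Write `r = |x|` and let `L` be a linear form. A function `φ(r) L(x)` has gradient
`(φ'(r) / r) L(x) x + φ(r) L`, and a second differentiation followed by a trace gives
`Δ(φ(r) L) = (φ'' + (n + 1) / r · φ') L`. For `φ = g / r` the right-hand side is
`(g'' + (n - 1) / r · g' - (n - 1) / r² · g) L / r`, so the differential equation says precisely
that `u = g(r) L / r` satisfies `Δu = -μ u`. The identity holds up to and including the sphere,
hence so does `Δᵏu = (-μ)ᵏ u`. Since `u` has derivative `g'(r) L / r` along `x / r`, the condition
`g'(R) = 0` kills the normal derivative of every `Δᵏu`.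
-/

lemma hasDerivWithinAt_div_id {I : Set ℝ} {f : ℝ → ℝ} {f' r : ℝ} (hr : r ≠ 0)
    (hf : HasDerivWithinAt f f' I r) :
    HasDerivWithinAt (fun s => f s / s) ((f' - f r / r) / r) I r := by
  refine (hf.fun_div (hasDerivWithinAt_id r I) hr).congr_deriv ?_
  simp only [id_eq]
  field_simp

section RadialDerivatives

variable {E : Type*} [NormedAddCommGroup E] [InnerProductSpace ℝ E]
  {I : Set ℝ} {S : Set E} {x : E}

lemma hasFDerivAt_norm_of_ne_zero (hx : x ≠ 0) :
    HasFDerivAt (fun y : E => ‖y‖) (‖x‖⁻¹ • innerSL ℝ x) x := by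
  have hsqrt := (hasStrictFDerivAt_norm_sq x).hasFDerivAt.sqrt (by positivity)
  simp only [Real.sqrt_sq (norm_nonneg _)] at hsqrt
  refine hsqrt.congr_fderiv ?_
  ext v
  simp only [one_div, mul_inv_rev, smul_apply, coe_innerSL_apply, nsmul_eq_mul, Nat.cast_ofNat,
    smul_eq_mul]
  field_simp

lemma hasFDerivWithinAt_comp_norm {φ : ℝ → ℝ} {φ' : ℝ} (hSI : MapsTo norm S I) (hx : x ≠ 0)
    (hφ : HasDerivWithinAt φ φ' I ‖x‖) :
    HasFDerivWithinAt (fun y => φ ‖y‖) ((φ' / ‖x‖) • innerSL ℝ x) S x := by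
  refine (hφ.comp_hasFDerivWithinAt x
    (hasFDerivAt_norm_of_ne_zero hx).hasFDerivWithinAt hSI).congr_fderiv ?_
  rw [smul_smul, div_eq_mul_inv]

lemma hasFDerivWithinAt_comp_norm_mul_linear {φ : ℝ → ℝ} {φ' : ℝ} (L : E →L[ℝ] ℝ)
    (hSI : MapsTo norm S I) (hx : x ≠ 0) (hφ : HasDerivWithinAt φ φ' I ‖x‖) :
    HasFDerivWithinAt (fun y => φ ‖y‖ * L y)
      ((φ' / ‖x‖ * L x) • innerSL ℝ x + φ ‖x‖ • L) S x := by
  refine ((hasFDerivWithinAt_comp_norm hSI hx hφ).mul L.hasFDerivWithinAt).congr_fderiv ?_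
  module

lemma fderivWithin_fderivWithin_comp_norm_mul_linear {φ φ' φ'' : ℝ → ℝ} (L : E →L[ℝ] ℝ) (v : E)
    (hS : UniqueDiffOn ℝ S) (hSI : MapsTo norm S I) (h0 : ∀ y ∈ S, y ≠ 0)
    (hφ : ∀ r ∈ I, HasDerivWithinAt φ (φ' r) I r)
    (hφ' : ∀ r ∈ I, HasDerivWithinAt φ' (φ'' r) I r) (hx : x ∈ S) :
    fderivWithin ℝ (fun y => fderivWithin ℝ (fun z => φ ‖z‖ * L z) S y v) S x v =
      (φ'' ‖x‖ - φ' ‖x‖ / ‖x‖) / ‖x‖ ^ 2 * L x * inner ℝ x v ^ 2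
        + φ' ‖x‖ / ‖x‖ * (2 * (inner ℝ x v * L v) + L x * ‖v‖ ^ 2) := by
  have hr : ‖x‖ ≠ 0 := norm_ne_zero_iff.2 (h0 x hx)
  have first_deriv : ∀ y ∈ S, fderivWithin ℝ (fun z => φ ‖z‖ * L z) S y v =
      φ' ‖y‖ / ‖y‖ * L y * innerSL ℝ v y + φ ‖y‖ * L v := fun y hy => by
    rw [(hasFDerivWithinAt_comp_norm_mul_linear L hSI (h0 y hy)
      (hφ _ (hSI hy))).fderivWithin (hS y hy)]
    simp [real_inner_comm]
  have hψ := hasDerivWithinAt_div_id hr (hφ' _ (hSI hx))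
  have second_deriv := ((hasFDerivWithinAt_comp_norm_mul_linear L hSI (h0 x hx) hψ).mul
    (innerSL ℝ v).hasFDerivWithinAt).add
    ((hasFDerivWithinAt_comp_norm hSI (h0 x hx) (hφ _ (hSI hx))).mul_const (L v))
  rw [fderivWithin_congr first_deriv (first_deriv x hx)]
  refine (congrArg (· v) (second_deriv.fderivWithin (hS x hx))).trans ?_
  simp only [coe_innerSL_apply, real_inner_comm, smul_add, add_apply, smul_apply,
    real_inner_self_eq_norm_sq, smul_eq_mul]
  field_simp
  ring

lemma fderivWithin_comp_norm_mul_linear_div_norm_apply_radial {g : ℝ → ℝ} {g' : ℝ}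
    (L : E →L[ℝ] ℝ) (hS : UniqueDiffWithinAt ℝ S x) (hSI : MapsTo norm S I) (hx : x ≠ 0)
    (hg : HasDerivWithinAt g g' I ‖x‖) :
    fderivWithin ℝ (fun y => g ‖y‖ * (L y / ‖y‖)) S x (‖x‖⁻¹ • x) = g' * (L x / ‖x‖) := by
  have hr : ‖x‖ ≠ 0 := norm_ne_zero_iff.2 hx
  have hu := hasFDerivWithinAt_comp_norm_mul_linear L hSI hx (hasDerivWithinAt_div_id hr hg)
  simp only [div_mul_eq_mul_div, mul_div_assoc] at hu
  rw [hu.fderivWithin hS]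
  simp only [map_smul, add_apply, smul_apply, coe_innerSL_apply, real_inner_self_eq_norm_sq,
    smul_eq_mul]
  field_simp
  ring

end RadialDerivatives

section LapWithin

variable {n : ℕ} {S : Set (EuclideanSpace ℝ (Fin n))}

lemma lapWithin_congr {f f' : EuclideanSpace ℝ (Fin n) → ℝ} (h : EqOn f f' S) :
    EqOn (lapWithin S f) (lapWithin S f') S := fun x hx =>
  Finset.sum_congr rfl fun j _ => by
    have partials_eq : ∀ y ∈ S, fderivWithin ℝ f S y (EuclideanSpace.single j 1) =
        fderivWithin ℝ f' S y (EuclideanSpace.single j 1) := fun y hy => by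
      rw [fderivWithin_congr h (h hy)]
    rw [fderivWithin_congr partials_eq (partials_eq x hx)]

lemma lapWithin_const_smul (hS : UniqueDiffOn ℝ S) (c : ℝ) (f : EuclideanSpace ℝ (Fin n) → ℝ) :
    EqOn (lapWithin S (c • f)) (c • lapWithin S f) S := fun x hx => by
  rw [Pi.smul_apply, lapWithin, lapWithin, Finset.smul_sum]
  refine Finset.sum_congr rfl fun j _ => ?_
  have partials_eq : ∀ y ∈ S, fderivWithin ℝ (c • f) S y (EuclideanSpace.single j 1) =
      (c • fun y => fderivWithin ℝ f S y (EuclideanSpace.single j 1)) y := fun y hy => by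
    rw [fderivWithin_const_smul_field c (hS y hy)]
    rfl
  rw [fderivWithin_congr partials_eq (partials_eq x hx),
    fderivWithin_const_smul_field c (hS x hx)]
  rfl

lemma lapWithin_iterate_eqOn_pow_smul (hS : UniqueDiffOn ℝ S) {c : ℝ}
    {f : EuclideanSpace ℝ (Fin n) → ℝ} (hf : EqOn (lapWithin S f) (c • f) S) (k : ℕ) :
    EqOn ((lapWithin S)^[k] f) (c ^ k • f) S := by
  induction k with
  | zero => simp [EqOn]
  | succ k ih =>
    intro x hx
    calc (lapWithin S)^[k + 1] f x
        = lapWithin S ((lapWithin S)^[k] f) x := by rw [Function.iterate_succ_apply']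
      _ = lapWithin S (c ^ k • f) x := lapWithin_congr ih hx
      _ = c ^ k • lapWithin S f x := lapWithin_const_smul hS _ _ hx
      _ = (c ^ (k + 1) • f) x := by rw [hf hx, pow_succ, mul_smul]; rfl

lemma sum_inner_single_mul_linear (L : EuclideanSpace ℝ (Fin n) →L[ℝ] ℝ)
    (x : EuclideanSpace ℝ (Fin n)) :
    ∑ j, inner ℝ x (EuclideanSpace.single j 1) * L (EuclideanSpace.single j 1) = L x := by
  conv_rhs => rw [← (EuclideanSpace.basisFun (Fin n) ℝ).sum_repr x]
  simp [EuclideanSpace.inner_single_right]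

variable {I : Set ℝ}

lemma lapWithin_comp_norm_mul_linear {φ φ' φ'' : ℝ → ℝ} (L : EuclideanSpace ℝ (Fin n) →L[ℝ] ℝ)
    (hS : UniqueDiffOn ℝ S) (hSI : MapsTo norm S I) (h0 : ∀ y ∈ S, y ≠ 0)
    (hφ : ∀ r ∈ I, HasDerivWithinAt φ (φ' r) I r)
    (hφ' : ∀ r ∈ I, HasDerivWithinAt φ' (φ'' r) I r)
    {x : EuclideanSpace ℝ (Fin n)} (hx : x ∈ S) :
    lapWithin S (fun y => φ ‖y‖ * L y) x = (φ'' ‖x‖ + (n + 1) / ‖x‖ * φ' ‖x‖) * L x := by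
  have hr : ‖x‖ ≠ 0 := norm_ne_zero_iff.2 (h0 x hx)
  have sum_sq : ∑ j, inner ℝ x (EuclideanSpace.single j 1) ^ 2 = ‖x‖ ^ 2 := by
    simp [EuclideanSpace.inner_single_right, EuclideanSpace.real_norm_sq_eq]
  simp only [lapWithin,
    fderivWithin_fderivWithin_comp_norm_mul_linear L _ hS hSI h0 hφ hφ' hx,
    Finset.sum_add_distrib, ← Finset.mul_sum, sum_sq, sum_inner_single_mul_linear,
    PiLp.norm_single, norm_one, one_pow, mul_one, Finset.sum_const, Finset.card_univ,
    Fintype.card_fin, nsmul_eq_mul]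
  field_simp
  ring

lemma lapWithin_comp_norm_mul_linear_div_norm {g g' g'' : ℝ → ℝ}
    (L : EuclideanSpace ℝ (Fin n) →L[ℝ] ℝ) (hS : UniqueDiffOn ℝ S) (hSI : MapsTo norm S I)
    (hI : ∀ r ∈ I, r ≠ 0) (hg : ∀ r ∈ I, HasDerivWithinAt g (g' r) I r)
    (hg' : ∀ r ∈ I, HasDerivWithinAt g' (g'' r) I r)
    {x : EuclideanSpace ℝ (Fin n)} (hx : x ∈ S) :
    lapWithin S (fun y => g ‖y‖ * (L y / ‖y‖)) x =
      (g'' ‖x‖ + (n - 1) / ‖x‖ * g' ‖x‖ - (n - 1) / ‖x‖ ^ 2 * g ‖x‖) * (L x / ‖x‖) := by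
  have hr : ‖x‖ ≠ 0 := hI _ (hSI hx)
  have h0 : ∀ y ∈ S, y ≠ 0 := fun y hy => norm_ne_zero_iff.1 (hI _ (hSI hy))
  have hφ : ∀ r ∈ I, HasDerivWithinAt (fun s => g s / s) ((g' r - g r / r) / r) I r :=
    fun r hr => hasDerivWithinAt_div_id (hI r hr) (hg r hr)
  have hφ' : ∀ r ∈ I, HasDerivWithinAt (fun s => (g' s - g s / s) / s)
      ((g'' r - (g' r - g r / r) / r - (g' r - g r / r) / r) / r) I r := fun r hr =>
    hasDerivWithinAt_div_id (hI r hr) ((hg' r hr).sub (hφ r hr))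
  have laplacian_quotient := lapWithin_comp_norm_mul_linear L hS hSI h0 hφ hφ' hx
  simp only [div_mul_eq_mul_div, mul_div_assoc] at laplacian_quotient ⊢
  rw [laplacian_quotient]
  field_simp
  ring

lemma lapWithin_eqOn_neg_smul_of_radial_ode {μ : ℝ} {g g' g'' : ℝ → ℝ}
    (L : EuclideanSpace ℝ (Fin n) →L[ℝ] ℝ) (hS : UniqueDiffOn ℝ S) (hSI : MapsTo norm S I)
    (hI : ∀ r ∈ I, r ≠ 0) (hg : ∀ r ∈ I, HasDerivWithinAt g (g' r) I r)
    (hg' : ∀ r ∈ I, HasDerivWithinAt g' (g'' r) I r)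
    (hODE : ∀ r ∈ I, g'' r + ((n : ℝ) - 1) / r * g' r + (μ - ((n : ℝ) - 1) / r ^ 2) * g r = 0) :
    EqOn (lapWithin S fun y => g ‖y‖ * (L y / ‖y‖))
      (-μ • fun y => g ‖y‖ * (L y / ‖y‖)) S := fun x hx => by
  rw [lapWithin_comp_norm_mul_linear_div_norm L hS hSI hI hg hg' hx, Pi.smul_apply, smul_eq_mul]
  linear_combination L x / ‖x‖ * hODE _ (hSI hx)

end LapWithin

section PuncturedClosedBall

variable {E : Type*} [NormedAddCommGroup E]

lemma mapsTo_norm_closedBall_sdiff_zero (R : ℝ) :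
    MapsTo norm (closedBall (0 : E) R \ {0}) (Ioc 0 R) := fun _ hx =>
  ⟨norm_pos_iff.2 hx.2, mem_closedBall_zero_iff.1 hx.1⟩

lemma uniqueDiffOn_closedBall_sdiff_singleton [NormedSpace ℝ E] (a b : E) {R : ℝ} (hR : 0 < R) :
    UniqueDiffOn ℝ (closedBall a R \ {b}) :=
  (uniqueDiffOn_convex (convex_closedBall a R)
    ⟨a, ball_subset_interior_closedBall (mem_ball_self hR)⟩).inter isOpen_compl_singleton

end PuncturedClosedBall

theorem radial_ode_eigenfunction_iterated_laplacian_general {n : ℕ} {R μ : ℝ} (hR : 0 < R)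
    (L : EuclideanSpace ℝ (Fin n) →L[ℝ] ℝ) {g : ℝ → ℝ} (hg : ContDiffOn ℝ 2 g (Ioc 0 R))
    (hODE : ∀ r ∈ Ioc (0 : ℝ) R,
      derivWithin (derivWithin g (Ioc 0 R)) (Ioc 0 R) r
        + ((n : ℝ) - 1) / r * derivWithin g (Ioc 0 R) r
        + (μ - ((n : ℝ) - 1) / r ^ 2) * g r = 0) (k : ℕ) :
    (∀ x ∈ closedBall (0 : EuclideanSpace ℝ (Fin n)) R \ {0},
      (lapWithin (closedBall 0 R \ {0}))^[k] (fun y => g ‖y‖ * (L y / ‖y‖)) x =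
        (-μ) ^ k * (g ‖x‖ * (L x / ‖x‖))) ∧
    (derivWithin g (Ioc 0 R) R = 0 → ∀ x : EuclideanSpace ℝ (Fin n), ‖x‖ = R →
      fderivWithin ℝ ((lapWithin (closedBall 0 R \ {0}))^[k] (fun y => g ‖y‖ * (L y / ‖y‖)))
        (closedBall 0 R \ {0}) x (‖x‖⁻¹ • x) = 0) := by
  have hS := uniqueDiffOn_closedBall_sdiff_singleton (0 : EuclideanSpace ℝ (Fin n)) 0 hR
  have hSI := mapsTo_norm_closedBall_sdiff_zero (E := EuclideanSpace ℝ (Fin n)) R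
  have hg₁ : ∀ r ∈ Ioc 0 R, HasDerivWithinAt g (derivWithin g (Ioc 0 R) r) (Ioc 0 R) r :=
    fun r hr => (hg.differentiableOn two_ne_zero r hr).hasDerivWithinAt
  have hg₂ : ∀ r ∈ Ioc 0 R, HasDerivWithinAt (derivWithin g (Ioc 0 R))
      (derivWithin (derivWithin g (Ioc 0 R)) (Ioc 0 R) r) (Ioc 0 R) r := fun r hr =>
    ((hg.derivWithin (m := 1) (uniqueDiffOn_Ioc 0 R) (by norm_num)).differentiableOn
      one_ne_zero r hr).hasDerivWithinAt
  have hiter := lapWithin_iterate_eqOn_pow_smul hS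
    (lapWithin_eqOn_neg_smul_of_radial_ode L hS hSI (fun r hr => hr.1.ne') hg₁ hg₂ hODE) k
  refine ⟨hiter, fun hgR x hxR => ?_⟩
  have hx0 : x ≠ 0 := norm_pos_iff.1 (hxR ▸ hR)
  have hx : x ∈ closedBall (0 : EuclideanSpace ℝ (Fin n)) R \ {0} :=
    ⟨mem_closedBall_zero_iff.2 hxR.le, hx0⟩
  rw [fderivWithin_congr hiter (hiter hx), fderivWithin_const_smul_field _ (hS x hx),
    smul_apply,
    fderivWithin_comp_norm_mul_linear_div_norm_apply_radial L (hS x hx) hSI hx0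
      (hg₁ _ (hSI hx)), hxR, hgR, zero_mul, smul_zero]

/-- **Radial solutions of the Bessel-type ODE give eigenfunctions of all iterated Laplacians.**
Let `n ≥ 2`, `R > 0`, `μ > 0`, `k ≥ 1`, `i ∈ {1,…,n}`, and let `g` be smooth on `(0,R]` with
`g'' + (n−1)/r·g' + (μ − (n−1)/r²)·g = 0` on `(0,R]`. Then `u(x) = g(|x|)·xᵢ/|x|` satisfies
`Δu = −μ·u` and `Δᵏu = (−μ)ᵏ·u` on `B_R(0) \ {0}`; if moreover `g'(R) = 0`, then the outward
radial derivative of `Δᵏu` (computed within `closedBall 0 R \ {0}`) vanishes on the sphere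
`|x| = R` for every `k ≥ 0`. -/
theorem radial_ode_eigenfunction_iterated_laplacian {n : ℕ} (hn : 2 ≤ n)
    (R μ : ℝ) (hR : 0 < R) (hμ : 0 < μ) (k : ℕ) (hk : 1 ≤ k) (i : Fin n)
    (g : ℝ → ℝ) (hg : ContDiffOn ℝ (⊤ : ℕ∞) g (Ioc 0 R))
    (hODE : ∀ r ∈ Ioc (0 : ℝ) R,
      derivWithin (derivWithin g (Ioc 0 R)) (Ioc 0 R) r
        + ((n : ℝ) - 1) / r * derivWithin g (Ioc 0 R) r
        + (μ - ((n : ℝ) - 1) / r ^ 2) * g r = 0) :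
    (∀ x ∈ ball (0 : EuclideanSpace ℝ (Fin n)) R \ {0},
      lapWithin (closedBall 0 R \ {0}) (fun y => g ‖y‖ * (y i / ‖y‖)) x =
        -μ * (g ‖x‖ * (x i / ‖x‖))) ∧
    (∀ x ∈ ball (0 : EuclideanSpace ℝ (Fin n)) R \ {0},
      (lapWithin (closedBall 0 R \ {0}))^[k] (fun y => g ‖y‖ * (y i / ‖y‖)) x =
        (-μ) ^ k * (g ‖x‖ * (x i / ‖x‖))) ∧
    (derivWithin g (Ioc 0 R) R = 0 →
      ∀ k' : ℕ, ∀ x : EuclideanSpace ℝ (Fin n), ‖x‖ = R →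
        fderivWithin ℝ ((lapWithin (closedBall 0 R \ {0}))^[k'] (fun y => g ‖y‖ * (y i / ‖y‖)))
          (closedBall 0 R \ {0}) x (‖x‖⁻¹ • x) = 0) := by
  have general := radial_ode_eigenfunction_iterated_laplacian_general hR
    (EuclideanSpace.proj i) (hg.of_le (by norm_cast)) hODE
  have hsub := sdiff_subset_sdiff_left (t := {(0 : EuclideanSpace ℝ (Fin n))})
    (ball_subset_closedBall (x := 0) (ε := R))
  exact ⟨fun x hx => by simpa using (general 1).1 x (hsub hx),
    fun x hx => (general k).1 x (hsub hx), fun hgR k' => (general k').2 hgR⟩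
end
end

section
/- Let n ≥ 2, μ > 0, m ≥ 1, and suppose g : (0, ∞) → ℝ is smooth and satisfies g''(r) + (n−1)/r · g'(r) + ( μ − (n−1)/r² ) g(r) = 0 on (0, ∞). Define uᵢ(x) = g(|x|)·xᵢ/|x| for i = 1, …, n and x ≠ 0. Then for every x ≠ 0, with r = |x|: (a) Σ_{i=1}^{n} uᵢ(x)² = g(r)², and (b) Σ_{i=1}^{n} |Δᵐuᵢ(x)|² = ( Lᵐg(r) )² = μ^{2m}·g(r)², where L is the operator (Lh)(r) = h''(r) + (n−1)/r · h'(r) − (n−1)/r² · h(r) and Lᵐ its m-fold iterate. -/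
/-!
Write `uᵢ(x) = φ(|x|) xᵢ` with `φ(r) = g(r)/r`. Differentiating twice and summing over an
orthonormal basis gives `Δ(φ(|x|) ℓ(x)) = (φ'' + (n+1)/r φ') ℓ(x)` for every linear form `ℓ`, and
substituting `φ = g/r` turns the bracket into `(Lg)/r`. So `Δ` acts on trial functions as `L` acts
on their profile, `Δᵐuᵢ = (Lᵐg)(|x|) xᵢ/|x|`, and summing squares over `i` leaves `(Lᵐg)²`. The
differential equation says `Lg = -μ g`, whence `Lᵐg = (-μ)ᵐ g`.
-/

open Set

noncomputable section

/-- The Laplacian on `ℝⁿ`: the sum of the second partial derivatives. -/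
def lap {n : ℕ} (f : EuclideanSpace ℝ (Fin n) → ℝ) (x : EuclideanSpace ℝ (Fin n)) : ℝ :=
  ∑ i : Fin n, fderiv ℝ
    (fun y => fderiv ℝ f y (EuclideanSpace.single i 1)) x (EuclideanSpace.single i 1)

open Filter Topology
open scoped RealInnerProductSpace

section RadialTimesLinear

variable {E : Type*} [NormedAddCommGroup E] [InnerProductSpace ℝ E]
  {φ : ℝ → ℝ} {φ' : ℝ} {x : E}

theorem hasFDerivAt_norm (hx : x ≠ 0) : HasFDerivAt (‖·‖) (‖x‖⁻¹ • innerSL ℝ x) x := by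
  have hr : ‖x‖ ≠ 0 := norm_ne_zero_iff.mpr hx
  have hsqrt := (hasStrictFDerivAt_norm_sq x).hasFDerivAt.sqrt (pow_ne_zero 2 hr)
  simp only [Real.sqrt_sq (norm_nonneg _)] at hsqrt
  refine hsqrt.congr_fderiv (ContinuousLinearMap.ext fun v => ?_)
  simp only [one_div, mul_inv, smul_apply, innerSL_apply_apply, smul_eq_mul,
    nsmul_eq_mul, Nat.cast_ofNat]
  ring

theorem hasFDerivAt_comp_norm (hx : x ≠ 0) (hφ : HasDerivAt φ φ' ‖x‖) :
    HasFDerivAt (fun y : E => φ ‖y‖) ((φ' / ‖x‖) • innerSL ℝ x) x := by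
  rw [div_eq_mul_inv, mul_smul]
  exact hφ.comp_hasFDerivAt x (hasFDerivAt_norm hx)

theorem hasFDerivAt_comp_norm_mul_clm (ℓ : E →L[ℝ] ℝ) (hx : x ≠ 0) (hφ : HasDerivAt φ φ' ‖x‖) :
    HasFDerivAt (fun y => φ ‖y‖ * ℓ y) (φ ‖x‖ • ℓ + (φ' / ‖x‖ * ℓ x) • innerSL ℝ x) x := by
  rw [mul_comm (φ' / ‖x‖), mul_smul]
  exact (hasFDerivAt_comp_norm hx hφ).mul ℓ.hasFDerivAt

theorem fderiv_fderiv_comp_norm_mul_clm (ℓ : E →L[ℝ] ℝ) (hx : x ≠ 0)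
    (hφ : ContDiffAt ℝ 2 φ ‖x‖) (v : E) :
    fderiv ℝ (fun y => fderiv ℝ (fun z => φ ‖z‖ * ℓ z) y v) x v =
      2 * (deriv φ ‖x‖ / ‖x‖) * (⟪x, v⟫ * ℓ v) +
        ((deriv (deriv φ) ‖x‖ / ‖x‖ ^ 2 - deriv φ ‖x‖ / ‖x‖ ^ 3) * ⟪x, v⟫ ^ 2
          + deriv φ ‖x‖ / ‖x‖ * ‖v‖ ^ 2) * ℓ x := by
  have hr : ‖x‖ ≠ 0 := norm_ne_zero_iff.mpr hx
  have hfirst : (fun y => fderiv ℝ (fun z => φ ‖z‖ * ℓ z) y v) =ᶠ[𝓝 x]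
      fun y => φ ‖y‖ * ℓ v + deriv φ ‖y‖ / ‖y‖ * ℓ y * ⟪y, v⟫ := by
    filter_upwards [eventually_ne_nhds hx,
      continuous_norm.continuousAt.eventually (hφ.eventually (by simp))] with y hy hφy
    rw [(hasFDerivAt_comp_norm_mul_clm ℓ hy
      (hφy.differentiableAt two_ne_zero).hasDerivAt).fderiv]
    simp [innerSL_apply_apply]
  have hψ : HasDerivAt (fun r => deriv φ r / r)
      ((deriv (deriv φ) ‖x‖ * ‖x‖ - deriv φ ‖x‖) / ‖x‖ ^ 2) ‖x‖ := by
    have hφ' : DifferentiableAt ℝ (deriv φ) ‖x‖ :=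
      (hφ.derivWithin one_add_one_eq_two.le).differentiableAt one_ne_zero
    simpa using hφ'.hasDerivAt.fun_div (hasDerivAt_id' ‖x‖) hr
  have hinner : HasFDerivAt (fun y : E => ⟪y, v⟫) (innerSL ℝ v) x :=
    (innerSL ℝ v).hasFDerivAt.congr_of_eventuallyEq <| .of_forall fun y => real_inner_comm v y
  have hφx := (hφ.differentiableAt two_ne_zero).hasDerivAt
  have hsecond := ((hasFDerivAt_comp_norm hx hφx).mul_const (ℓ v)).fun_add
    ((hasFDerivAt_comp_norm_mul_clm ℓ hx hψ).fun_mul hinner)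
  rw [hfirst.fderiv_eq, hsecond.fderiv]
  simp only [smul_add, add_apply, smul_apply, coe_innerSL_apply, smul_eq_mul,
    real_inner_self_eq_norm_sq]
  field_simp
  ring

end RadialTimesLinear

section Laplacian

variable {n : ℕ} {f₁ f₂ : EuclideanSpace ℝ (Fin n) → ℝ} {U : Set (EuclideanSpace ℝ (Fin n))}

theorem lap_eqOn (hf : EqOn f₁ f₂ U) (hU : IsOpen U) : EqOn (lap f₁) (lap f₂) U := by
  intro x hx
  have hfderiv : fderiv ℝ f₁ =ᶠ[𝓝 x] fderiv ℝ f₂ :=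
    (hf.eventuallyEq_of_mem (hU.mem_nhds hx)).fderiv
  refine Finset.sum_congr rfl fun i _ => ?_
  have hpartial : (fun y => fderiv ℝ f₁ y (EuclideanSpace.single i 1)) =ᶠ[𝓝 x]
      fun y => fderiv ℝ f₂ y (EuclideanSpace.single i 1) :=
    hfderiv.mono fun y hy => congrArg (· (EuclideanSpace.single i 1)) hy
  rw [hpartial.fderiv_eq]

theorem iterate_lap_eqOn (hf : EqOn f₁ f₂ U) (hU : IsOpen U) (m : ℕ) :
    EqOn (lap^[m] f₁) (lap^[m] f₂) U := by
  induction m generalizing f₁ f₂ with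
  | zero => exact hf
  | succ _ ih => exact ih (lap_eqOn hf hU)

theorem lap_comp_norm_mul_clm {φ : ℝ → ℝ} (ℓ : EuclideanSpace ℝ (Fin n) →L[ℝ] ℝ)
    {x : EuclideanSpace ℝ (Fin n)} (hx : x ≠ 0) (hφ : ContDiffAt ℝ 2 φ ‖x‖) :
    lap (fun y => φ ‖y‖ * ℓ y) x =
      (deriv (deriv φ) ‖x‖ + (n + 1) / ‖x‖ * deriv φ ‖x‖) * ℓ x := by
  have hr : ‖x‖ ≠ 0 := norm_ne_zero_iff.mpr hx
  have hnorm : ∑ i, ⟪x, EuclideanSpace.single i 1⟫ ^ 2 = ‖x‖ ^ 2 := by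
    simp [EuclideanSpace.inner_single_right, EuclideanSpace.real_norm_sq_eq]
  have hℓ : ∑ i, ⟪x, EuclideanSpace.single i 1⟫ * ℓ (EuclideanSpace.single i 1) = ℓ x := by
    calc ∑ i, ⟪x, EuclideanSpace.single i 1⟫ * ℓ (EuclideanSpace.single i 1)
        = ℓ (∑ i, ⟪EuclideanSpace.single i 1, x⟫ • EuclideanSpace.single i 1) := by
          simp only [map_sum, map_smul, smul_eq_mul, real_inner_comm]
      _ = ℓ x := by
          simpa using congrArg ℓ ((EuclideanSpace.basisFun (Fin n) ℝ).sum_repr' x)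
  simp only [lap, fderiv_fderiv_comp_norm_mul_clm ℓ hx hφ]
  rw [Finset.sum_add_distrib, ← Finset.mul_sum, hℓ, ← Finset.sum_mul, Finset.sum_add_distrib,
    ← Finset.mul_sum, hnorm]
  simp only [PiLp.norm_single, norm_one, one_pow, mul_one, Finset.sum_const, Finset.card_univ,
    Fintype.card_fin, nsmul_eq_mul]
  field_simp
  ring

end Laplacian

/-- The operator `L` of the paper: the radial part of the Laplacian on `ℝᵈ` acting on first-order
spherical harmonics, whose eigenvalue for minus the spherical Laplacian is `d - 1`. The dimension
`d` enters only as a real parameter. -/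
def radialOp (d : ℝ) (h : ℝ → ℝ) (r : ℝ) : ℝ :=
  deriv (deriv h) r + (d - 1) / r * deriv h r - (d - 1) / r ^ 2 * h r

section RadialOp

variable {d : ℝ} {h h₁ h₂ : ℝ → ℝ} {s : Set ℝ}

theorem radialOp_eqOn (hh : EqOn h₁ h₂ s) (hs : IsOpen s) :
    EqOn (radialOp d h₁) (radialOp d h₂) s := fun r hr => by
  rw [radialOp, radialOp, (hh.deriv hs).deriv hs hr, hh.deriv hs hr, hh hr]

theorem radialOp_const_smul (c : ℝ) : radialOp d (c • h) = c • radialOp d h := by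
  have hderiv (f : ℝ → ℝ) : deriv (c • f) = c • deriv f :=
    funext fun _ => deriv_const_smul_field c f
  ext r
  simp only [radialOp, hderiv, Pi.smul_apply, smul_eq_mul]
  ring

theorem iterate_radialOp_eqOn_pow_smul {c : ℝ} (hs : IsOpen s)
    (hh : EqOn (radialOp d h) (c • h) s) (m : ℕ) :
    EqOn ((radialOp d)^[m] h) (c ^ m • h) s := by
  induction m with
  | zero => simp only [Function.iterate_zero, id_eq, pow_zero, one_smul, eqOn_refl]
  | succ m ih =>
    intro r hr
    rw [Function.iterate_succ_apply', radialOp_eqOn ih hs hr, radialOp_const_smul, Pi.smul_apply,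
      hh hr, pow_succ, mul_smul]
    rfl

theorem contDiffOn_radialOp {k : WithTop ℕ∞} (hs : IsOpen s) (hs₀ : 0 ∉ s)
    (hh : ContDiffOn ℝ (k + 2) h s) :
    ContDiffOn ℝ k (radialOp d h) s := by
  have hne : ∀ r ∈ s, r ≠ 0 := fun r hr => ne_of_mem_of_not_mem hr hs₀
  have h' : ContDiffOn ℝ (k + 1) (deriv h) s :=
    hh.deriv_of_isOpen hs (by rw [add_assoc, one_add_one_eq_two])
  have h'' : ContDiffOn ℝ k (deriv (deriv h)) s := h'.deriv_of_isOpen hs le_rfl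
  exact (h''.add ((contDiffOn_const.div contDiffOn_id hne).mul (h'.of_le le_self_add))).sub
    ((contDiffOn_const.div (contDiffOn_id.pow 2) fun r hr => pow_ne_zero 2 (hne r hr)).mul
      (hh.of_le le_self_add))

end RadialOp

/-- The trial function `x ↦ g(|x|) ℓ(x)/|x|` with profile `g`. The paper's `uᵢ` is the case where
`ℓ` is the `i`-th coordinate; a general linear form `ℓ` keeps the calculus coordinate-free. -/
def trialFunction {E : Type*} [NormedAddCommGroup E] [NormedSpace ℝ E] (ℓ : E →L[ℝ] ℝ)
    (g : ℝ → ℝ) (x : E) : ℝ :=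
  g ‖x‖ * (ℓ x / ‖x‖)

section TrialFunction

variable {n : ℕ} {g : ℝ → ℝ} {x : EuclideanSpace ℝ (Fin n)}

theorem sum_sq_trialFunction_proj (g : ℝ → ℝ) (hx : x ≠ 0) :
    ∑ i, trialFunction (EuclideanSpace.proj i) g x ^ 2 = g ‖x‖ ^ 2 := by
  simp only [trialFunction, PiLp.proj_apply, mul_pow, div_pow]
  rw [← Finset.mul_sum, ← Finset.sum_div, ← EuclideanSpace.real_norm_sq_eq,
    div_self (pow_ne_zero 2 (norm_ne_zero_iff.mpr hx)), mul_one]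

theorem lap_trialFunction (ℓ : EuclideanSpace ℝ (Fin n) →L[ℝ] ℝ) (hx : x ≠ 0)
    (hg : ContDiffAt ℝ 2 g ‖x‖) :
    lap (trialFunction ℓ g) x = trialFunction ℓ (radialOp n g) x := by
  have hr : ‖x‖ ≠ 0 := norm_ne_zero_iff.mpr hx
  have hfirst : deriv (fun r => g r / r) =ᶠ[𝓝 ‖x‖] fun r => (deriv g r * r - g r) / r ^ 2 := by
    filter_upwards [eventually_ne_nhds hr, hg.eventually (by simp)] with r hr hgr
    simpa using deriv_fun_div (hgr.differentiableAt two_ne_zero) differentiableAt_id hr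
  have hsecond : deriv (deriv fun r => g r / r) ‖x‖ =
      deriv (deriv g) ‖x‖ / ‖x‖ - 2 * deriv g ‖x‖ / ‖x‖ ^ 2 + 2 * g ‖x‖ / ‖x‖ ^ 3 := by
    have hg₀ := (hg.differentiableAt two_ne_zero).hasDerivAt
    have hg₁ := ((hg.derivWithin one_add_one_eq_two.le).differentiableAt one_ne_zero).hasDerivAt
    rw [hfirst.deriv_eq, (((hg₁.fun_mul (hasDerivAt_id' _)).fun_sub hg₀).fun_div
      (hasDerivAt_pow 2 _) (pow_ne_zero 2 hr)).deriv]
    field_simp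
    ring
  have hfactor : trialFunction ℓ g = fun y => g ‖y‖ / ‖y‖ * ℓ y :=
    funext fun y => mul_div_left_comm _ _ _ |>.trans (mul_comm _ _)
  rw [hfactor, lap_comp_norm_mul_clm (φ := fun r => g r / r) ℓ hx (hg.div contDiffAt_id hr),
    hsecond, hfirst.eq_of_nhds, trialFunction, radialOp]
  field_simp
  ring

theorem iterate_lap_trialFunction (ℓ : EuclideanSpace ℝ (Fin n) →L[ℝ] ℝ) (m : ℕ)
    (hg : ContDiffOn ℝ (2 * m : ℕ) g (Ioi 0)) :
    EqOn (lap^[m] (trialFunction ℓ g)) (trialFunction ℓ ((radialOp n)^[m] g)) {0}ᶜ := by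
  induction m generalizing g with
  | zero => exact eqOn_refl _ _
  | succ m ih =>
    have hlap : EqOn (lap (trialFunction ℓ g)) (trialFunction ℓ (radialOp n g)) {0}ᶜ := fun x hx =>
      lap_trialFunction ℓ hx <| (hg.of_le (by norm_cast; omega)).contDiffAt
        (isOpen_Ioi.mem_nhds (norm_pos_iff.mpr hx))
    exact (iterate_lap_eqOn hlap isOpen_compl_singleton m).trans
      (ih (contDiffOn_radialOp isOpen_Ioi self_notMem_Ioi hg))

end TrialFunction

theorem trial_function_identities_general {n m : ℕ} {g : ℝ → ℝ}
    (hg : ContDiffOn ℝ (2 * m : ℕ) g (Ioi 0)) {x : EuclideanSpace ℝ (Fin n)} (hx : x ≠ 0) :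
    (∑ i, trialFunction (EuclideanSpace.proj i) g x ^ 2 = g ‖x‖ ^ 2) ∧
      (∑ i, (lap^[m] (trialFunction (EuclideanSpace.proj i) g) x) ^ 2 =
        ((radialOp n)^[m] g ‖x‖) ^ 2) ∧
      ∀ μ : ℝ, (∀ r ∈ Ioi (0 : ℝ), radialOp n g r = -μ * g r) →
        ∑ i, (lap^[m] (trialFunction (EuclideanSpace.proj i) g) x) ^ 2 =
          μ ^ (2 * m) * g ‖x‖ ^ 2 := by
  have hlap : ∑ i, (lap^[m] (trialFunction (EuclideanSpace.proj i) g) x) ^ 2 =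
      ((radialOp n)^[m] g ‖x‖) ^ 2 := by
    simp only [iterate_lap_trialFunction _ m hg (mem_compl_singleton_iff.mpr hx),
      sum_sq_trialFunction_proj _ hx]
  refine ⟨sum_sq_trialFunction_proj g hx, hlap, fun μ hμ => ?_⟩
  rw [hlap, iterate_radialOp_eqOn_pow_smul isOpen_Ioi hμ m (norm_pos_iff.mpr hx),
    Pi.smul_apply, smul_eq_mul, mul_pow, ← pow_mul, mul_comm m, (even_two_mul m).neg_pow]

/-- **Pointwise identities for the trial functions `uᵢ(x) = g(|x|)·xᵢ/|x|`.**
Let `n ≥ 2`, `μ > 0`, `m ≥ 1`, and let `g` be smooth on `(0,∞)` satisfying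
`g'' + (n−1)/r·g' + (μ − (n−1)/r²)·g = 0` there. With `L` the operator
`(Lh)(r) = h'' + (n−1)/r·h' − (n−1)/r²·h`, for every `x ≠ 0` (writing `r = |x|`):
(a) `Σᵢ uᵢ(x)² = g(r)²`, and (b) `Σᵢ |Δᵐuᵢ(x)|² = (Lᵐg(r))² = μ^(2m)·g(r)²`. -/
theorem trial_function_identities {n : ℕ} (hn : 2 ≤ n) (μ : ℝ) (hμ : 0 < μ)
    (m : ℕ) (hm : 1 ≤ m)
    (g : ℝ → ℝ) (hg : ContDiffOn ℝ (⊤ : ℕ∞) g (Ioi 0))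
    (hODE : ∀ r ∈ Ioi (0 : ℝ),
      deriv (deriv g) r + ((n : ℝ) - 1) / r * deriv g r
        + (μ - ((n : ℝ) - 1) / r ^ 2) * g r = 0)
    (u : Fin n → EuclideanSpace ℝ (Fin n) → ℝ)
    (hu : ∀ i x, u i x = g ‖x‖ * (x i / ‖x‖))
    (L : (ℝ → ℝ) → (ℝ → ℝ))
    (hL : ∀ h r, L h r = deriv (deriv h) r + ((n : ℝ) - 1) / r * deriv h r
        - ((n : ℝ) - 1) / r ^ 2 * h r) :
    ∀ x : EuclideanSpace ℝ (Fin n), x ≠ 0 →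
      (∑ i : Fin n, (u i x) ^ 2 = (g ‖x‖) ^ 2) ∧
      (∑ i : Fin n, ((lap (n := n))^[m] (u i) x) ^ 2 = (L^[m] g ‖x‖) ^ 2) ∧
      (∑ i : Fin n, ((lap (n := n))^[m] (u i) x) ^ 2 = μ ^ (2 * m) * (g ‖x‖) ^ 2) := by
  obtain ⟨rfl, rfl⟩ : L = radialOp n ∧ u = fun i => trialFunction (EuclideanSpace.proj i) g :=
    ⟨funext₂ hL, funext₂ hu⟩
  exact fun x hx =>
    (trial_function_identities_general (hg.of_le (WithTop.coe_le_coe.mpr le_top)) hx).imp_right <|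
      .imp_right fun heigen => heigen μ fun r hr => by rw [radialOp]; linear_combination hODE r hr
end
end
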